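/- arXiv:math/0305164 — 3 statements merged into one kernel-verified Lean document; each statement's English description precedes it below -/
import Mathlib

section
/- If f : I → I is a piecewise monotonic map of a compact interval whose symbolic dynamics Σ(f) has positive topological entropy, then Σ(f) is a subshift of quasi-finite type; indeed h_𝒞(Σ(f)) = 0. -/
open Filter Set MeasureTheory

namespace QFTPaper

variable {A : Type*} {B : Type*}

/-- The left shift on bi-infinite sequences over the alphabet `A`. -/
def shift (x : ℤ → A) : ℤ → A := fun n => x (n + 1)

/-- A subshift: a closed, shift-invariant subset of `A^ℤ`. -/
def IsSubshift [TopologicalSpace A] (X : Set (ℤ → A)) : Prop :=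
  IsClosed X ∧ shift '' X = X

/-- The finite word `w` occurs in `x` at position `k`. -/
def OccursAt (w : List A) (x : ℤ → A) (k : ℤ) : Prop :=
  ∀ i : Fin w.length, x (k + (i : ℕ)) = w.get i

/-- The language of `X`: words of length `n` occurring in elements of `X`
(at position `0`, which is no restriction by shift-invariance). -/
def Lang (X : Set (ℤ → A)) (n : ℕ) : Set (List A) :=
  { w | w.length = n ∧ ∃ x ∈ X, OccursAt w x 0 }

/-- Topological entropy of a subshift. -/
noncomputable def hTop (X : Set (ℤ → A)) : ℝ :=
  limsup (fun n : ℕ => Real.log (Nat.card ↥(Lang X n)) / (n : ℝ)) atTop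

/-- Follower set of the finite word `w = A₋ₙ…A₀` (listed from `A₋ₙ` to `A₀`):
the set of one-sided sequences `B₀B₁B₂…` with `B ∈ X` and `B₋ₙ…B₀ = A₋ₙ…A₀`,
realized by requiring `w` to occur in `B` at positions `0,…,n` and reading off
the tail of `B` starting at the position of the last letter of `w`.
For the empty word this gives `X₊` (by shift-invariance). -/
def fol (X : Set (ℤ → A)) (w : List A) : Set (ℕ → A) :=
  { y | ∃ B ∈ X, (∀ i : Fin w.length, B ((i : ℕ) : ℤ) = w.get i) ∧
        ∀ k : ℕ, y k = B ((w.length : ℤ) - 1 + (k : ℤ)) }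

/-- `w = A₋ₙ…A₀` is a left constraint:
`∅ ≠ fol(A₋ₙ…A₀) ⊊ fol(A₋ₙ₊₁…A₀)`. -/
def IsLeftConstraint (X : Set (ℤ → A)) (w : List A) : Prop :=
  w ≠ [] ∧ fol X w ≠ ∅ ∧ fol X w ⊂ fol X w.tail

/-- `𝒞(X, n)`: the set of left constraints of length `n`. -/
def LC (X : Set (ℤ → A)) (n : ℕ) : Set (List A) :=
  { w | w.length = n ∧ IsLeftConstraint X w }

/-- The left constraint entropy `h_𝒞(X) = limsup (1/n) log⁺ #𝒞(X,n)`. -/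
noncomputable def hC (X : Set (ℤ → A)) : ℝ :=
  limsup (fun n : ℕ => max 0 (Real.log (Nat.card ↥(LC X n))) / (n : ℝ)) atTop

/-- The time-reversed subshift `X̄`. -/
def rev (X : Set (ℤ → A)) : Set (ℤ → A) :=
  (fun x : ℤ → A => fun n : ℤ => x (-n)) '' X

/-- The symmetric constraint entropy `h_𝒮𝒞(X) = min (h_𝒞(X), h_𝒞(X̄))`. -/
noncomputable def hSC (X : Set (ℤ → A)) : ℝ := min (hC X) (hC (rev X))

/-- Subshift of quasi-finite type: `h_𝒮𝒞(X) < h_top(X)`. -/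
def IsQFT [TopologicalSpace A] (X : Set (ℤ → A)) : Prop :=
  IsSubshift X ∧ hSC X < hTop X

/-- The word `B₋ₘ…B₀` read off from a one-sided past `b` (where `b j = B₋ⱼ`). -/
def wordOf (b : ℕ → A) (m : ℕ) : List A :=
  (List.range (m + 1)).map fun j => b (m - j)

/-- An extendable left constraint: a left constraint `A₋ₙ…A₀` which admits a
one-sided past `B` extending it such that `B₋ₘ…B₀` is again a left constraint
for infinitely many `m`. -/
def IsExtendable (X : Set (ℤ → A)) (w : List A) : Prop :=
  IsLeftConstraint X w ∧
  ∃ b : ℕ → A, wordOf b (w.length - 1) = w ∧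
    ∀ N : ℕ, ∃ m, N ≤ m ∧ IsLeftConstraint X (wordOf b m)

/-- `𝒞*(X, n)`: the set of extendable left constraints of length `n`. -/
def ELC (X : Set (ℤ → A)) (n : ℕ) : Set (List A) :=
  { w | w.length = n ∧ IsExtendable X w }

/-- The extendable left constraint entropy `h*_𝒞(X)`. -/
noncomputable def hCstar (X : Set (ℤ → A)) : ℝ :=
  limsup (fun n : ℕ => Real.log (Nat.card ↥(ELC X n)) / (n : ℝ)) atTop

/-- `h*_𝒮𝒞(X) = min (h*_𝒞(X), h*_𝒞(X̄))`. -/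
noncomputable def hSCstar (X : Set (ℤ → A)) : ℝ := min (hCstar X) (hCstar (rev X))

/-- Subshift of weak quasi-finite type: `h*_𝒮𝒞(X) < h_top(X)`. -/
def IsWeakQFT [TopologicalSpace A] (X : Set (ℤ → A)) : Prop :=
  IsSubshift X ∧ hSCstar X < hTop X

/-- Subshift of finite type: defined by excluding a finite set of finite words. -/
def IsSFT (X : Set (ℤ → A)) : Prop :=
  ∃ F : Finset (List A), X = { x | ∀ w ∈ F, ∀ k : ℤ, ¬ OccursAt w x k }

/-- Sofic subshift: the image of an SFT under a continuous shift-commuting map. -/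
def IsSofic [TopologicalSpace A] (X : Set (ℤ → A)) : Prop :=
  ∃ (B : Type) (_ : Fintype B) (Y : Set (ℤ → B)) (π : (ℤ → B) → (ℤ → A)),
    IsSFT Y ∧
    (letI : TopologicalSpace B := ⊥
     Continuous π) ∧
    (∀ x : ℤ → B, π (shift x) = shift (π x)) ∧ π '' Y = X


/-- Topological conjugacy of subshifts: a homeomorphism commuting with the shifts. -/
def Conjugate [TopologicalSpace A] [TopologicalSpace B]
    (X : Set (ℤ → A)) (Y : Set (ℤ → B)) : Prop :=
  ∃ φ : X ≃ₜ Y, ∀ x x' : X, (x' : ℤ → A) = shift (x : ℤ → A) →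
    (φ x' : ℤ → B) = shift (φ x : ℤ → B)

/-- The cylinder of a word of length `n` placed at positions `0,…,n-1`. -/
def cylSet (n : ℕ) (w : Fin n → A) : Set (ℤ → A) :=
  { x | ∀ i : Fin n, x ((i : ℕ) : ℤ) = w i }

/-- Entropy of the partition of `A^ℤ` into cylinders of length `n`. -/
noncomputable def blockEntropy [Fintype A] [MeasurableSpace A]
    (μ : Measure (ℤ → A)) (n : ℕ) : ℝ :=
  ∑ w : Fin n → A, Real.negMulLog ((μ (cylSet n w)).toReal)

/-- Kolmogorov–Sinai entropy of a shift-invariant measure on `A^ℤ`,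
computed with the natural (generating) partition into cylinders. -/
noncomputable def KSEntropy [Fintype A] [MeasurableSpace A]
    (μ : Measure (ℤ → A)) : ℝ :=
  ⨅ n : ℕ, blockEntropy μ (n + 1) / (n + 1)

/-- A maximum measure: an ergodic shift-invariant Borel probability measure
carried by `X` whose Kolmogorov–Sinai entropy equals the topological entropy of `X`. -/
def IsMaxMeasure [Fintype A] [MeasurableSpace A]
    (X : Set (ℤ → A)) (μ : Measure (ℤ → A)) : Prop :=
  IsProbabilityMeasure μ ∧ μ Xᶜ = 0 ∧ Ergodic shift μ ∧ KSEntropy μ = hTop X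

/-- The number of points of `X` fixed by the `n`-th power of the shift. -/
noncomputable def perCount (X : Set (ℤ → A)) (n : ℕ) : ℕ :=
  Nat.card {x : ℤ → A | x ∈ X ∧ shift^[n] x = x}

/-- `f` is piecewise monotonic on the interval `I`: `I` is partitioned into
finitely many subintervals on each of which `f` is continuous and strictly
monotonic. -/
def IsPiecewiseMonotonic (f : ℝ → ℝ) (I : Set ℝ) : Prop :=
  ∃ Q : Finset (Set ℝ),
    (∀ J ∈ Q, J.OrdConnected ∧ ContinuousOn f J ∧
      (StrictMonoOn f J ∨ StrictAntiOn f J)) ∧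
    (Q : Set (Set ℝ)).PairwiseDisjoint id ∧ ⋃₀ (Q : Set (Set ℝ)) = I

/-- `J` is an open interval contained in `I` on which `f` is continuous and
strictly monotonic. -/
def GoodPiece (f : ℝ → ℝ) (I J : Set ℝ) : Prop :=
  (∃ c d : ℝ, J = Set.Ioo c d) ∧ J ⊆ I ∧ ContinuousOn f J ∧
    (StrictMonoOn f J ∨ StrictAntiOn f J)

/-- `P` is the natural partition of the piecewise monotonic map `f` on `I`:
the collection of all maximal open intervals on which `f` is continuous and
strictly monotonic. -/
def IsNaturalPartition (f : ℝ → ℝ) (I : Set ℝ) (P : Finset (Set ℝ)) : Prop :=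
  ∀ J : Set ℝ, J ∈ P ↔
    (J.Nonempty ∧ GoodPiece f I J ∧ ∀ J', GoodPiece f I J' → J ⊆ J' → J' = J)

/-- The symbolic dynamics of `f` with respect to the partition `P`: bi-infinite
`P`-itineraries all of whose geometric cylinders
`⟨Aₙ…Aₙ₊ₖ⟩ = Aₙ ∩ f⁻¹Aₙ₊₁ ∩ … ∩ f⁻ᵏAₙ₊ₖ` are nonempty. -/
def symbolic (f : ℝ → ℝ) (P : Finset (Set ℝ)) : Set (ℤ → {J // J ∈ P}) :=
  { a | ∀ n : ℤ, ∀ k : ℕ,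
      (⋂ j : Fin (k + 1), f^[(j : ℕ)] ⁻¹' ((a (n + (j : ℕ)) : Set ℝ))).Nonempty }

/-!
Order the one-sided sequences by the Milnor–Thurston order. The one-sided itineraries then form a
set `Ω` on which the shift behaves like a monotonic interval map on each one-letter cylinder, and
the left-infinitely extendable sequences form the core `⋂ m, drop m '' Ω`. Up to boundedly many
words per length, a left constraint is a *gap word*: a prefix common to a sequence of the core and
to a sequence of `Ω` outside the core.

For each `m`, call two points of the core linked at level `m` if no point of `Ω \ drop m '' Ω` lies
between them. There are finitely many classes, and, cylinders being intervals, each class meets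
at most two cylinders of a given length that also contain a point of `Ω \ drop m '' Ω`. Cutting the
level-`m` classes along the first letter adds at most `#A` pieces, and the shift maps these pieces
onto the classes of level `m + 1`, which are at least as numerous as those of level `m`. So at most
`2 * #A` pieces are merged with another one, and this bound does not depend on `m`. A gap word
`v` with two gap words `a :: v` and `b :: v` must come from such a merging, unless it is one of a
number of exceptions bounded in terms of `m` alone. Choosing `m` so large that it decides
which words of length `N + 1` are gap words, we get for the number `g n` of gap words of length `n`
that, for every `N`,
  `g (k + N + 1) ≤ g (k + N) + 4 * #A * g k + D N`.
As the factor `4 * #A` is the same for all `N`, the exponential growth rate of `g` is zero.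
-/

/-! ### Setoids with order-connected classes -/

theorem ncard_nontrivial_fiber_le {X Y : Type*} [Finite X] {φ : X → Y}
    (hφ : Function.Surjective φ) {p : ℕ} (hp : Nat.card X ≤ Nat.card Y + p) :
    {x | ∃ x', x' ≠ x ∧ φ x' = φ x}.ncard ≤ 2 * p := by
  set g := Function.surjInv hφ
  have hg : Function.RightInverse g φ := Function.rightInverse_surjInv hφ
  have hR : (range g)ᶜ.ncard ≤ p := by
    have h := ncard_add_ncard_compl (range g)
    rw [← Nat.card_coe_set_eq, Nat.card_range_of_injective hg.injective] at h
    omega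
  have hsub : {x | ∃ x', x' ≠ x ∧ φ x' = φ x} ⊆ (range g)ᶜ ∪ (g ∘ φ) '' (range g)ᶜ := by
    rintro x ⟨x', hne, hx'⟩
    by_cases hx : x ∈ range g
    · obtain ⟨y, rfl⟩ := hx
      rw [hg y] at hx'
      refine Or.inr ⟨x', ?_, congrArg g hx'⟩
      rintro ⟨y', rfl⟩
      exact hne (congrArg g ((hg y').symm.trans hx'))
    · exact Or.inl hx
  calc _ ≤ ((range g)ᶜ ∪ (g ∘ φ) '' (range g)ᶜ).ncard := ncard_le_ncard hsub
    _ ≤ (range g)ᶜ.ncard + ((g ∘ φ) '' (range g)ᶜ).ncard := ncard_union_le _ _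
    _ ≤ p + p := add_le_add hR ((ncard_image_le).trans hR)
    _ = 2 * p := (two_mul p).symm

theorem finite_quotient_inf {X : Type*} (r s : Setoid X) [Finite (Quotient r)]
    [Finite (Quotient s)] : Finite (Quotient (r ⊓ s)) := by
  refine Finite.of_injective (β := Quotient r × Quotient s)
    (Quotient.lift (fun x => (Quotient.mk r x, Quotient.mk s x)) fun x y h =>
      Prod.ext (Quotient.sound h.1) (Quotient.sound h.2)) ?_
  rintro ⟨x⟩ ⟨y⟩ h
  exact Quotient.sound ⟨Quotient.exact (congrArg Prod.fst h), Quotient.exact (congrArg Prod.snd h)⟩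

theorem finite_quotient_ker {X Y : Type*} [Finite Y] (g : X → Y) :
    Finite (Quotient (Setoid.ker g)) :=
  Finite.of_equiv _ (Setoid.quotientKerEquivRange g).symm

theorem card_quotient_ker_le {X Y : Type*} [Finite Y] (g : X → Y) :
    Nat.card (Quotient (Setoid.ker g)) ≤ Nat.card Y :=
  (Nat.card_congr (Setoid.quotientKerEquivRange g)).trans_le (Finite.card_subtype_le _)

section OrderConnectedClasses

variable {X : Type*} [LinearOrder X]

theorem exists_monotone_ker_eq (r : Setoid X) [Finite (Quotient r)]
    (hr : ∀ x, {y | r y x}.OrdConnected) :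
    ∃ ρ : X → ℕ, Monotone ρ ∧ Setoid.ker ρ = r ∧
      ∀ x, ρ x ∈ Finset.Icc 1 (Nat.card (Quotient r)) := by
  let below (x : X) : Set (Quotient r) := Quotient.mk r '' Iic x
  have hmono : Monotone below := fun x y hxy => image_mono (Iic_subset_Iic.2 hxy)
  have hmem : ∀ x, Quotient.mk r x ∈ below x := fun x => mem_image_of_mem _ le_rfl
  have hle : ∀ {x y}, r x y → below x ⊆ below y := by
    rintro x y hxy _ ⟨z, hz, rfl⟩
    rcases le_total z y with h | h
    · exact mem_image_of_mem _ h
    · rw [Quotient.sound (s := r) ((hr y).out (r.refl y) hxy ⟨h, hz⟩)]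
      exact hmem y
  have hlt : ∀ {x y}, x ≤ y → below y ⊆ below x → r x y := by
    intro x y hxy h
    obtain ⟨z, hz, hzy⟩ := h (hmem y)
    exact (hr y).out (Quotient.exact hzy) (r.refl y) ⟨hz, hxy⟩
  refine ⟨fun x => (below x).ncard, fun x y hxy => ncard_le_ncard (hmono hxy), ?_, fun x => ?_⟩
  · ext x y
    refine ⟨fun h => ?_, fun h => congrArg ncard ((hle h).antisymm (hle (r.symm h)))⟩
    rcases le_total x y with hxy | hxy
    · exact hlt hxy (eq_of_subset_of_ncard_le (hmono hxy) h.ge).ge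
    · exact r.symm (hlt hxy (eq_of_subset_of_ncard_le (hmono hxy) h.le).ge)
  · exact Finset.mem_Icc.2 ⟨(ncard_pos).2 ⟨_, hmem x⟩, ncard_le_card _⟩

theorem card_quotient_inf_le (r s : Setoid X) [Finite (Quotient r)] [Finite (Quotient s)]
    (hr : ∀ x, {y | r y x}.OrdConnected) (hs : ∀ x, {y | s y x}.OrdConnected) :
    Nat.card (Quotient (r ⊓ s)) ≤ Nat.card (Quotient r) + Nat.card (Quotient s) := by
  obtain ⟨ρ, hρ, rfl, hρr⟩ := exists_monotone_ker_eq r hr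
  obtain ⟨τ, hτ, rfl, hτs⟩ := exists_monotone_ker_eq s hs
  have hker : Setoid.ker ρ ⊓ Setoid.ker τ = Setoid.ker (ρ + τ) := by
    ext x y
    simp only [Setoid.inf_def, Setoid.ker_def, Pi.inf_apply, Pi.add_apply, inf_Prop_eq]
    rcases le_total x y with h | h <;> have := hρ h <;> have := hτ h <;> omega
  set p := Nat.card (Quotient (Setoid.ker ρ))
  set q := Nat.card (Quotient (Setoid.ker τ))
  have hrange : range (ρ + τ) ⊆ Finset.Icc 1 (p + q) := by
    rintro _ ⟨x, rfl⟩
    have h := Finset.mem_Icc.1 (hρr x)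
    have h' := Finset.mem_Icc.1 (hτs x)
    simp only [Pi.add_apply, Finset.coe_Icc, mem_Icc]
    omega
  calc Nat.card (Quotient (Setoid.ker ρ ⊓ Setoid.ker τ))
      = (range (ρ + τ)).ncard := by
        rw [hker, Nat.card_congr (Setoid.quotientKerEquivRange _), Nat.card_coe_set_eq]
    _ ≤ (Finset.Icc 1 (p + q) : Set ℕ).ncard := ncard_le_ncard hrange (Finset.finite_toSet _)
    _ = p + q := by rw [ncard_coe_finset, Nat.card_Icc, Nat.add_sub_cancel]

theorem subsingleton_image_inter_image {W : Type*} {g : X → W}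
    (hg : ∀ w, (g ⁻¹' {w}).OrdConnected) {K V : Set X} (h : ∀ x ∈ K, ∀ z ∈ V, x ≤ z) :
    (g '' K ∩ g '' V).Subsingleton := by
  rintro w ⟨⟨x, hx, hxw⟩, z, hz, hzw⟩ w' ⟨⟨x', hx', hxw'⟩, z', hz', hzw'⟩
  rcases le_total x x' with hxx | hxx
  · exact hzw ▸ hxw' ▸ ((hg (g z)).out (hxw.trans hzw.symm) rfl ⟨hxx, h x' hx' z hz⟩).symm
  · exact hxw ▸ hzw' ▸ (hg (g z')).out (hxw'.trans hzw'.symm) rfl ⟨hxx, h x hx z' hz'⟩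

theorem ncard_image_inter_image_le_two {W : Type*} {g : X → W}
    (hg : ∀ w, (g ⁻¹' {w}).OrdConnected) {K V : Set X}
    (h : ∀ x ∈ K, ∀ y ∈ K, ∀ z ∈ V, z ∉ uIcc x y) : (g '' K ∩ g '' V).ncard ≤ 2 := by
  let above := {z | ∀ x ∈ K, x ≤ z}
  let below := {z | ∀ x ∈ K, z ≤ x}
  have hV : V ⊆ above ∪ below := by
    intro z hz
    by_contra hcon
    simp only [above, below, mem_union, mem_ofPred_eq, not_or, not_forall, not_le] at hcon
    obtain ⟨⟨y, hy, hzy⟩, x, hx, hxz⟩ := hcon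
    exact h x hx y hy z hz (Icc_subset_uIcc ⟨hxz.le, hzy.le⟩)
  have habove : (g '' K ∩ g '' above).Subsingleton :=
    subsingleton_image_inter_image hg fun x hx z hz => hz x hx
  have hbelow : (g '' K ∩ g '' below).Subsingleton :=
    subsingleton_image_inter_image (X := Xᵒᵈ) (fun w => (hg w).dual) fun x hx z hz => hz x hx
  have hsub : g '' K ∩ g '' V ⊆ (g '' K ∩ g '' above) ∪ (g '' K ∩ g '' below) := by
    rw [← inter_union_distrib_left, ← image_union]
    exact inter_subset_inter_right _ (image_mono hV)
  calc _ ≤ _ := ncard_le_ncard hsub (habove.finite.union hbelow.finite)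
    _ ≤ _ := ncard_union_le _ _
    _ ≤ 1 + 1 := add_le_add ((ncard_le_one habove.finite).2 habove)
      ((ncard_le_one hbelow.finite).2 hbelow)

end OrderConnectedClasses

/-! ### Counting words -/

section WordCount

/-- The finite prefixes of the sequences in `S`. -/
def prefixes (S : Set (Stream' A)) : Set (List A) :=
  {w | ∃ x ∈ S, x.take w.length = w}

/-- The number of words of length `n` in `G` (`0` if there are infinitely many). -/
noncomputable def wordCount (G : Set (List A)) (n : ℕ) : ℕ :=
  (G ∩ {w | w.length = n}).ncard

theorem prefixes_mono {S T : Set (Stream' A)} (h : S ⊆ T) : prefixes S ⊆ prefixes T :=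
  fun _ ⟨x, hx, hxw⟩ => ⟨x, h hx, hxw⟩

theorem take_mem_prefixes {S : Set (Stream' A)} {x : Stream' A} (hx : x ∈ S) (n : ℕ) :
    x.take n ∈ prefixes S :=
  ⟨x, hx, by rw [Stream'.length_take]⟩

theorem list_take_mem_prefixes {S : Set (Stream' A)} {w : List A} (hw : w ∈ prefixes S) (n : ℕ) :
    w.take n ∈ prefixes S := by
  obtain ⟨x, hx, hxw⟩ := hw
  rw [← hxw, Stream'.take_take]
  exact take_mem_prefixes hx _

theorem prefixes_inter_length (S : Set (Stream' A)) (n : ℕ) :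
    prefixes S ∩ {w | w.length = n} = Stream'.take n '' S := by
  ext w
  constructor
  · rintro ⟨⟨x, hx, hxw⟩, rfl⟩
    exact ⟨x, hx, hxw⟩
  · rintro ⟨x, hx, rfl⟩
    exact ⟨take_mem_prefixes hx n, Stream'.length_take n x⟩

theorem wordCount_union_le (G H : Set (List A)) (n : ℕ) :
    wordCount (G ∪ H) n ≤ wordCount G n + wordCount H n := by
  rw [wordCount, union_inter_distrib_right]
  exact ncard_union_le _ _

theorem wordCount_biUnion_le {ι : Type*} (s : Finset ι) (G : ι → Set (List A)) (n : ℕ) :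
    wordCount (⋃ i ∈ s, G i) n ≤ ∑ i ∈ s, wordCount (G i) n := by
  rw [wordCount, iUnion₂_inter]
  exact s.set_ncard_biUnion_le _

theorem drop_mem_of_tail_mem {G X : Set (List A)} (htail : ∀ w ∈ G, w ∉ X → w.tail ∈ G)
    {w : List A} (hw : w ∈ G) (n : ℕ) (hX : ∀ i < n, w.drop i ∉ X) : w.drop n ∈ G := by
  induction n with
  | zero => exact hw
  | succ n ih =>
    rw [← List.tail_drop]
    exact htail _ (ih fun i hi => hX i (hi.trans n.lt_succ_self)) (hX n n.lt_succ_self)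

variable [Finite A]

theorem finite_words (G : Set (List A)) (n : ℕ) : (G ∩ {w | w.length = n}).Finite :=
  (List.finite_length_eq A n).inter_of_right G

theorem wordCount_mono {G H : Set (List A)} {n : ℕ} (h : ∀ w ∈ G, w.length = n → w ∈ H) :
    wordCount G n ≤ wordCount H n :=
  ncard_le_ncard (fun w hw => ⟨h w hw.1 hw.2, hw.2⟩) (finite_words H n)

theorem wordCount_le_mul {G U H : Set (List A)} {i k : ℕ} (hU : ∀ w ∈ G, w.take i ∈ U)
    (hH : ∀ w ∈ G, w.drop i ∈ H) : wordCount G (i + k) ≤ wordCount U i * wordCount H k := by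
  rw [wordCount, wordCount, wordCount, ← ncard_prod]
  refine ncard_le_ncard_of_injOn (fun w => (w.take i, w.drop i)) ?_ ?_
    ((finite_words U i).prod (finite_words H k))
  · rintro w ⟨hw, hlen⟩
    have hlen : w.length = i + k := hlen
    exact ⟨⟨hU w hw, by simp [hlen]⟩, hH w hw, by simp [hlen]⟩
  · intro w _ w' _ h
    obtain ⟨h₁, h₂⟩ := Prod.mk.inj h
    rw [← List.take_append_drop i w, h₁, h₂, List.take_append_drop]

theorem wordCount_succ_le {G H : Set (List A)} {n : ℕ} (htail : ∀ w ∈ G, w.tail ∈ H)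
    (hinj : ∀ a b v, a :: v ∈ G → b :: v ∈ G → v.length = n → a = b) :
    wordCount G (n + 1) ≤ wordCount H n := by
  refine ncard_le_ncard_of_injOn List.tail ?_ ?_ (finite_words H n)
  · rintro w ⟨hw, hlen⟩
    have hlen : w.length = n + 1 := hlen
    exact ⟨htail w hw, by simp [hlen]⟩
  · rintro (_ | ⟨a, v⟩) ⟨hw, hlen⟩ (_ | ⟨b, v'⟩) ⟨hw', hlen'⟩ h
    · rfl
    · cases hlen
    · cases hlen'
    · obtain rfl : v = v' := h
      rw [hinj a b v hw hw' (Nat.succ.inj hlen)]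

theorem wordCount_exists_drop_le {X : Set (List A)} {d m n : ℕ} (hX : ∀ n, wordCount X n ≤ d)
    (hmn : m ≤ n + 1) : wordCount {w | ∃ i < m, w.drop i ∈ X} n ≤
      (∑ i ∈ Finset.range m, wordCount (univ : Set (List A)) i) * d := by
  have hunion : {w : List A | ∃ i < m, w.drop i ∈ X} =
      ⋃ i ∈ Finset.range m, {w | w.drop i ∈ X} := by
    ext w; simp
  rw [hunion, Finset.sum_mul]
  refine (wordCount_biUnion_le _ _ n).trans (Finset.sum_le_sum fun i hi => ?_)
  obtain ⟨k, rfl⟩ := Nat.exists_eq_add_of_le (show i ≤ n by have := Finset.mem_range.1 hi; omega)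
  exact (wordCount_le_mul (fun _ _ => mem_univ _) fun _ h => h).trans
    (Nat.mul_le_mul_left _ (hX k))

/-- The three terms count the words determined by their tail, the words with a prefix in `U`, and
the words with an exceptional suffix near their beginning. -/
theorem wordCount_le_of_branching {G U X : Set (List A)} {c d N : ℕ}
    (hX : ∀ n, wordCount X n ≤ d) (hU : wordCount U (N + 1) ≤ c)
    (htail : ∀ w ∈ G, w ∉ X → w.tail ∈ G)
    (hbranch : ∀ a b v, a :: v ∈ G → b :: v ∈ G → v ∉ X → a ≠ b → N ≤ v.length →
      (a :: v).take (N + 1) ∈ U) (k : ℕ) :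
    wordCount G (k + N + 1) ≤ wordCount G (k + N) + c * wordCount G k +
      (∑ i ∈ Finset.range (N + 2), wordCount (univ : Set (List A)) i) * d := by
  let E : Set (List A) := {w | ∃ i < N + 2, w.drop i ∈ X}
  let V : Set (List A) := {w | w.take (N + 1) ∈ U}
  have hE : wordCount E (k + N + 1) ≤ _ := wordCount_exists_drop_le hX (by omega)
  have hdrop : ∀ w ∈ G \ E, ∀ n ≤ N + 1, w.drop n ∈ G := fun w hw n hn =>
    drop_mem_of_tail_mem htail hw.1 n fun i hi h => hw.2 ⟨i, by omega, h⟩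
  have hV : wordCount ((G \ E) ∩ V) (N + 1 + k) ≤ wordCount U (N + 1) * wordCount G k :=
    wordCount_le_mul (fun w hw => hw.2) fun w hw => hdrop w hw.1 _ le_rfl
  have hVc : wordCount ((G \ E) \ V) (k + N + 1) ≤ wordCount G (k + N) := by
    refine wordCount_succ_le (fun w hw => List.drop_one ▸ hdrop w hw.1 1 (by omega)) ?_
    intro a b v ha hb hlen
    by_contra hab
    exact ha.2 (hbranch a b v ha.1.1 hb.1.1 (fun h => ha.1.2 ⟨1, by omega, h⟩) hab (by omega))
  have hsplit : wordCount G (k + N + 1) ≤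
      wordCount ((G \ E) \ V ∪ (G \ E) ∩ V ∪ E) (k + N + 1) := wordCount_mono fun w hw _ => by
    simp only [mem_union, mem_inter_iff, Set.mem_sdiff]
    tauto
  have h₁ := wordCount_union_le ((G \ E) \ V ∪ (G \ E) ∩ V) E (k + N + 1)
  have h₂ := wordCount_union_le ((G \ E) \ V) ((G \ E) ∩ V) (k + N + 1)
  have h₃ := Nat.mul_le_mul_right (wordCount G k) hU
  rw [show N + 1 + k = k + N + 1 by omega] at hV
  omega

end WordCount

section Growth

open Asymptotics

theorem exists_le_exp_mul (c : ℝ) {ε : ℝ} (hε : 0 < ε) :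
    ∃ N : ℕ, c ≤ Real.exp (ε * N) * (Real.exp ε - 1) := by
  have hlim : Tendsto (fun N : ℕ => Real.exp (ε * N)) atTop atTop :=
    Real.tendsto_exp_atTop.comp (tendsto_natCast_atTop_atTop.const_mul_atTop hε)
  have hpos : 0 < Real.exp ε - 1 := by linarith [Real.add_one_lt_exp hε.ne']
  exact ((hlim.atTop_mul_const hpos).eventually_ge_atTop c).exists

theorem isBigO_exp_of_le_add_mul {a : ℕ → ℕ} {c : ℕ}
    (h : ∀ N, ∃ D, ∀ k, a (k + N + 1) ≤ a (k + N) + c * a k + D) {ε : ℝ} (hε : 0 < ε) :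
    (fun n => (a n : ℝ)) =O[atTop] fun n => Real.exp (ε * n) := by
  obtain ⟨N, hN⟩ := exists_le_exp_mul (c + 1) hε
  obtain ⟨D, hD⟩ := h N
  set C : ℝ := D + ∑ i ∈ Finset.range (N + 1), (a i : ℝ) with hC
  have hsum : 0 ≤ ∑ i ∈ Finset.range (N + 1), (a i : ℝ) := by positivity
  have hDC : (D : ℝ) ≤ C := hC ▸ le_add_of_nonneg_right hsum
  suffices hbound : ∀ n, (a n : ℝ) ≤ C * Real.exp (ε * n) from
    IsBigO.of_bound C (Eventually.of_forall fun n => by simpa using hbound n)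
  intro n
  induction n using Nat.strong_induction_on with
  | h n ih =>
    have one_le (k : ℕ) : 1 ≤ Real.exp (ε * k) := Real.one_le_exp (by positivity)
    rcases lt_or_ge n (N + 1) with hn | hn
    · have hle : (a n : ℝ) ≤ ∑ i ∈ Finset.range (N + 1), (a i : ℝ) :=
        Finset.single_le_sum (f := fun i => (a i : ℝ)) (fun i _ => Nat.cast_nonneg _)
          (Finset.mem_range.2 hn)
      have hCn : C ≤ C * Real.exp (ε * n) := le_mul_of_one_le_right (by positivity) (one_le n)
      linarith [(Nat.cast_nonneg D : (0 : ℝ) ≤ D)]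
    · obtain ⟨k, rfl⟩ : ∃ k, n = k + N + 1 := ⟨n - (N + 1), by omega⟩
      have hexp : Real.exp (ε * (k + N : ℕ)) = Real.exp (ε * k) * Real.exp (ε * N) := by
        rw [← Real.exp_add]; push_cast; ring_nf
      have : 0 ≤ C * Real.exp (ε * k) := by positivity
      calc (a (k + N + 1) : ℝ) ≤ a (k + N) + c * a k + D := by exact_mod_cast hD k
        _ ≤ C * Real.exp (ε * (k + N : ℕ)) + c * (C * Real.exp (ε * k)) +
            C * Real.exp (ε * k) := by
          gcongr
          · exact ih _ (by omega)
          · exact ih _ (by omega)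
          · exact hDC.trans (le_mul_of_one_le_right (by positivity) (one_le k))
        _ = C * Real.exp (ε * k) * (Real.exp (ε * N) + (c + 1)) := by rw [hexp]; ring
        _ ≤ C * Real.exp (ε * k) *
            (Real.exp (ε * N) + Real.exp (ε * N) * (Real.exp ε - 1)) := by gcongr
        _ = C * Real.exp (ε * (k + N + 1 : ℕ)) := by
          rw [Nat.cast_succ, mul_add_one, Real.exp_add, hexp]; ring

theorem tendsto_posLog_div_of_isBigO_exp {l : ℕ → ℝ}
    (h : ∀ ε : ℝ, 0 < ε → l =O[atTop] fun n => Real.exp (ε * n)) :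
    Tendsto (fun n : ℕ => Real.posLog (l n) / n) atTop (nhds 0) := by
  refine tendsto_order.2 ⟨fun b hb => Eventually.of_forall fun n => hb.trans_le
    (div_nonneg Real.posLog_nonneg n.cast_nonneg), fun ε hε => ?_⟩
  obtain ⟨C, hC⟩ := (h (ε / 2) (half_pos hε)).bound
  have hlim : Tendsto (fun n : ℕ => ε / 2 * (n : ℝ)) atTop atTop :=
    tendsto_natCast_atTop_atTop.const_mul_atTop (half_pos hε)
  filter_upwards [hC, hlim.eventually_gt_atTop (Real.posLog C), eventually_gt_atTop 0]
    with n hn hCn hn0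
  rw [div_lt_iff₀ (Nat.cast_pos.2 hn0)]
  calc Real.posLog (l n) = Real.posLog ‖l n‖ := (Real.posLog_abs _).symm
    _ ≤ Real.posLog (C * Real.exp (ε / 2 * n)) := by
      rw [Real.norm_eq_abs (Real.exp _), Real.abs_exp] at hn
      exact Real.posLog_le_posLog (norm_nonneg _) hn
    _ ≤ Real.posLog C + Real.posLog (Real.exp (ε / 2 * n)) := Real.posLog_mul
    _ = Real.posLog C + ε / 2 * n := by
      have hexp : 0 ≤ ε / 2 * n := by positivity
      rw [Real.posLog_apply (x := Real.exp _), Real.log_exp, max_eq_right hexp]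
    _ < ε * n := by linarith

end Growth

/-! ### The natural extension of a one-sided shift -/

section Core

variable {Ω : Set (Stream' A)}

/-- The largest subset of a forward invariant set `Ω` that the one-sided shift maps onto itself
(for a finite alphabet): the sequences with arbitrarily long left extensions in `Ω`. -/
def core (Ω : Set (Stream' A)) : Set (Stream' A) := ⋂ m, Stream'.drop m '' Ω

theorem antitone_image_drop (hΩ : MapsTo Stream'.tail Ω Ω) :
    Antitone fun m => Stream'.drop m '' Ω := by
  refine antitone_nat_of_succ_le fun m => ?_
  rintro _ ⟨x, hx, rfl⟩
  exact ⟨x.tail, hΩ hx, (Stream'.drop_succ m x).symm⟩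

theorem core_subset_image_drop (Ω : Set (Stream' A)) (m : ℕ) : core Ω ⊆ Stream'.drop m '' Ω :=
  iInter_subset _ m

theorem core_subset (Ω : Set (Stream' A)) : core Ω ⊆ Ω :=
  (core_subset_image_drop Ω 0).trans (image_id Ω).subset

theorem sdiff_image_drop_subset (Ω : Set (Stream' A)) (m : ℕ) :
    Ω \ Stream'.drop m '' Ω ⊆ Ω \ core Ω :=
  sdiff_subset_sdiff_right (core_subset_image_drop Ω m)

theorem mapsTo_tail_core (hΩ : MapsTo Stream'.tail Ω Ω) :
    MapsTo Stream'.tail (core Ω) (core Ω) := by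
  refine fun x hx => mem_iInter.2 fun m => ?_
  obtain ⟨y, hy, rfl⟩ := mem_iInter.1 hx m
  exact ⟨y.tail, hΩ hy, by rw [Stream'.tail_drop', Stream'.drop_tail']⟩

theorem exists_cons_mem_core [Finite A] (hΩ : MapsTo Stream'.tail Ω Ω) {x : Stream' A}
    (hx : x ∈ core Ω) : ∃ a, Stream'.cons a x ∈ core Ω := by
  by_contra! hcon
  simp only [core, mem_iInter, not_forall] at hcon
  choose m hm using hcon
  obtain ⟨M, hM⟩ := (finite_range m).bddAbove
  obtain ⟨y, hy, rfl⟩ := core_subset_image_drop Ω (M + 1) hx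
  refine hm (y.drop M).head (antitone_image_drop hΩ (hM (mem_range_self _)) ⟨y, hy, ?_⟩)
  rw [← Stream'.tail_drop', Stream'.eta]

/-- The one-sided sequence `B n, B (n + 1), …`. -/
def halfLine (B : ℤ → A) (n : ℤ) : Stream' A := fun k => B (n + k)

/-- The bi-infinite sequences all of whose half-lines lie in `Ω`, i.e. the natural extension of
the one-sided shift `Ω`. -/
def bilateral (Ω : Set (Stream' A)) : Set (ℤ → A) := {B | ∀ n, halfLine B n ∈ Ω}

theorem drop_halfLine (B : ℤ → A) (n : ℤ) (m : ℕ) :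
    (halfLine B n).drop m = halfLine B (n + m) := by
  funext k
  change B (n + (k + m : ℕ)) = B (n + m + k)
  congr 1
  push_cast
  ring

theorem shift_image_bilateral (Ω : Set (Stream' A)) :
    shift '' bilateral Ω = bilateral Ω := by
  have translate (c : ℤ) {B : ℤ → A} (hB : B ∈ bilateral Ω) :
      (fun n => B (n + c)) ∈ bilateral Ω := fun n => by
    convert hB (n + c) using 1
    funext k
    exact congrArg B (by ring)
  refine Subset.antisymm (image_subset_iff.2 fun B hB => translate 1 hB) fun B hB => ?_
  refine ⟨_, translate (-1) hB, ?_⟩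
  funext n
  exact congrArg B (by ring)

theorem drop_mem (hΩ : MapsTo Stream'.tail Ω Ω) {x : Stream' A} (hx : x ∈ Ω) (m : ℕ) :
    x.drop m ∈ Ω := by
  induction m with
  | zero => exact hx
  | succ m ih => exact Stream'.tail_drop' (s := x) ▸ hΩ ih

theorem exists_bilateral_of_tail_eq (hΩ : MapsTo Stream'.tail Ω Ω) {y : ℕ → Stream' A}
    (hy : ∀ p, y p ∈ Ω) (htail : ∀ p, (y (p + 1)).tail = y p) :
    ∃ B ∈ bilateral Ω, halfLine B 0 = y 0 := by
  have hdrop (p d : ℕ) : (y (p + d)).drop d = y p := by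
    induction d with
    | zero => rfl
    | succ d ih => rw [Stream'.drop_succ, ← add_assoc, htail, ih]
  have hget {p q i j : ℕ} (h : i + q = j + p) : y p i = y q j := by
    rcases le_total p q with hpq | hpq <;> obtain ⟨d, rfl⟩ := Nat.exists_eq_add_of_le hpq
    · rw [← hdrop p d, show j = i + d by omega]; rfl
    · rw [← hdrop q d, show i = j + d by omega]; rfl
  refine ⟨fun n => y n.natAbs (n + n.natAbs).toNat, fun n => ?_, ?_⟩
  · convert drop_mem hΩ (hy n.natAbs) (n + n.natAbs).toNat using 1
    exact funext fun k => hget (by omega)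
  · exact funext fun k => hget (by omega)

theorem mem_core_iff_exists_bilateral [Finite A] (hΩ : MapsTo Stream'.tail Ω Ω)
    {x : Stream' A} : x ∈ core Ω ↔ ∃ B ∈ bilateral Ω, halfLine B 0 = x := by
  constructor
  · intro hx
    choose a ha using fun x : core Ω => exists_cons_mem_core hΩ x.2
    let y (p : ℕ) : core Ω := (fun x => ⟨Stream'.cons (a x) x, ha x⟩)^[p] ⟨x, hx⟩
    refine exists_bilateral_of_tail_eq hΩ (y := fun p => (y p).1) (fun p => core_subset Ω (y p).2)
      fun p => ?_
    simp only [y, Function.iterate_succ_apply', Stream'.tail_cons]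
  · rintro ⟨B, hB, rfl⟩
    refine mem_iInter.2 fun m => ⟨_, hB (-m), ?_⟩
    rw [drop_halfLine, neg_add_cancel]

theorem mem_fol_bilateral_iff [Finite A] (hΩ : MapsTo Stream'.tail Ω Ω) {w : List A}
    (hw : w ≠ []) {y : Stream' A} : y ∈ fol (bilateral Ω) w ↔
      ∃ x ∈ core Ω, x.take w.length = w ∧ x.drop (w.length - 1) = y := by
  have htake (B : ℤ → A) : (halfLine B 0).take w.length = w ↔
      ∀ i : Fin w.length, B (i : ℕ) = w.get i := by
    have hB (i : ℕ) : (halfLine B 0).get i = B i := congrArg B (zero_add _)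
    refine ⟨fun h i => ?_, fun h => List.ext_getElem (by simp) fun i hi hi' => ?_⟩
    · have hi : i < ((halfLine B 0).take w.length).length := by simp
      rw [← hB, ← Stream'.take_get _ _ _ hi]
      simp only [h, List.get_eq_getElem]
    · rw [Stream'.take_get, hB]
      exact h ⟨i, hi'⟩
  have hdrop (B : ℤ → A) : (halfLine B 0).drop (w.length - 1) = y ↔
      ∀ k : ℕ, y k = B (w.length - 1 + k) := by
    have := List.length_pos_iff.2 hw
    rw [drop_halfLine, zero_add, Nat.cast_sub this, Nat.cast_one]
    exact ⟨fun h k => (congrFun h k).symm, fun h => funext fun k => (h k).symm⟩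
  simp only [fol, mem_core_iff_exists_bilateral hΩ]
  constructor
  · rintro ⟨B, hB, h₁, h₂⟩
    exact ⟨_, ⟨B, hB, rfl⟩, (htake B).2 h₁, (hdrop B).2 h₂⟩
  · rintro ⟨_, ⟨B, hB, rfl⟩, h₁, h₂⟩
    exact ⟨B, hB, (htake B).1 h₁, (hdrop B).1 h₂⟩

theorem LC_bilateral_subset [Finite A] (hΩ : MapsTo Stream'.tail Ω Ω) {n : ℕ} (hn : 2 ≤ n) :
    LC (bilateral Ω) n ⊆ prefixes (core Ω) ∩ prefixes (Stream'.tail ⁻¹' core Ω \ core Ω) := by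
  rintro w ⟨hlen, -, hne, hss⟩
  obtain ⟨a, b, v, rfl⟩ : ∃ a b v, w = a :: b :: v := by
    match w, hlen with
    | [_], rfl => cases hn with | step h => cases h
    | a :: b :: v, _ => exact ⟨a, b, v, rfl⟩
  obtain ⟨y, hy, hyw⟩ := exists_of_ssubset hss
  obtain ⟨y', hy'⟩ := nonempty_iff_ne_empty.2 hne
  obtain ⟨z, hz, hzw, -⟩ := (mem_fol_bilateral_iff hΩ (List.cons_ne_nil _ _)).1 hy'
  obtain ⟨x, hx, hxw, hxy⟩ := (mem_fol_bilateral_iff hΩ (List.cons_ne_nil _ _)).1 hy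
  have htake : (Stream'.cons a x).take (b :: v).length.succ = a :: b :: v := by
    rw [Stream'.take_succ_cons, hxw]
  refine ⟨⟨z, hz, hzw⟩, Stream'.cons a x, ⟨hx, fun hax => hyw ?_⟩, htake⟩
  exact (mem_fol_bilateral_iff hΩ (List.cons_ne_nil _ _)).2 ⟨_, hax, htake, hxy⟩

end Core

/-! ### Piecewise monotone one-sided shifts -/

section OrderedShift

variable [LinearOrder (Stream' A)]

/-- A one-sided shift `Ω` that is piecewise monotone for the given order on sequences: the
one-letter cylinders are intervals, prepending a letter is strictly monotonic, and the shift maps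
the trace on `Ω` of a one-letter cylinder onto an interval of `Ω`. -/
structure IsOrderedShift (Ω : Set (Stream' A)) : Prop where
  ordConnected_head (a : A) : {x : Stream' A | x.head = a}.OrdConnected
  strictMono_or_strictAnti_cons (a : A) :
    StrictMono (Stream'.cons a) ∨ StrictAnti (Stream'.cons a)
  mapsTo_tail : MapsTo Stream'.tail Ω Ω
  cons_mem {a : A} {x y z : Stream' A} : Stream'.cons a x ∈ Ω → Stream'.cons a y ∈ Ω → z ∈ Ω →
    z ∈ uIcc x y → Stream'.cons a z ∈ Ω

/-- Two points of `core Ω` are linked at level `m` if they lie in the same component of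
`drop m '' Ω` relative to `Ω`. -/
def link (Ω : Set (Stream' A)) (m : ℕ) : Setoid (core Ω) where
  r x y := Ω ∩ uIcc (x : Stream' A) y ⊆ Stream'.drop m '' Ω
  iseqv :=
    { refl := fun x z hz => by
        obtain rfl : z = x := by simpa using hz.2
        exact core_subset_image_drop Ω m x.2
      symm := fun h => uIcc_comm (α := Stream' A) _ _ ▸ h
      trans := fun h h' _ hz => (uIcc_subset_uIcc_union_uIcc hz.2).elim
        (fun hz' => h ⟨hz.1, hz'⟩) (fun hz' => h' ⟨hz.1, hz'⟩) }

/-- The refinement of `link Ω m` that also separates points with different first letters. -/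
def letterLink (Ω : Set (Stream' A)) (m : ℕ) : Setoid (core Ω) :=
  link Ω m ⊓ Setoid.ker fun x => x.1.head

variable {Ω : Set (Stream' A)}

theorem link_antitone (hΩ : MapsTo Stream'.tail Ω Ω) : Antitone (link Ω) :=
  fun _ _ hmn _ _ h => h.trans (antitone_image_drop hΩ hmn)

theorem ordConnected_link (m : ℕ) (x : core Ω) : {y | link Ω m y x}.OrdConnected := by
  refine ⟨fun y hy z hz u hu => ?_⟩
  have hyz : link Ω m y z := (link Ω m).trans hy ((link Ω m).symm hz)
  have huz : link Ω m u z := Subset.trans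
    (inter_subset_inter_right Ω (uIcc_subset_uIcc_right (Icc_subset_uIcc hu))) hyz
  exact (link Ω m).trans huz hz

theorem link_zero (x y : core Ω) : link Ω 0 x y :=
  fun z hz => ⟨z, hz.1, rfl⟩

namespace IsOrderedShift

variable (hΩ : IsOrderedShift Ω)
include hΩ

theorem cons_mem_uIcc_iff {a : A} {x y z : Stream' A} :
    Stream'.cons a z ∈ uIcc (Stream'.cons a x) (Stream'.cons a y) ↔ z ∈ uIcc x y := by
  rcases hΩ.strictMono_or_strictAnti_cons a with h | h
  · simp only [mem_uIcc, h.le_iff_le]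
  · simp only [mem_uIcc, h.le_iff_ge]
    tauto

theorem cons_mem_of_mem_uIcc {x y z : Stream' A} (hx : x ∈ Ω) (hy : y ∈ Ω)
    (hhead : x.head = y.head) (hz : z ∈ Ω) (hzxy : z ∈ uIcc x.tail y.tail) :
    Stream'.cons x.head z ∈ Ω ∩ uIcc x y := by
  rw [← x.eta] at hx
  rw [← y.eta, ← hhead] at hy
  refine ⟨hΩ.cons_mem hx hy hz hzxy, ?_⟩
  have h := (hΩ.cons_mem_uIcc_iff (a := x.head)).2 hzxy
  rwa [Stream'.eta, hhead, Stream'.eta, ← hhead] at h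

theorem ordConnected_take (n : ℕ) (w : List A) : (Stream'.take n ⁻¹' {w}).OrdConnected := by
  induction n generalizing w with
  | zero =>
    by_cases hw : w = []
    · simpa [preimage, hw] using ordConnected_univ
    · simpa [preimage, Ne.symm hw] using ordConnected_empty
  | succ n ih =>
    refine ordConnected_iff_uIcc_subset.2 fun x hx y hy z hz => ?_
    have hx : x.head :: x.tail.take n = w := hx
    have hy : y.head :: y.tail.take n = w := hy
    have hhead : y.head = x.head := (List.cons_eq_cons.1 (hy.trans hx.symm)).1
    have hz' : z.head = x.head := (hΩ.ordConnected_head x.head).uIcc_subset rfl hhead hz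
    rw [← x.eta, ← y.eta, ← z.eta, hz', hhead, hΩ.cons_mem_uIcc_iff] at hz
    have htail := (ih (x.tail.take n)).uIcc_subset rfl
      (List.cons_eq_cons.1 (hy.trans hx.symm)).2 hz
    change z.head :: z.tail.take n = w
    rw [hz', show z.tail.take n = x.tail.take n from htail, hx]

theorem ordConnected_ker_head (x : core Ω) :
    {y : core Ω | Setoid.ker (fun x : core Ω => x.1.head) y x}.OrdConnected :=
  (hΩ.ordConnected_head x.1.head).preimage_mono (Subtype.mono_coe _)

/-- The shift on the core. -/
def coreTail : core Ω → core Ω :=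
  (mapsTo_tail_core hΩ.mapsTo_tail).restrict _ _ _

theorem link_coreTail {m : ℕ} {x y : core Ω} (h : letterLink Ω m x y) :
    link Ω (m + 1) (hΩ.coreTail x) (hΩ.coreTail y) := by
  rintro z ⟨hz, hzxy⟩
  obtain ⟨u, hu, huz⟩ := h.1 (hΩ.cons_mem_of_mem_uIcc (core_subset Ω x.2) (core_subset Ω y.2)
    h.2 hz hzxy)
  exact ⟨u, hu, by rw [← Stream'.tail_drop', huz, Stream'.tail_cons]⟩

/-- The map induced by the shift on the classes of linked points. -/
def quotientTail (m : ℕ) : Quotient (letterLink Ω m) → Quotient (link Ω (m + 1)) :=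
  Quotient.map hΩ.coreTail fun _ _ => hΩ.link_coreTail

section Finite

variable [Finite A]

theorem surjective_quotientTail (m : ℕ) : Function.Surjective (hΩ.quotientTail m) := by
  rintro ⟨x⟩
  obtain ⟨a, ha⟩ := exists_cons_mem_core hΩ.mapsTo_tail x.2
  exact ⟨Quotient.mk _ ⟨_, ha⟩, rfl⟩

theorem finite_quotient_link (m : ℕ) : Finite (Quotient (link Ω m)) := by
  induction m with
  | zero =>
    have : Subsingleton (Quotient (link Ω 0)) :=
      ⟨fun p q => Quotient.inductionOn₂ p q fun x y => Quotient.sound (link_zero x y)⟩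
    infer_instance
  | succ m ih =>
    have := finite_quotient_ker fun x : core Ω => x.1.head
    have : Finite (Quotient (letterLink Ω m)) := finite_quotient_inf _ _
    exact Finite.of_surjective _ (hΩ.surjective_quotientTail m)

theorem finite_quotient_letterLink (m : ℕ) : Finite (Quotient (letterLink Ω m)) :=
  have := finite_quotient_ker fun x : core Ω => x.1.head
  have := hΩ.finite_quotient_link m
  finite_quotient_inf _ _

theorem card_quotient_letterLink_le (m : ℕ) :
    Nat.card (Quotient (letterLink Ω m)) ≤ Nat.card (Quotient (link Ω (m + 1))) + Nat.card A := by
  have := finite_quotient_ker fun x : core Ω => x.1.head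
  have := hΩ.finite_quotient_link
  have hlink : Nat.card (Quotient (link Ω m)) ≤ Nat.card (Quotient (link Ω (m + 1))) :=
    Nat.card_le_card_of_surjective
      (Quotient.map' id (link_antitone hΩ.mapsTo_tail m.le_succ)) (by rintro ⟨x⟩; exact ⟨⟦x⟧, rfl⟩)
  exact (card_quotient_inf_le _ _ (ordConnected_link m) hΩ.ordConnected_ker_head).trans
    (add_le_add hlink (card_quotient_ker_le _))

/-- The points that the shift links with a point of another class of `letterLink Ω m`. -/
def merging (m : ℕ) : Set (core Ω) :=
  {x | ∃ y, link Ω (m + 1) (hΩ.coreTail x) (hΩ.coreTail y) ∧ ¬ letterLink Ω m x y}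

theorem ncard_image_merging_le (m : ℕ) :
    (Quotient.mk (letterLink Ω m) '' hΩ.merging m).ncard ≤ 2 * Nat.card A := by
  have := hΩ.finite_quotient_letterLink m
  refine (ncard_le_ncard ?_).trans (ncard_nontrivial_fiber_le (hΩ.surjective_quotientTail m)
    (hΩ.card_quotient_letterLink_le m))
  rintro _ ⟨x, ⟨y, hlink, hne⟩, rfl⟩
  exact ⟨⟦y⟧, fun h => hne ((letterLink Ω m).symm (Quotient.exact h)),
    (Quotient.sound hlink).symm⟩

end Finite

end IsOrderedShift

end OrderedShift

/-! ### Left constraints of piecewise monotone shifts -/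

section ConstraintEntropy
variable {Ω : Set (Stream' A)}

/-- The words of `core Ω` that also begin a sequence of `Ω` outside the core. -/
def gapWords (Ω : Set (Stream' A)) : Set (List A) :=
  prefixes (core Ω) ∩ prefixes (Ω \ core Ω)

/-- The words of `core Ω` that also begin a sequence of `Ω` without left extension by `m` letters
in `Ω`. -/
def cutWords (Ω : Set (Stream' A)) (m : ℕ) : Set (List A) :=
  prefixes (core Ω) ∩ prefixes (Ω \ Stream'.drop m '' Ω)

theorem cutWords_subset_gapWords (Ω : Set (Stream' A)) (m : ℕ) : cutWords Ω m ⊆ gapWords Ω :=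
  inter_subset_inter_right _ (prefixes_mono (sdiff_image_drop_subset Ω m))

/-- The gap words whose tail is not a gap word. -/
def initialGapWords (Ω : Set (Stream' A)) : Set (List A) :=
  {w | w ∈ gapWords Ω ∧ w.tail ∉ gapWords Ω}

theorem exists_gapWords_subset_cutWords [Finite A] (hΩ : MapsTo Stream'.tail Ω Ω) (n : ℕ) :
    ∃ m, ∀ w ∈ gapWords Ω, w.length = n → w ∈ cutWords Ω m := by
  have hev : ∀ w ∈ gapWords Ω ∩ {w | w.length = n}, ∀ᶠ m in atTop, w ∈ cutWords Ω m := by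
    rintro w ⟨⟨hw, x, ⟨hx, hxcore⟩, hxw⟩, -⟩
    obtain ⟨m, hm⟩ : ∃ m, x ∉ Stream'.drop m '' Ω := by simpa [core] using hxcore
    filter_upwards [eventually_ge_atTop m] with k hk
    exact ⟨hw, x, ⟨hx, fun h => hm (antitone_image_drop hΩ hk h)⟩, hxw⟩
  obtain ⟨m, hm⟩ := ((eventually_all_finite (finite_words _ n)).2 hev).exists
  exact ⟨m, fun w hw hn => hm w ⟨hw, hn⟩⟩

namespace IsOrderedShift

variable [LinearOrder (Stream' A)] (hΩ : IsOrderedShift Ω)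
include hΩ

theorem link_of_take_eq {m : ℕ} {v : List A} (hv : v ∉ cutWords Ω m) {x y : core Ω}
    (hx : x.1.take v.length = v) (hy : y.1.take v.length = v) : link Ω m x y := by
  rintro z ⟨hz, hzxy⟩
  by_contra hzm
  exact hv ⟨⟨x, x.2, hx⟩, z, ⟨hz, hzm⟩, (hΩ.ordConnected_take v.length v).uIcc_subset hx hy hzxy⟩

/-- The cut words that are prefixes of merging points. -/
def mergeWords (m : ℕ) : Set (List A) :=
  prefixes (Subtype.val '' hΩ.merging m) ∩ prefixes (Ω \ Stream'.drop m '' Ω)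

theorem wordCount_prefixes_inter_le_two {K V : Set (Stream' A)}
    (h : ∀ x ∈ K, ∀ y ∈ K, ∀ z ∈ V, z ∉ uIcc x y) (n : ℕ) :
    wordCount (prefixes K ∩ prefixes V) n ≤ 2 := by
  rw [wordCount, inter_inter_distrib_right, prefixes_inter_length, prefixes_inter_length]
  exact ncard_image_inter_image_le_two (hΩ.ordConnected_take n) h

theorem cons_mem_prefixes_merging {m : ℕ} {a b : A} {v : List A}
    (ha : a :: v ∈ prefixes (core Ω)) (hb : b :: v ∈ prefixes (core Ω)) (hab : a ≠ b)
    (hv : v ∉ cutWords Ω (m + 1)) : a :: v ∈ prefixes (Subtype.val '' hΩ.merging m) := by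
  obtain ⟨x, hx, hxw⟩ := ha
  obtain ⟨y, hy, hyw⟩ := hb
  obtain ⟨hxa, hxv⟩ := List.cons_eq_cons.1 hxw
  obtain ⟨hyb, hyv⟩ := List.cons_eq_cons.1 hyw
  refine ⟨x, ⟨⟨x, hx⟩, ⟨⟨y, hy⟩, hΩ.link_of_take_eq hv hxv hyv, fun h => hab ?_⟩, rfl⟩, hxw⟩
  exact hxa.symm.trans (h.2.trans hyb)

variable [Finite A]

theorem wordCount_prefixes_inter_cut_le {m : ℕ} {r : Setoid (core Ω)} (hr : r ≤ link Ω m)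
    [Finite (Quotient r)] (C : Set (core Ω)) (n : ℕ) :
    wordCount (prefixes (Subtype.val '' C) ∩ prefixes (Ω \ Stream'.drop m '' Ω)) n ≤
      2 * (Quotient.mk r '' C).ncard := by
  let K (q : Quotient r) : Set (Stream' A) := Subtype.val '' {x | x ∈ C ∧ Quotient.mk r x = q}
  set Q := (toFinite (Quotient.mk r '' C)).toFinset
  have hcover : prefixes (Subtype.val '' C) ∩ prefixes (Ω \ Stream'.drop m '' Ω) ⊆
      ⋃ q ∈ Q, prefixes (K q) ∩ prefixes (Ω \ Stream'.drop m '' Ω) := by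
    rintro w ⟨⟨_, ⟨x, hx, rfl⟩, hxw⟩, hw⟩
    exact mem_biUnion (x := Quotient.mk r x) (by simpa [Q] using ⟨_, _, hx, rfl⟩)
      ⟨⟨x, ⟨x, ⟨hx, rfl⟩, rfl⟩, hxw⟩, hw⟩
  have htwo (q : Quotient r) :
      wordCount (prefixes (K q) ∩ prefixes (Ω \ Stream'.drop m '' Ω)) n ≤ 2 := by
    refine hΩ.wordCount_prefixes_inter_le_two ?_ n
    rintro _ ⟨x, ⟨-, rfl⟩, rfl⟩ _ ⟨y, ⟨-, hxy⟩, rfl⟩ z ⟨hz, hzm⟩ hzxy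
    exact hzm (hr (r.symm (Quotient.exact hxy)) ⟨hz, hzxy⟩)
  calc _ ≤ _ := wordCount_mono fun w hw _ => hcover hw
    _ ≤ ∑ q ∈ Q, wordCount (prefixes (K q) ∩ prefixes (Ω \ Stream'.drop m '' Ω)) n :=
      wordCount_biUnion_le _ _ n
    _ ≤ Q.card * 2 := Finset.sum_le_card_nsmul _ _ _ fun q _ => htwo q
    _ = 2 * (Quotient.mk r '' C).ncard := by rw [ncard_eq_toFinset_card, mul_comm]

theorem wordCount_cutWords_le (m n : ℕ) :
    wordCount (cutWords Ω m) n ≤ 2 * Nat.card (Quotient (link Ω m)) := by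
  have := hΩ.finite_quotient_link m
  have h := hΩ.wordCount_prefixes_inter_cut_le (le_refl (link Ω m)) univ n
  rw [image_univ, Subtype.range_coe] at h
  exact h.trans (Nat.mul_le_mul_left 2 (ncard_le_card _))

theorem wordCount_mergeWords_le (m n : ℕ) :
    wordCount (hΩ.mergeWords m) n ≤ 4 * Nat.card A := by
  have := hΩ.finite_quotient_letterLink m
  have h := hΩ.wordCount_prefixes_inter_cut_le (r := letterLink Ω m) inf_le_left (hΩ.merging m) n
  have := hΩ.ncard_image_merging_le m
  exact h.trans (by omega)

theorem initialGapWords_inter_cutWords_subset (m : ℕ) :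
    initialGapWords Ω ∩ cutWords Ω m ⊆ hΩ.mergeWords m := by
  rintro w ⟨⟨hgap, htail⟩, ⟨z, hz, hzw⟩, x, ⟨hx, hxm⟩, hxw⟩
  obtain _ | ⟨a, v⟩ := w
  · exact absurd hgap htail
  obtain ⟨hza, hzv⟩ := List.cons_eq_cons.1 hzw
  obtain ⟨hxa, hxv⟩ := List.cons_eq_cons.1 hxw
  have hxtail : x.tail ∈ core Ω := by
    by_contra h
    exact htail ⟨⟨z.tail, mapsTo_tail_core hΩ.mapsTo_tail hz, hzv⟩, x.tail,
      ⟨hΩ.mapsTo_tail hx, h⟩, hxv⟩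
  obtain ⟨b, hb⟩ := exists_cons_mem_core hΩ.mapsTo_tail hxtail
  refine ⟨⟨z, ⟨⟨z, hz⟩, ⟨⟨_, hb⟩, ?_, fun h => ?_⟩, rfl⟩, hzw⟩, x, ⟨hx, hxm⟩, hxw⟩
  · exact hΩ.link_of_take_eq (fun h => htail (cutWords_subset_gapWords Ω _ h)) hzv hxv
  · have hzb : z.head = b := h.2
    rw [← hzb, hza, ← hxa, Stream'.eta] at hb
    exact hxm (core_subset_image_drop Ω m hb)

theorem wordCount_initialGapWords_le (n : ℕ) :
    wordCount (initialGapWords Ω) n ≤ 4 * Nat.card A := by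
  obtain ⟨m, hm⟩ := exists_gapWords_subset_cutWords hΩ.mapsTo_tail n
  exact (wordCount_mono fun w hw hn =>
    hΩ.initialGapWords_inter_cutWords_subset m ⟨hw, hm w hw.1 hn⟩).trans
    (hΩ.wordCount_mergeWords_le m n)

theorem exists_wordCount_gapWords_le (N : ℕ) : ∃ D, ∀ k, wordCount (gapWords Ω) (k + N + 1) ≤
    wordCount (gapWords Ω) (k + N) + 4 * Nat.card A * wordCount (gapWords Ω) k + D := by
  obtain ⟨m, hm⟩ := exists_gapWords_subset_cutWords hΩ.mapsTo_tail (N + 1)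
  refine ⟨_, wordCount_le_of_branching (X := initialGapWords Ω ∪ cutWords Ω (m + 1))
    (fun n => (wordCount_union_le _ _ n).trans (add_le_add (hΩ.wordCount_initialGapWords_le n)
      (hΩ.wordCount_cutWords_le (m + 1) n)))
    (hΩ.wordCount_mergeWords_le m (N + 1))
    (fun w hw hX => by_contra fun h => hX (Or.inl ⟨hw, h⟩))
    fun a b v ha hb hv hab hN => ⟨?_, ?_⟩⟩
  · exact list_take_mem_prefixes
      (hΩ.cons_mem_prefixes_merging ha.1 hb.1 hab fun h => hv (Or.inr h)) _
  · exact (hm _ ⟨list_take_mem_prefixes ha.1 _, list_take_mem_prefixes ha.2 _⟩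
      (by simpa using hN)).2

theorem wordCount_prefixes_inter_boundary_le {n : ℕ} (hn : n ≠ 0) :
    wordCount (prefixes Ω ∩ prefixes (Stream'.tail ⁻¹' Ω \ Ω)) n ≤ 2 * Nat.card A := by
  have := Fintype.ofFinite A
  let K (a : A) : Set (Stream' A) := {x | x ∈ Ω ∧ x.head = a}
  let V (a : A) : Set (Stream' A) := {x | x ∈ Stream'.tail ⁻¹' Ω \ Ω ∧ x.head = a}
  have htwo (a : A) : wordCount (prefixes (K a) ∩ prefixes (V a)) n ≤ 2 := by
    refine hΩ.wordCount_prefixes_inter_le_two ?_ n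
    rintro x ⟨hx, hxa⟩ y ⟨hy, hya⟩ z ⟨⟨hz, hzΩ⟩, hza⟩ hzxy
    refine hzΩ ?_
    rw [← x.eta, ← y.eta, ← z.eta, hxa, hya, hza, hΩ.cons_mem_uIcc_iff] at hzxy
    rw [← z.eta, hza, ← hxa]
    exact (hΩ.cons_mem_of_mem_uIcc hx hy (hxa.trans hya.symm) hz hzxy).1
  calc _ ≤ wordCount (⋃ a ∈ Finset.univ, prefixes (K a) ∩ prefixes (V a)) n := by
        refine wordCount_mono ?_
        rintro (_ | ⟨a, v⟩) ⟨⟨x, hx, hxw⟩, y, hy, hyw⟩ hlen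
        · exact absurd hlen.symm hn
        · exact mem_biUnion (Finset.mem_univ a) ⟨⟨x, ⟨hx, (List.cons_eq_cons.1 hxw).1⟩, hxw⟩,
            y, ⟨hy, (List.cons_eq_cons.1 hyw).1⟩, hyw⟩
    _ ≤ ∑ a, wordCount (prefixes (K a) ∩ prefixes (V a)) n := wordCount_biUnion_le _ _ n
    _ ≤ Finset.univ.card * 2 := Finset.sum_le_card_nsmul _ _ _ fun a _ => htwo a
    _ = 2 * Nat.card A := by rw [Finset.card_univ, Nat.card_eq_fintype_card, mul_comm]

theorem ncard_LC_bilateral_le {n : ℕ} (hn : 2 ≤ n) :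
    (LC (bilateral Ω) n).ncard ≤ wordCount (gapWords Ω) n + 2 * Nat.card A := by
  have hsub : LC (bilateral Ω) n ⊆
      (gapWords Ω ∪ prefixes Ω ∩ prefixes (Stream'.tail ⁻¹' Ω \ Ω)) ∩ {w | w.length = n} := by
    intro w hw
    obtain ⟨hcore, x, ⟨hx, hxcore⟩, hxw⟩ := LC_bilateral_subset hΩ.mapsTo_tail hn hw
    refine ⟨?_, hw.1⟩
    by_cases hxΩ : x ∈ Ω
    · exact Or.inl ⟨hcore, x, ⟨hxΩ, hxcore⟩, hxw⟩
    · exact Or.inr ⟨prefixes_mono (core_subset Ω) hcore, x, ⟨core_subset Ω hx, hxΩ⟩, hxw⟩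
  calc _ ≤ _ := ncard_le_ncard hsub (finite_words _ n)
    _ ≤ _ := wordCount_union_le _ _ n
    _ ≤ _ := Nat.add_le_add_left (hΩ.wordCount_prefixes_inter_boundary_le (by omega)) _

theorem hC_bilateral_eq_zero : hC (bilateral Ω) = 0 := by
  refine (tendsto_posLog_div_of_isBigO_exp fun ε hε => ?_).limsup_eq
  have hgap := isBigO_exp_of_le_add_mul hΩ.exists_wordCount_gapWords_le hε
  have hconst : (fun _ : ℕ => (2 * Nat.card A : ℝ)) =O[atTop] fun n => Real.exp (ε * n) :=
    Asymptotics.IsBigO.of_bound _ (Eventually.of_forall fun n => le_mul_of_one_le_right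
      (norm_nonneg _) ((Real.one_le_exp (by positivity)).trans (le_abs_self _)))
  refine (Asymptotics.IsBigO.of_bound' ?_).trans (hgap.add hconst)
  filter_upwards [eventually_ge_atTop 2] with n hn
  rw [Nat.card_coe_set_eq, Real.norm_of_nonneg (by positivity)]
  exact le_trans (by exact_mod_cast hΩ.ncard_LC_bilateral_le hn) (le_abs_self _)

end IsOrderedShift

end ConstraintEntropy

/-! ### Milnor–Thurston orders -/

section TwistedOrder

/-- A Milnor–Thurston order on sequences: letters are ordered by `κ`, and prepending a letter
preserves the order if the letter is in `inc` and reverses it otherwise. -/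
structure IsTwistedOrder (κ : A → ℝ) (inc : Set A) [LinearOrder (Stream' A)] : Prop where
  monotone_head : Monotone fun x : Stream' A => κ x.head
  strictMono_cons {a : A} : a ∈ inc → StrictMono (Stream'.cons a)
  strictAnti_cons {a : A} : a ∉ inc → StrictAnti (Stream'.cons a)

variable {κ : A → ℝ} {inc : Set A}

namespace IsTwistedOrder

variable [LinearOrder (Stream' A)] (h : IsTwistedOrder κ inc)
include h

theorem strictMono_or_strictAnti_cons (a : A) :
    StrictMono (Stream'.cons a) ∨ StrictAnti (Stream'.cons a) :=
  (em (a ∈ inc)).imp h.strictMono_cons h.strictAnti_cons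

theorem ordConnected_head (hκ : Function.Injective κ) (a : A) :
    {x : Stream' A | x.head = a}.OrdConnected := by
  convert (ordConnected_singleton (a := κ a)).preimage_mono h.monotone_head using 1
  ext x
  exact hκ.eq_iff.symm

end IsTwistedOrder

open Classical in
/-- The `k`-th letter of `x` read through `κ`, with a change of sign for each preceding letter
outside `inc`: a Milnor–Thurston order compares these coordinates lexicographically. -/
noncomputable def signedLetter (κ : A → ℝ) (inc : Set A) : ℕ → Stream' A → ℝ
  | 0, x => κ x.head
  | k + 1, x =>
    if x.head ∈ inc then signedLetter κ inc k x.tail else -signedLetter κ inc k x.tail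

theorem signedLetter_injective (hκ : Function.Injective κ) :
    Function.Injective fun (x : Stream' A) k => signedLetter κ inc k x := by
  intro x y hxy
  refine Stream'.ext fun n => ?_
  induction n generalizing x y with
  | zero => exact hκ (congrFun hxy 0)
  | succ _ ih =>
    have hhead : x.head = y.head := hκ (congrFun hxy 0)
    refine ih (x := x.tail) (y := y.tail) (funext fun k => ?_)
    have hk : signedLetter κ inc (k + 1) x = signedLetter κ inc (k + 1) y := congrFun hxy (k + 1)
    rw [signedLetter, signedLetter, hhead] at hk
    split_ifs at hk
    exacts [hk, neg_injective hk]

theorem exists_isTwistedOrder (hκ : Function.Injective κ) (inc : Set A) :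
    ∃ _ : LinearOrder (Stream' A), IsTwistedOrder κ inc := by
  let ord : LinearOrder (Stream' A) :=
    LinearOrder.lift' (fun x => toLex fun k => signedLetter κ inc k x)
      (toLex.injective.comp (signedLetter_injective hκ))
  have lt_iff {x y : Stream' A} : x < y ↔
      ∃ i, (∀ j < i, signedLetter κ inc j x = signedLetter κ inc j y) ∧
        signedLetter κ inc i x < signedLetter κ inc i y := Iff.rfl
  refine ⟨ord, fun x y hxy => le_of_not_gt fun hlt => not_lt_of_ge hxy ?_, ?_, ?_⟩
  · exact lt_iff.2 ⟨0, by simp, hlt⟩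
  · intro a ha x y hxy
    obtain ⟨i, heq, hlt⟩ := lt_iff.1 hxy
    refine lt_iff.2 ⟨i + 1, fun j hj => ?_, by simpa [signedLetter, ha] using hlt⟩
    cases j with
    | zero => rfl
    | succ j => simpa [signedLetter, ha] using heq j (by omega)
  · intro a ha x y hxy
    obtain ⟨i, heq, hlt⟩ := lt_iff.1 hxy
    refine lt_iff.2 ⟨i + 1, fun j hj => ?_, by simpa [signedLetter, ha] using hlt⟩
    cases j with
    | zero => rfl
    | succ j => simpa [signedLetter, ha] using (heq j (by omega)).symm

end TwistedOrder

/-! ### Piecewise monotonic maps -/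

section PiecewiseMonotonic

theorem lt_of_disjoint_ordConnected {α : Type*} [LinearOrder α] {s t : Set α} (hs : s.OrdConnected)
    (ht : t.OrdConnected) (hst : Disjoint s t) {a b c d : α} (ha : a ∈ s) (hb : b ∈ t)
    (hc : c ∈ s) (hd : d ∈ t) (hab : a < b) : c < d := by
  by_contra! hdc
  rcases le_total a d with had | hda
  · exact hst.notMem_of_mem_left (hs.out ha hc ⟨had, hdc⟩) hd
  · exact hst.notMem_of_mem_left ha (ht.out hd hb ⟨hda, hab.le⟩)

theorem strictMonoOn_union_of_mem {α β : Type*} [LinearOrder α] [Preorder β] {f : α → β}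
    {s t : Set α} (hs : s.OrdConnected) (ht : t.OrdConnected) {c : α} (hcs : c ∈ s) (hct : c ∈ t)
    (hfs : StrictMonoOn f s) (hft : StrictMonoOn f t) : StrictMonoOn f (s ∪ t) := by
  have cross {s t : Set α} (hs : s.OrdConnected) (ht : t.OrdConnected) (hcs : c ∈ s) (hct : c ∈ t)
      (hfs : StrictMonoOn f s) (hft : StrictMonoOn f t) {x y : α} (hx : x ∈ s) (hy : y ∈ t)
      (hxy : x < y) : f x < f y := by
    rcases le_or_gt c x with hcx | hxc
    · exact hft (ht.out hct hy ⟨hcx, hxy.le⟩) hy hxy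
    rcases le_or_gt y c with hyc | hcy
    · exact hfs hx (hs.out hx hcs ⟨hxy.le, hyc⟩) hxy
    · exact (hfs hx hcs hxc).trans (hft hct hy hcy)
  rintro x (hx | hx) y (hy | hy) hxy
  · exact hfs hx hy hxy
  · exact cross hs ht hcs hct hfs hft hx hy hxy
  · exact cross ht hs hct hcs hft hfs hx hy hxy
  · exact hft hx hy hxy

/-- A finite family of disjoint intervals, on each of which `f` is continuous and strictly
monotonic. -/
structure IsMonotonePartition (f : ℝ → ℝ) (P : Finset (Set ℝ)) : Prop where
  nonempty {J : Set ℝ} : J ∈ P → J.Nonempty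
  ordConnected {J : Set ℝ} : J ∈ P → J.OrdConnected
  continuousOn {J : Set ℝ} : J ∈ P → ContinuousOn f J
  strictMonoOn_or_strictAntiOn {J : Set ℝ} : J ∈ P → StrictMonoOn f J ∨ StrictAntiOn f J
  pairwiseDisjoint : (P : Set (Set ℝ)).PairwiseDisjoint id

variable {f : ℝ → ℝ} {I : Set ℝ} {P : Finset (Set ℝ)}

theorem GoodPiece.ordConnected {J : Set ℝ} (hJ : GoodPiece f I J) : J.OrdConnected := by
  obtain ⟨⟨c, d, rfl⟩, -⟩ := hJ
  exact ordConnected_Ioo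

theorem GoodPiece.union {J J' : Set ℝ} (hJ : GoodPiece f I J) (hJ' : GoodPiece f I J') {c : ℝ}
    (hc : c ∈ J) (hc' : c ∈ J') : GoodPiece f I (J ∪ J') := by
  have hoc := hJ.ordConnected
  have hoc' := hJ'.ordConnected
  obtain ⟨⟨l, u, rfl⟩, hI, hcont, hmono⟩ := hJ
  obtain ⟨⟨l', u', rfl⟩, hI', hcont', hmono'⟩ := hJ'
  obtain ⟨q, hcq, hq⟩ : ∃ q, c < q ∧ q < min u u' := exists_between (lt_min hc.2 hc'.2)
  have hqJ : q ∈ Ioo l u := ⟨hc.1.trans hcq, hq.trans_le (min_le_left _ _)⟩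
  have hqJ' : q ∈ Ioo l' u' := ⟨hc'.1.trans hcq, hq.trans_le (min_le_right _ _)⟩
  refine ⟨⟨_, _, Ioo_union_Ioo' (hc'.1.trans hc.2) (hc.1.trans hc'.2)⟩, union_subset hI hI',
    hcont.union_of_isOpen hcont' isOpen_Ioo isOpen_Ioo, ?_⟩
  rcases hmono with hmono | hanti <;> rcases hmono' with hmono' | hanti'
  · exact Or.inl (strictMonoOn_union_of_mem hoc hoc' hc hc' hmono hmono')
  · exact absurd (hmono hc hqJ hcq) (hanti' hc' hqJ' hcq).asymm
  · exact absurd (hanti hc hqJ hcq) (hmono' hc' hqJ' hcq).asymm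
  · exact Or.inr (strictMonoOn_union_of_mem (β := ℝᵒᵈ) hoc hoc' hc hc' hanti hanti')

theorem IsNaturalPartition.isMonotonePartition (hP : IsNaturalPartition f I P) :
    IsMonotonePartition f P where
  nonempty hJ := ((hP _).1 hJ).1
  ordConnected hJ := ((hP _).1 hJ).2.1.ordConnected
  continuousOn hJ := ((hP _).1 hJ).2.1.2.2.1
  strictMonoOn_or_strictAntiOn hJ := ((hP _).1 hJ).2.1.2.2.2
  pairwiseDisjoint J hJ J' hJ' hne := by
    obtain ⟨-, hgood, hmax⟩ := (hP J).1 hJ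
    obtain ⟨-, hgood', hmax'⟩ := (hP J').1 hJ'
    refine disjoint_left.2 fun c hc hc' => hne ?_
    have hunion := hgood.union hgood' hc hc'
    exact (hmax _ hunion subset_union_left).symm.trans (hmax' _ hunion subset_union_right)

/-- The geometric cylinder `⟨x₀…x_k⟩` of an infinite `P`-word `x`. -/
def geomCylinder (f : ℝ → ℝ) (x : Stream' {J // J ∈ P}) (k : ℕ) : Set ℝ :=
  {r | ∀ j ≤ k, f^[j] r ∈ (x.get j).1}

/-- The one-sided `P`-words all of whose geometric cylinders are nonempty. -/
def itineraries (f : ℝ → ℝ) (P : Finset (Set ℝ)) : Set (Stream' {J // J ∈ P}) :=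
  {x | ∀ k, (geomCylinder f x k).Nonempty}

variable {x y z : Stream' {J // J ∈ P}} {r s : ℝ} {k : ℕ}

theorem antitone_geomCylinder (x : Stream' {J // J ∈ P}) : Antitone (geomCylinder f x) :=
  fun _ _ hkl _ hr j hj => hr j (hj.trans hkl)

theorem head_mem_of_mem_geomCylinder (hr : r ∈ geomCylinder f x k) : r ∈ x.head.1 :=
  hr 0 k.zero_le

theorem mem_geomCylinder_succ_iff :
    r ∈ geomCylinder f x (k + 1) ↔ r ∈ x.head.1 ∧ f r ∈ geomCylinder f x.tail k := by
  refine ⟨fun h => ⟨h 0 (Nat.zero_le _), fun j hj => h (j + 1) (by omega)⟩, fun h j hj => ?_⟩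
  cases j with
  | zero => exact h.1
  | succ j => exact h.2 j (by omega)

theorem mapsTo_tail_itineraries : MapsTo Stream'.tail (itineraries f P) (itineraries f P) :=
  fun _ hx k => let ⟨r, hr⟩ := hx (k + 1); ⟨f r, (mem_geomCylinder_succ_iff.1 hr).2⟩

theorem symbolic_eq_bilateral (f : ℝ → ℝ) (P : Finset (Set ℝ)) :
    symbolic f P = bilateral (itineraries f P) := by
  refine Set.ext fun B => forall_congr' fun n => forall_congr' fun k => ?_
  simp only [Set.Nonempty, mem_iInter, mem_preimage, geomCylinder, mem_ofPred_eq, Fin.forall_iff,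
    Nat.lt_succ_iff]
  rfl

theorem isClosed_symbolic (f : ℝ → ℝ) (P : Finset (Set ℝ)) :
    letI : TopologicalSpace {J // J ∈ P} := ⊥
    IsClosed (symbolic f P) := by
  let : TopologicalSpace {J // J ∈ P} := ⊥
  have : DiscreteTopology {J // J ∈ P} := ⟨rfl⟩
  have hsymbolic : symbolic f P = ⋂ (n : ℤ) (k : ℕ),
      (fun (B : ℤ → {J // J ∈ P}) (j : Fin (k + 1)) => B (n + (j : ℕ))) ⁻¹'
        {w | (⋂ j : Fin (k + 1), f^[(j : ℕ)] ⁻¹' (w j).1).Nonempty} := by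
    ext B
    simp only [symbolic, mem_iInter, mem_preimage, mem_ofPred_eq]
  rw [hsymbolic]
  refine isClosed_iInter fun n => isClosed_iInter fun k => (isClosed_discrete _).preimage ?_
  fun_prop

theorem isSubshift_symbolic (f : ℝ → ℝ) (P : Finset (Set ℝ)) :
    letI : TopologicalSpace {J // J ∈ P} := ⊥
    IsSubshift (symbolic f P) :=
  ⟨isClosed_symbolic f P, by rw [symbolic_eq_bilateral, shift_image_bilateral]⟩

namespace IsMonotonePartition

variable (hP : IsMonotonePartition f P)
include hP

section TwistedOrder

variable {κ : {J // J ∈ P} → ℝ} (hκ : ∀ J, κ J ∈ J.1)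
include hκ

theorem injective_of_mem : Function.Injective κ := fun J J' h => by
  by_contra hne
  exact (hP.pairwiseDisjoint J.2 J'.2 (Subtype.coe_ne_coe.2 hne)).notMem_of_mem_left (hκ J)
    (h ▸ hκ J')

variable [LinearOrder (Stream' {J // J ∈ P})]
  (hord : IsTwistedOrder κ {J | StrictMonoOn f J.1})
include hord

theorem lt_of_head_ne (hxy : x < y) (hne : x.head ≠ y.head) (hr : r ∈ x.head.1)
    (hs : s ∈ y.head.1) : r < s :=
  lt_of_disjoint_ordConnected (hP.ordConnected x.head.2) (hP.ordConnected y.head.2)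
    (hP.pairwiseDisjoint x.head.2 y.head.2 (Subtype.coe_ne_coe.2 hne)) (hκ _) (hκ _) hr hs
    ((hord.monotone_head hxy.le).lt_of_ne ((hP.injective_of_mem hκ).ne hne))

theorem lt_of_get_ne {n : ℕ} (hxy : x < y) (hne : x.get n ≠ y.get n) (hnk : n ≤ k)
    (hr : r ∈ geomCylinder f x k) (hs : s ∈ geomCylinder f y k) : r < s := by
  induction n generalizing x y r s k with
  | zero =>
    exact hP.lt_of_head_ne hκ hord hxy hne (head_mem_of_mem_geomCylinder hr)
      (head_mem_of_mem_geomCylinder hs)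
  | succ n ih =>
    by_cases hhead : x.head = y.head
    swap
    · exact hP.lt_of_head_ne hκ hord hxy hhead (head_mem_of_mem_geomCylinder hr)
        (head_mem_of_mem_geomCylinder hs)
    obtain ⟨k, rfl⟩ : ∃ k', k = k' + 1 := ⟨k - 1, by omega⟩
    have hnk : n ≤ k := Nat.le_of_succ_le_succ hnk
    obtain ⟨a, x, rfl⟩ : ∃ a x', x = Stream'.cons a x' := ⟨_, _, x.eta.symm⟩
    obtain ⟨b, y, rfl⟩ : ∃ b y', y = Stream'.cons b y' := ⟨_, _, y.eta.symm⟩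
    obtain rfl : a = b := hhead
    obtain ⟨hra, hfr⟩ := mem_geomCylinder_succ_iff.1 hr
    obtain ⟨hsa, hfs⟩ := mem_geomCylinder_succ_iff.1 hs
    by_cases ha : StrictMonoOn f a.1
    · have hxy : x < y := (hord.strictMono_cons ha).lt_iff_lt.1 hxy
      exact (ha.lt_iff_lt hra hsa).1 (ih hxy hne hnk hfr hfs)
    · have hyx : y < x := (hord.strictAnti_cons ha).lt_iff_gt.1 hxy
      have hanti := (hP.strictMonoOn_or_strictAntiOn a.2).resolve_left ha
      exact (hanti.lt_iff_gt hsa hra).1 (ih hyx hne.symm hnk hfs hfr)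

theorem eventually_lt (hxy : x < y) : ∀ᶠ k in atTop,
    ∀ r ∈ geomCylinder f x k, ∀ s ∈ geomCylinder f y k, r < s := by
  obtain ⟨n, hn⟩ : ∃ n, x.get n ≠ y.get n := by
    by_contra! h
    exact hxy.ne (Stream'.ext h)
  filter_upwards [eventually_ge_atTop n] with k hk r hr s hs
  exact hP.lt_of_get_ne hκ hord hxy hn hk hr hs

theorem cons_mem_itineraries_of_mem_Icc {J : {J // J ∈ P}}
    (hx : Stream'.cons J x ∈ itineraries f P) (hy : Stream'.cons J y ∈ itineraries f P)
    (hz : z ∈ itineraries f P) (hzxy : z ∈ Icc x y) : Stream'.cons J z ∈ itineraries f P := by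
  rcases hzxy.1.eq_or_lt with rfl | hxz
  · exact hx
  rcases hzxy.2.eq_or_lt with rfl | hzy
  · exact hy
  intro k
  obtain ⟨l, hlx, hly, hkl⟩ := ((hP.eventually_lt hκ hord hxz).and
    ((hP.eventually_lt hκ hord hzy).and (eventually_ge_atTop k))).exists
  obtain ⟨r, hr⟩ := hx (l + 1)
  obtain ⟨s, hs⟩ := hy (l + 1)
  obtain ⟨q, hq⟩ := hz l
  obtain ⟨hrJ, hfr⟩ := mem_geomCylinder_succ_iff.1 hr
  obtain ⟨hsJ, hfs⟩ := mem_geomCylinder_succ_iff.1 hs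
  obtain ⟨p, hp, rfl⟩ := (hP.ordConnected J.2).isPreconnected.intermediate_value hrJ hsJ
    (hP.continuousOn J.2) ⟨(hlx _ hfr q hq).le, (hly q hq _ hfs).le⟩
  exact ⟨p, antitone_geomCylinder _ (hkl.trans l.le_succ) (mem_geomCylinder_succ_iff.2 ⟨hp, hq⟩)⟩

theorem isOrderedShift_itineraries_of_isTwistedOrder : IsOrderedShift (itineraries f P) where
  ordConnected_head := hord.ordConnected_head (hP.injective_of_mem hκ)
  strictMono_or_strictAnti_cons := hord.strictMono_or_strictAnti_cons
  mapsTo_tail := mapsTo_tail_itineraries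
  cons_mem hx hy hz hzxy := (mem_uIcc.1 hzxy).elim
    (hP.cons_mem_itineraries_of_mem_Icc hκ hord hx hy hz)
    (hP.cons_mem_itineraries_of_mem_Icc hκ hord hy hx hz)

end TwistedOrder

theorem exists_isOrderedShift_itineraries :
    ∃ _ : LinearOrder (Stream' {J // J ∈ P}), IsOrderedShift (itineraries f P) := by
  choose κ hκ using fun J : {J // J ∈ P} => hP.nonempty J.2
  obtain ⟨ord, hord⟩ := exists_isTwistedOrder (hP.injective_of_mem hκ) {J | StrictMonoOn f J.1}
  exact ⟨ord, hP.isOrderedShift_itineraries_of_isTwistedOrder hκ hord⟩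

theorem hC_symbolic_eq_zero : hC (symbolic f P) = 0 := by
  obtain ⟨_, hord⟩ := hP.exists_isOrderedShift_itineraries
  exact symbolic_eq_bilateral f P ▸ hord.hC_bilateral_eq_zero

end IsMonotonePartition

end PiecewiseMonotonic

theorem piecewiseMonotonic_qft_general {f : ℝ → ℝ} {P : Finset (Set ℝ)}
    (hP : IsMonotonePartition f P) (hpos : 0 < hTop (symbolic f P)) :
    hC (symbolic f P) = 0 ∧
    (letI : TopologicalSpace {J // J ∈ P} := ⊥
     IsQFT (symbolic f P)) :=
  ⟨hP.hC_symbolic_eq_zero, isSubshift_symbolic f P,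
    (min_le_left _ _).trans_lt (hP.hC_symbolic_eq_zero ▸ hpos)⟩

/-- If `f : I → I` is a piecewise monotonic map of a compact
interval whose symbolic dynamics `Σ(f)` has positive topological entropy, then
`Σ(f)` is a subshift of quasi-finite type; indeed `h_𝒞(Σ(f)) = 0`. -/
theorem piecewiseMonotonic_qft
    (a b : ℝ) (hab : a < b) (f : ℝ → ℝ)
    (hmaps : Set.MapsTo f (Set.Icc a b) (Set.Icc a b))
    (hpm : IsPiecewiseMonotonic f (Set.Icc a b))
    (P : Finset (Set ℝ)) (hP : IsNaturalPartition f (Set.Icc a b) P)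
    (hpos : 0 < hTop (symbolic f P)) :
    hC (symbolic f P) = 0 ∧
    (letI : TopologicalSpace {J // J ∈ P} := ⊥
     IsQFT (symbolic f P)) :=
  piecewiseMonotonic_qft_general hP.isMonotonePartition hpos

end QFTPaper
end

section
/- For every real number h ∈ (0,∞) there exists a subshift of quasi-finite type Σ with h_top(Σ) = h. Consequently there are uncountably many topological conjugacy classes of subshifts of quasi-finite type. -/
open Filter Set MeasureTheory

namespace QFTPaper

variable {A : Type*} {B : Type*}

/-!
The beta-shift of base `β > 1` has entropy `log β`: by Rényi's argument it has between `β ^ n` and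
`β / (β - 1) * β ^ n` words of length `n`. Its left constraints of length at least two are prefixes
of the greedy expansion of `1` in base `β`, so there is at most one of each length and the left
constraint entropy vanishes. Hence `β = exp h` gives a shift of quasi-finite type of entropy `h`.
A continuous factor map is a sliding block code and cannot raise the entropy; distinct values of
`h` therefore give non-conjugate shifts.
-/

/-! ### Words and entropy -/

section Words

/-- The word of length `n` read off from `x` at the positions `k, …, k + n - 1`. -/
def factor (x : ℤ → A) (k : ℤ) (n : ℕ) : List A :=
  List.ofFn fun i : Fin n => x (k + (i : ℕ))

lemma length_factor (x : ℤ → A) (k : ℤ) (n : ℕ) : (factor x k n).length = n :=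
  List.length_ofFn

lemma factor_succ (x : ℤ → A) (k : ℤ) (n : ℕ) :
    factor x k (n + 1) = x k :: factor x (k + 1) n := by
  simp [factor, List.ofFn_succ, add_assoc, add_comm (1 : ℤ)]

lemma factor_add (x : ℤ → A) (k : ℤ) (m n : ℕ) :
    factor x k (m + n) = factor x k m ++ factor x (k + m) n := by
  simp [factor, List.ofFn_add, add_assoc]

lemma factor_eq_factor_iff {x y : ℤ → A} {k l : ℤ} {n : ℕ} :
    factor x k n = factor y l n ↔ ∀ i < n, x (k + (i : ℕ)) = y (l + (i : ℕ)) := by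
  simp only [factor, List.ofFn_inj, funext_iff, Fin.forall_iff]

lemma occursAt_iff_factor_eq {w : List A} {x : ℤ → A} {k : ℤ} :
    OccursAt w x k ↔ factor x k w.length = w := by
  conv_rhs => rhs; rw [← List.ofFn_get w]
  simp only [OccursAt, factor, List.ofFn_inj, funext_iff]

lemma mem_fol_iff {X : Set (ℤ → A)} {w : List A} {y : ℕ → A} :
    y ∈ fol X w ↔
      ∃ x ∈ X, factor x 0 w.length = w ∧ ∀ k : ℕ, y k = x ((w.length : ℤ) - 1 + k) := by
  simp only [← occursAt_iff_factor_eq, OccursAt, zero_add]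
  rfl

lemma shift_iterate_apply (m : ℕ) (x : ℤ → A) (k : ℤ) : shift^[m] x k = x (k + m) := by
  induction m generalizing x with
  | zero => simp
  | succ m ih => rw [Function.iterate_succ_apply, ih, shift, Nat.cast_succ, add_assoc]

lemma lang_eq_image_factor (X : Set (ℤ → A)) (n : ℕ) :
    Lang X n = (factor · 0 n) '' X := by
  ext w
  simp only [Lang, occursAt_iff_factor_eq, mem_image]
  constructor
  · rintro ⟨rfl, x, hx, hw⟩
    exact ⟨x, hx, hw⟩
  · rintro ⟨x, hx, rfl⟩
    exact ⟨length_factor x 0 n, x, hx, by rw [length_factor]⟩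

lemma lang_eq_image_factor_of_shift_image_eq {X : Set (ℤ → A)} (hX : shift '' X = X)
    (k n : ℕ) : Lang X n = (factor · k n) '' X := by
  have hk : shift^[k] '' X = X := by
    rw [image_iterate_eq]
    exact Function.iterate_fixed hX k
  rw [lang_eq_image_factor]
  conv_lhs => rw [← hk, image_image]
  simp only [factor, shift_iterate_apply, zero_add, add_comm (k : ℤ)]

lemma finite_lang [Finite A] (X : Set (ℤ → A)) (n : ℕ) : (Lang X n).Finite :=
  (List.finite_length_eq A n).subset fun _ hw => hw.1

lemma card_lang_add_le [Finite A] {X : Set (ℤ → A)} (hX : shift '' X = X) (m n : ℕ) :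
    Nat.card (Lang X (m + n)) ≤ Nat.card (Lang X m) * Nat.card (Lang X n) := by
  have hsub : Lang X (m + n) ⊆ (fun p => p.1 ++ p.2) '' (Lang X m ×ˢ Lang X n) := by
    rw [lang_eq_image_factor X (m + n)]
    rintro _ ⟨x, hx, rfl⟩
    refine ⟨(factor x 0 m, factor x m n), ⟨?_, ?_⟩, ?_⟩
    · rw [lang_eq_image_factor]
      exact mem_image_of_mem _ hx
    · rw [lang_eq_image_factor_of_shift_image_eq hX m]
      exact mem_image_of_mem _ hx
    · simp only [factor_add, zero_add]
  have hfin := (finite_lang X m).prod (finite_lang X n)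
  simp only [Nat.card_coe_set_eq, ← ncard_prod]
  exact (ncard_le_ncard hsub (hfin.image _)).trans (ncard_image_le hfin)

lemma log_natCast_le_log_add_log {k m n : ℕ} (h : k ≤ m * n) :
    Real.log k ≤ Real.log m + Real.log n := by
  rcases k.eq_zero_or_pos with rfl | hk
  · rw [Nat.cast_zero, Real.log_zero]
    exact add_nonneg (Real.log_natCast_nonneg m) (Real.log_natCast_nonneg n)
  · have hmn := Nat.mul_ne_zero_iff.1 (hk.trans_le h).ne'
    rw [← Real.log_mul (Nat.cast_ne_zero.2 hmn.1) (Nat.cast_ne_zero.2 hmn.2)]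
    exact Real.log_le_log (Nat.cast_pos.2 hk) (mod_cast h)

lemma subadditive_log_card_lang [Finite A] {X : Set (ℤ → A)} (hX : shift '' X = X) :
    Subadditive fun n => Real.log (Nat.card (Lang X n)) :=
  fun m n => log_natCast_le_log_add_log (card_lang_add_le hX m n)

lemma tendsto_log_card_lang_div [Finite A] {X : Set (ℤ → A)} (hX : shift '' X = X) :
    Tendsto (fun n : ℕ => Real.log (Nat.card (Lang X n)) / n) atTop (nhds (hTop X)) := by
  have hlim := (subadditive_log_card_lang hX).tendsto_lim
    ⟨0, forall_mem_range.2 fun n => div_nonneg (Real.log_natCast_nonneg _) n.cast_nonneg⟩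
  rwa [hTop, hlim.limsup_eq]

lemma hTop_eq_log_of_card_lang_bounds {X : Set (ℤ → A)} {β C : ℝ} (hβ : 0 < β)
    (hlower : ∀ n, β ^ n ≤ Nat.card (Lang X n))
    (hupper : ∀ n, Nat.card (Lang X n) ≤ C * β ^ n) : hTop X = Real.log β := by
  have hpow (n : ℕ) : 0 < β ^ n := pow_pos hβ n
  have hC : 0 < C := by simpa using (hpow 0).trans_le ((hlower 0).trans (hupper 0))
  have hlim : Tendsto (fun n : ℕ => Real.log C / n + Real.log β) atTop (nhds (Real.log β)) := by
    simpa using (tendsto_const_div_atTop_nhds_zero_nat (Real.log C)).add_const (Real.log β)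
  refine (tendsto_of_tendsto_of_tendsto_of_le_of_le' tendsto_const_nhds hlim ?_ ?_).limsup_eq
  · filter_upwards [eventually_gt_atTop 0] with n hn
    rw [le_div_iff₀ (Nat.cast_pos.2 hn), mul_comm, ← Real.log_pow]
    exact Real.log_le_log (hpow n) (hlower n)
  · filter_upwards [eventually_gt_atTop 0] with n hn
    have hn' : (0 : ℝ) < n := Nat.cast_pos.2 hn
    rw [div_add' _ _ _ hn'.ne', mul_comm (Real.log β), ← Real.log_pow,
      ← Real.log_mul hC.ne' (hpow n).ne']
    gcongr
    exacts [(hpow n).trans_le (hlower n), hupper n]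

lemma hC_eq_zero_of_eventually_subsingleton {X : Set (ℤ → A)}
    (hX : ∀ᶠ n in atTop, (LC X n).Subsingleton) : hC X = 0 := by
  refine (tendsto_const_nhds.congr' ?_).limsup_eq
  filter_upwards [hX] with n hn
  have : Subsingleton (LC X n) := hn.coe_sort
  have hcard : (Nat.card (LC X n) : ℝ) ≤ 1 :=
    mod_cast Finite.card_le_one_iff_subsingleton.2 this
  rw [max_eq_left (Real.log_nonpos (Nat.cast_nonneg _) hcard), zero_div]

end Words

/-! ### Entropy is an invariant of conjugacy -/

section FactorMap

lemma exists_finite_eqOn_imp_eq {ι : Type*} [TopologicalSpace A] [DiscreteTopology A]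
    [TopologicalSpace B] [DiscreteTopology B] {X : Set (ι → A)} (hX : IsCompact X)
    {f : X → B} (hf : Continuous f) :
    ∃ I : Set ι, I.Finite ∧ ∀ x x' : X, EqOn x.1 x'.1 I → f x = f x' := by
  obtain rfl := DiscreteTopology.eq_bot (α := A)
  obtain rfl := DiscreteTopology.eq_bot (α := B)
  let _ : UniformSpace A := ⊥
  let _ : UniformSpace B := ⊥
  have : CompactSpace X := isCompact_iff_compactSpace.1 hX
  have hunif := CompactSpace.uniformContinuous_of_continuous hf
  have hmem : {p : X × X | f p.1 = f p.2} ∈ uniformity X :=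
    hunif (DiscreteUniformity.relId_mem_uniformity B)
  simp only [uniformity_subtype, Pi.uniformity, comap_iInf,
    DiscreteUniformity.eq_principal_setRelId, comap_principal] at hmem
  obtain ⟨I, hI, hsub⟩ := (hasBasis_iInf_principal_finite _).mem_iff.1 hmem
  exact ⟨I, hI, fun x x' h => hsub (mem_iInter₂.2 fun i hi => h hi : (x, x') ∈ _)⟩

lemma ncard_range_le_of_factorsThrough {α β γ : Type*} {f : α → β} {g : α → γ}
    (hf : (range f).Finite) (h : g.FactorsThrough f) : (range g).ncard ≤ (range f).ncard := by
  rcases isEmpty_or_nonempty α with _ | ⟨⟨a⟩⟩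
  · simp only [range_eq_empty, ncard_empty, le_refl]
  · rw [← h.extend_comp fun _ => g a, range_comp]
    exact ncard_image_le hf

variable {X : Set (ℤ → A)} {Y : Set (ℤ → B)}

lemma shift_iterate_mem (hX : shift '' X = X) (m : ℕ) {x : ℤ → A} (hx : x ∈ X) :
    shift^[m] x ∈ X :=
  (mapsTo_iff_image_subset.2 hX.subset).iterate m hx

lemma map_shift_iterate (hX : shift '' X = X) {π : X → Y}
    (hπ : ∀ x x' : X, x'.1 = shift x.1 → (π x').1 = shift (π x).1) (m : ℕ) {x x' : X}
    (hx' : x'.1 = shift^[m] x.1) : (π x').1 = shift^[m] (π x).1 := by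
  induction m generalizing x' with
  | zero => rw [Subtype.ext hx']; rfl
  | succ m ih =>
    rw [Function.iterate_succ_apply'] at hx' ⊢
    rw [hπ ⟨_, shift_iterate_mem hX m x.2⟩ x' hx', ih rfl]

variable [TopologicalSpace A] [TopologicalSpace B]

/-- The block code of the Curtis–Hedlund–Lyndon theorem, with memory and anticipation `r`. -/
lemma exists_factor_eq_imp_factor_map_eq [Finite A] [DiscreteTopology A] [DiscreteTopology B]
    (hX : IsSubshift X) {π : X → Y} (hcont : Continuous π)
    (hπ : ∀ x x' : X, x'.1 = shift x.1 → (π x').1 = shift (π x).1) :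
    ∃ r : ℕ, ∀ (n : ℕ) (x x' : X), factor x.1 0 (n + 2 * r) = factor x'.1 0 (n + 2 * r) →
      factor (π x).1 r n = factor (π x').1 r n := by
  obtain ⟨I, hI, hwindow⟩ := exists_finite_eqOn_imp_eq hX.1.isCompact
    ((continuous_apply (0 : ℤ)).comp (continuous_subtype_val.comp hcont))
  obtain ⟨r, hr⟩ := (hI.image Int.natAbs).bddAbove
  refine ⟨r, fun n x x' hxx' => factor_eq_factor_iff.2 fun i hi => ?_⟩
  have hmem (z : X) : shift^[r + i] z.1 ∈ X := shift_iterate_mem hX.2 (r + i) z.2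
  have hcode (z : X) : (π z).1 (r + i) = (π ⟨_, hmem z⟩).1 0 := by
    rw [map_shift_iterate hX.2 hπ (r + i) (x' := ⟨_, hmem z⟩) rfl, shift_iterate_apply,
      zero_add, Nat.cast_add]
  rw [hcode, hcode]
  refine hwindow ⟨_, hmem x⟩ ⟨_, hmem x'⟩ fun j hj => ?_
  have hjr : j.natAbs ≤ r := hr (mem_image_of_mem _ hj)
  have hletter := factor_eq_factor_iff.1 hxx' (j + (r + i : ℕ)).toNat (by omega)
  rw [Int.toNat_of_nonneg (by omega), zero_add] at hletter
  simpa only [shift_iterate_apply] using hletter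

theorem hTop_le_of_factorMap [Finite A] [Finite B] [DiscreteTopology A] [DiscreteTopology B]
    (hX : IsSubshift X) (hY : shift '' Y = Y) {π : X → Y} (hcont : Continuous π)
    (hsurj : Function.Surjective π)
    (hπ : ∀ x x' : X, x'.1 = shift x.1 → (π x').1 = shift (π x).1) : hTop Y ≤ hTop X := by
  obtain ⟨r, hr⟩ := exists_factor_eq_imp_factor_map_eq hX hcont hπ
  have hcard (n : ℕ) : Nat.card (Lang Y n) ≤ Nat.card (Lang X (n + 2 * r)) := by
    have hlangX : Lang X (n + 2 * r) = range fun x : X => factor x.1 0 (n + 2 * r) := by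
      rw [lang_eq_image_factor, image_eq_range]
    have hlangY : Lang Y n = range fun x : X => factor (π x).1 r n := by
      rw [lang_eq_image_factor_of_shift_image_eq hY r, image_eq_range]
      exact (hsurj.range_comp fun y : Y => factor y.1 r n).symm
    rw [Nat.card_coe_set_eq, Nat.card_coe_set_eq, hlangX, hlangY]
    exact ncard_range_le_of_factorsThrough (hlangX ▸ finite_lang X _) fun x x' => hr n x x'
  have hlog (n : ℕ) : Real.log (Nat.card (Lang Y n)) ≤
      Real.log (Nat.card (Lang X n)) + Real.log (Nat.card (Lang X (2 * r))) :=
    log_natCast_le_log_add_log ((hcard n).trans (card_lang_add_le hX.2 n (2 * r)))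
  have hlim := (tendsto_log_card_lang_div hX.2).add
    (tendsto_const_div_atTop_nhds_zero_nat (Real.log (Nat.card (Lang X (2 * r)))))
  rw [add_zero] at hlim
  refine le_of_tendsto_of_tendsto' (tendsto_log_card_lang_div hY) hlim fun n => ?_
  rw [← add_div]
  exact div_le_div_of_nonneg_right (hlog n) n.cast_nonneg

lemma Conjugate.symm (hX : shift '' X = X) (h : Conjugate X Y) : Conjugate Y X := by
  obtain ⟨φ, hφ⟩ := h
  refine ⟨φ.symm, fun y y' hy => ?_⟩
  have hmem : shift (φ.symm y).1 ∈ X := hX.subset (mem_image_of_mem _ (φ.symm y).2)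
  have hshift : φ ⟨_, hmem⟩ = y' := Subtype.ext <| by
    rw [hφ (φ.symm y) ⟨_, hmem⟩ rfl, φ.apply_symm_apply, hy]
  rw [← hshift, φ.symm_apply_apply]

theorem Conjugate.hTop_eq [Finite A] [Finite B] [DiscreteTopology A] [DiscreteTopology B]
    (hX : IsSubshift X) (hY : IsSubshift Y) (h : Conjugate X Y) : hTop X = hTop Y := by
  obtain ⟨ψ, hψ⟩ := h.symm hX.2
  obtain ⟨φ, hφ⟩ := h
  exact le_antisymm (hTop_le_of_factorMap hY hX.2 ψ.continuous ψ.surjective hψ)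
    (hTop_le_of_factorMap hX hY.2 φ.continuous φ.surjective hφ)

end FactorMap

/-! ### Beta-shifts -/

section BetaShift

variable {b : ℕ} {β : ℝ}

/-- The value `∑ i, wᵢ β^(-(i + 1))` of a word of digits in base `β`. -/
noncomputable def value (β : ℝ) : List (Fin (b + 1)) → ℝ
  | [] => 0
  | c :: w => ((c : ℕ) + value β w) / β

/-- A word is admissible if all its suffixes have value at most one. These are the words of the
beta-shift: the bound passes to all factors, as appending letters never decreases the value. -/
def Admissible (β : ℝ) (w : List (Fin (b + 1))) : Prop :=
  ∀ v, v <:+ w → value β v ≤ 1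

/-- The beta-shift with digits `0, …, b`, encoded by bounding the values of all finite words
instead of comparing infinite sequences with the expansion of `1` lexicographically. -/
def betaShift (b : ℕ) (β : ℝ) : Set (ℤ → Fin (b + 1)) :=
  {x | ∀ k n, value β (factor x k n) ≤ 1}

lemma value_nonneg (hβ : 0 ≤ β) (w : List (Fin (b + 1))) : 0 ≤ value β w := by
  induction w with
  | nil => exact le_rfl
  | cons c w ih => exact div_nonneg (add_nonneg (Nat.cast_nonneg _) ih) hβ

lemma value_le_value_append (hβ : 0 ≤ β) (w u : List (Fin (b + 1))) :
    value β w ≤ value β (w ++ u) := by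
  induction w with
  | nil => exact value_nonneg hβ u
  | cons c w ih =>
    simp only [List.cons_append, value]
    gcongr

lemma value_cons_le_iff (hβ : 0 < β) {c : Fin (b + 1)} {w : List (Fin (b + 1))} {t : ℝ} :
    value β (c :: w) ≤ t ↔ value β w ≤ β * t - (c : ℕ) := by
  rw [value, div_le_iff₀ hβ, le_sub_iff_add_le', mul_comm t]

lemma Admissible.value_le_one {w : List (Fin (b + 1))} (hw : Admissible β w) : value β w ≤ 1 :=
  hw w List.suffix_rfl

lemma admissible_nil : Admissible β ([] : List (Fin (b + 1))) := fun v hv => by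
  rw [List.suffix_nil.1 hv]
  exact zero_le_one

lemma admissible_cons {c : Fin (b + 1)} {w : List (Fin (b + 1))} :
    Admissible β (c :: w) ↔ value β (c :: w) ≤ 1 ∧ Admissible β w := by
  simp only [Admissible, List.suffix_cons_iff, forall_eq_or_imp]

lemma Admissible.tail {w : List (Fin (b + 1))} (hw : Admissible β w) : Admissible β w.tail :=
  fun v hv => hw v (hv.trans (List.tail_suffix w))

lemma admissible_factor {x : ℤ → Fin (b + 1)} (hx : x ∈ betaShift b β) (k : ℤ) (n : ℕ) :
    Admissible β (factor x k n) := by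
  induction n generalizing k with
  | zero => exact admissible_nil
  | succ n ih =>
    have hvalue := hx k (n + 1)
    rw [factor_succ] at hvalue ⊢
    exact admissible_cons.2 ⟨hvalue, ih (k + 1)⟩

lemma continuous_value_factor (β : ℝ) (k : ℤ) (n : ℕ) :
    Continuous fun x : ℤ → Fin (b + 1) => value β (factor x k n) := by
  induction n generalizing k with
  | zero => exact continuous_const
  | succ n ih =>
    simp only [factor_succ, value]
    have hdigit : Continuous fun c : Fin (b + 1) => ((c : ℕ) : ℝ) :=
      continuous_of_discreteTopology
    exact ((hdigit.comp (continuous_apply k)).add (ih _)).div_const β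

lemma isSubshift_betaShift (b : ℕ) (β : ℝ) : IsSubshift (betaShift b β) := by
  constructor
  · simp only [betaShift, ofPred_forall]
    exact isClosed_iInter fun k => isClosed_iInter fun n =>
      isClosed_le (continuous_value_factor β k n) continuous_const
  · apply Subset.antisymm
    · rintro _ ⟨x, hx, rfl⟩ k n
      have hfactor : factor (shift x) k n = factor x (k + 1) n :=
        factor_eq_factor_iff.2 fun i _ => by rw [shift, add_right_comm]
      exact hfactor ▸ hx (k + 1) n
    · intro x hx
      refine ⟨fun k => x (k - 1), fun k n => ?_, funext fun k => by simp only [shift,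
        add_sub_cancel_right]⟩
      have hfactor : factor (fun k => x (k - 1)) k n = factor x (k - 1) n :=
        factor_eq_factor_iff.2 fun i _ => by rw [sub_add_eq_add_sub]
      exact hfactor ▸ hx (k - 1) n

/-- The sequence `…000cx₀x₁x₂…`, whose letter at position `0` is `c`; it serves to extend
one-sided sequences to the left inside the beta-shift. -/
def prepend [Zero A] (c : A) (x : ℤ → A) : ℤ → A
  | .ofNat 0 => c
  | .ofNat (n + 1) => x n
  | .negSucc _ => 0

lemma prepend_add_one [Zero A] (c : A) (x : ℤ → A) (n : ℕ) :
    prepend c x (n + 1) = x n := rfl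

lemma factor_prepend_add_one [Zero A] (c : A) (x : ℤ → A) (k n : ℕ) :
    factor (prepend c x) (k + 1) n = factor x k n :=
  factor_eq_factor_iff.2 fun i _ => by
    rw [add_right_comm, ← Nat.cast_add, prepend_add_one]

lemma factor_prepend_zero_succ [Zero A] (c : A) (x : ℤ → A) (n : ℕ) :
    factor (prepend c x) 0 (n + 1) = c :: factor x 0 n := by
  rw [factor_succ]
  exact congrArg (c :: ·) (factor_prepend_add_one c x 0 n)

lemma prepend_mem_betaShift (hβ : 1 ≤ β) {c : Fin (b + 1)} {x : ℤ → Fin (b + 1)}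
    (hx : x ∈ betaShift b β) (hc : ∀ n, value β (c :: factor x 0 n) ≤ 1) :
    prepend c x ∈ betaShift b β := by
  have hneg (m n : ℕ) : value β (factor (prepend c x) (-m) n) ≤ 1 := by
    induction m generalizing n with
    | zero =>
      cases n with
      | zero => exact zero_le_one
      | succ n => exact (factor_prepend_zero_succ c x n).symm ▸ hc n
    | succ m ih =>
      cases n with
      | zero => exact zero_le_one
      | succ n =>
        have hletter : prepend c x (-((m + 1 : ℕ) : ℤ)) = 0 := rfl
        have hpos : -((m + 1 : ℕ) : ℤ) + 1 = -m := by push_cast; ring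
        rw [factor_succ, hletter, hpos, value_cons_le_iff (zero_lt_one.trans_le hβ), mul_one,
          Fin.val_zero, Nat.cast_zero, sub_zero]
        exact (ih n).trans hβ
  rintro ((_ | k) | k) n
  · exact hneg 0 n
  · exact (factor_prepend_add_one c x k n).symm ▸ hx k n
  · exact hneg (k + 1) n

/-- The sequence continues `w` by zeros, which adds nothing to its value. -/
lemma Admissible.exists_mem_betaShift (hβ : 1 ≤ β) {w : List (Fin (b + 1))}
    (hw : Admissible β w) :
    ∃ x ∈ betaShift b β, factor x 0 w.length = w ∧ ∀ n, value β (factor x 0 n) ≤ value β w := by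
  have hβ0 := zero_le_one.trans hβ
  induction w with
  | nil =>
    have hzero (k : ℤ) (n : ℕ) : value β (factor (fun _ => (0 : Fin (b + 1))) k n) = 0 := by
      induction n generalizing k with
      | zero => rfl
      | succ n ih => simp [factor_succ, value, ih]
    exact ⟨fun _ => 0, fun k n => (hzero k n).trans_le zero_le_one, rfl,
      fun n => (hzero 0 n).le⟩
  | cons c w ih =>
    obtain ⟨hcw, hw⟩ := admissible_cons.1 hw
    obtain ⟨x, hx, hxw, hle⟩ := ih hw
    have hcons (n : ℕ) : value β (c :: factor x 0 n) ≤ value β (c :: w) := by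
      simp only [value]
      gcongr
      exact hle n
    refine ⟨prepend c x, prepend_mem_betaShift hβ hx fun n => (hcons n).trans hcw, ?_, ?_⟩
    · rw [List.length_cons, factor_prepend_zero_succ, hxw]
    · rintro (_ | n)
      · exact value_nonneg hβ0 _
      · exact (factor_prepend_zero_succ c x n).symm ▸ hcons n

lemma lang_betaShift (hβ : 1 ≤ β) (n : ℕ) :
    Lang (betaShift b β) n = {w | w.length = n ∧ Admissible β w} := by
  ext w
  rw [lang_eq_image_factor]
  constructor
  · rintro ⟨x, hx, rfl⟩
    exact ⟨length_factor x 0 n, admissible_factor hx 0 n⟩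
  · rintro ⟨rfl, hw⟩
    obtain ⟨x, hx, hxw, -⟩ := hw.exists_mem_betaShift hβ
    exact ⟨x, hx, hxw⟩

/-- The number of admissible words of length `n` with value at most `t`. -/
noncomputable def numAdmissible (b : ℕ) (β : ℝ) (n : ℕ) (t : ℝ) : ℕ :=
  {w : List (Fin (b + 1)) | w.length = n ∧ Admissible β w ∧ value β w ≤ t}.ncard

lemma card_lang_betaShift (hβ : 1 ≤ β) (n : ℕ) :
    Nat.card (Lang (betaShift b β) n) = numAdmissible b β n 1 := by
  rw [lang_betaShift hβ, Nat.card_coe_set_eq, numAdmissible]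
  congr! 4 with w
  exact (and_iff_left_of_imp Admissible.value_le_one).symm

lemma numAdmissible_of_neg (hβ : 0 ≤ β) (n : ℕ) {t : ℝ} (ht : t < 0) :
    numAdmissible b β n t = 0 := by
  have hempty : {w : List (Fin (b + 1)) | w.length = n ∧ Admissible β w ∧ value β w ≤ t} = ∅ :=
    eq_empty_of_forall_notMem fun w hw => (hw.2.2.trans_lt ht).not_ge (value_nonneg hβ w)
  rw [numAdmissible, hempty, ncard_empty]

lemma numAdmissible_of_one_le (n : ℕ) {t : ℝ} (ht : 1 ≤ t) :
    numAdmissible b β n t = numAdmissible b β n 1 := by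
  simp only [numAdmissible]
  congr! 4 with w
  exact and_congr_right fun hw =>
    iff_of_true (hw.value_le_one.trans ht) hw.value_le_one

lemma numAdmissible_zero {t : ℝ} (ht : 0 ≤ t) : numAdmissible b β 0 t = 1 := by
  rw [numAdmissible, ncard_eq_one]
  refine ⟨[], Subset.antisymm ?_ (singleton_subset_iff.2 ⟨rfl, admissible_nil, ht⟩)⟩
  exact fun w hw => List.length_eq_zero_iff.1 hw.1

lemma numAdmissible_succ (hβ : 0 < β) (n : ℕ) {t : ℝ} (ht : t ≤ 1) :
    numAdmissible b β (n + 1) t =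
      ∑ c : Fin (b + 1), numAdmissible b β n (β * t - (c : ℕ)) := by
  have hcons (c : Fin (b + 1)) (w : List (Fin (b + 1))) :
      ((c :: w).length = n + 1 ∧ Admissible β (c :: w) ∧ value β (c :: w) ≤ t) ↔
        w.length = n ∧ Admissible β w ∧ value β w ≤ β * t - (c : ℕ) := by
    rw [List.length_cons, Nat.add_right_cancel_iff, admissible_cons, ← value_cons_le_iff hβ]
    exact and_congr_right fun _ =>
      ⟨fun h => ⟨h.1.2, h.2⟩, fun h => ⟨⟨h.2.trans ht, h.1⟩, h.2⟩⟩
  have hunion : {w : List (Fin (b + 1)) | w.length = n + 1 ∧ Admissible β w ∧ value β w ≤ t} =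
      ⋃ c : Fin (b + 1), (c :: ·) ''
        {w | w.length = n ∧ Admissible β w ∧ value β w ≤ β * t - (c : ℕ)} := by
    ext w
    cases w with
    | nil => simp
    | cons c w => simp [← hcons]
  have hfinite (s : ℝ) :
      {w : List (Fin (b + 1)) | w.length = n ∧ Admissible β w ∧ value β w ≤ s}.Finite :=
    (List.finite_length_eq _ n).subset fun _ hw => hw.1
  rw [numAdmissible, hunion, ncard_iUnion_of_finite fun c => (hfinite _).image _]
  · simp only [finsum_eq_sum_of_fintype, ncard_image_of_injective _ List.cons_injective,
      numAdmissible]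
  · rintro c d hcd
    refine disjoint_left.2 ?_
    rintro _ ⟨v, -, rfl⟩ ⟨v', -, h⟩
    exact hcd (List.cons.inj h).1.symm

/-- With first digit `c < ⌊β t⌋` the rest of the word is unrestricted, and `c = ⌊β t⌋` leaves the
fractional part of `β t` as bound for the rest. -/
lemma numAdmissible_succ_eq_floor (hβ : 0 < β) (hb : β < b + 1) (n : ℕ) {t : ℝ} (h0 : 0 ≤ t)
    (h1 : t ≤ 1) :
    numAdmissible b β (n + 1) t =
      ⌊β * t⌋₊ * numAdmissible b β n 1 + numAdmissible b β n (β * t - ⌊β * t⌋₊) := by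
  have hβt : 0 ≤ β * t := mul_nonneg hβ.le h0
  have hfloor : ⌊β * t⌋₊ < b + 1 := by
    rw [Nat.floor_lt hβt, Nat.cast_add_one]
    exact (mul_le_of_le_one_right hβ.le h1).trans_lt hb
  have hsmall : ∀ c ∈ Finset.range ⌊β * t⌋₊,
      numAdmissible b β n (β * t - c) = numAdmissible b β n 1 := fun c hc => by
    have hc' : ((c + 1 : ℕ) : ℝ) ≤ β * t := (Nat.le_floor_iff hβt).1 (Finset.mem_range.1 hc)
    exact numAdmissible_of_one_le n (by rw [Nat.cast_add_one] at hc'; linarith)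
  have hlarge : ∀ c ∈ Finset.range (b + 1), c ∉ Finset.range (⌊β * t⌋₊ + 1) →
      numAdmissible b β n (β * t - c) = 0 := fun c _ hc => by
    have hc' : β * t < c := (Nat.floor_lt hβt).1 (by simpa [Nat.succ_le_iff] using hc)
    exact numAdmissible_of_neg hβ.le n (sub_neg.2 hc')
  rw [numAdmissible_succ hβ n h1,
    Fin.sum_univ_eq_sum_range (fun c => numAdmissible b β n (β * t - c)),
    ← Finset.sum_subset (Finset.range_subset_range.2 hfloor) hlarge, Finset.sum_range_succ,
    Finset.sum_congr rfl hsmall, Finset.sum_const, Finset.card_range, smul_eq_mul]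

lemma le_numAdmissible (hβ : 0 < β) (hb : β < b + 1) (n : ℕ) {t : ℝ} (h0 : 0 ≤ t)
    (h1 : t ≤ 1) : β ^ n * t ≤ numAdmissible b β n t := by
  induction n generalizing t with
  | zero => simpa [numAdmissible_zero h0] using h1
  | succ n ih =>
    have hfract0 : 0 ≤ β * t - ⌊β * t⌋₊ := sub_nonneg.2 (Nat.floor_le (by positivity))
    have hfract1 : β * t - ⌊β * t⌋₊ ≤ 1 := by linarith [Nat.lt_floor_add_one (β * t)]
    rw [numAdmissible_succ_eq_floor hβ hb n h0 h1, Nat.cast_add, Nat.cast_mul]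
    calc β ^ (n + 1) * t = ⌊β * t⌋₊ * (β ^ n * 1) + β ^ n * (β * t - ⌊β * t⌋₊) := by ring
      _ ≤ ⌊β * t⌋₊ * numAdmissible b β n 1 + numAdmissible b β n (β * t - ⌊β * t⌋₊) := by
        gcongr
        exacts [ih zero_le_one le_rfl, ih hfract0 hfract1]

lemma numAdmissible_le (hβ : 0 < β) (hb : β < b + 1) (n : ℕ) {t : ℝ} (h0 : 0 ≤ t)
    (h1 : t ≤ 1) :
    (numAdmissible b β n t : ℝ) ≤ (∑ i ∈ Finset.range n, β ^ (i + 1)) * t + 1 := by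
  induction n generalizing t with
  | zero => simp [numAdmissible_zero h0]
  | succ n ih =>
    set S := ∑ i ∈ Finset.range n, β ^ (i + 1)
    have hS : ∑ i ∈ Finset.range (n + 1), β ^ (i + 1) = β * (S + 1) := by
      rw [Finset.sum_range_succ', mul_add, Finset.mul_sum]
      simp only [pow_succ' β, pow_zero]
    have hfloor : (⌊β * t⌋₊ : ℝ) ≤ β * t := Nat.floor_le (by positivity)
    have hfract1 : β * t - ⌊β * t⌋₊ ≤ 1 := by linarith [Nat.lt_floor_add_one (β * t)]
    rw [numAdmissible_succ_eq_floor hβ hb n h0 h1, Nat.cast_add, Nat.cast_mul, hS]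
    calc (⌊β * t⌋₊ * numAdmissible b β n 1 + numAdmissible b β n (β * t - ⌊β * t⌋₊) : ℝ)
        ≤ ⌊β * t⌋₊ * (S * 1 + 1) + (S * (β * t - ⌊β * t⌋₊) + 1) := by
          gcongr
          exacts [ih zero_le_one le_rfl, ih (sub_nonneg.2 hfloor) hfract1]
      _ = S * (β * t) + ⌊β * t⌋₊ + 1 := by ring
      _ ≤ S * (β * t) + β * t + 1 := by gcongr
      _ = β * (S + 1) * t + 1 := by ring

lemma numAdmissible_one_le (hβ : 1 < β) (hb : β < b + 1) (n : ℕ) :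
    (numAdmissible b β n 1 : ℝ) ≤ β / (β - 1) * β ^ n := by
  calc (numAdmissible b β n 1 : ℝ) ≤ (∑ i ∈ Finset.range n, β ^ (i + 1)) * 1 + 1 :=
        numAdmissible_le (zero_lt_one.trans hβ) hb n zero_le_one le_rfl
    _ = (β ^ (n + 1) - 1) / (β - 1) := by
        rw [mul_one, ← geom_sum_eq hβ.ne', Finset.sum_range_succ', pow_zero]
    _ ≤ β ^ (n + 1) / (β - 1) := by
        have := sub_pos.2 hβ
        gcongr
        exact sub_le_self _ zero_le_one
    _ = β / (β - 1) * β ^ n := by ring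

theorem hTop_betaShift (hβ : 1 < β) (hb : β < b + 1) : hTop (betaShift b β) = Real.log β := by
  have hβ0 := zero_lt_one.trans hβ
  refine hTop_eq_log_of_card_lang_bounds (C := β / (β - 1)) hβ0 (fun n => ?_) fun n => ?_
  · rw [card_lang_betaShift hβ.le]
    simpa only [mul_one] using le_numAdmissible hβ0 hb n zero_le_one le_rfl
  · rw [card_lang_betaShift hβ.le]
    exact numAdmissible_one_le hβ hb n

/-- A word is a greedy prefix of `t` if its value does not exceed `t` but some continuation of it,
admissible apart from its first letter, exceeds `t`. Such a word is a prefix of the greedy expansion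
of `t` in base `β`. -/
def IsGreedyPrefix (β t : ℝ) (w : List (Fin (b + 1))) : Prop :=
  value β w ≤ t ∧ ∃ u, t < value β (w ++ u) ∧ Admissible β (w ++ u).tail

lemma IsGreedyPrefix.head_eq_floor (hβ : 0 < β) {t : ℝ} {c : Fin (b + 1)}
    {w : List (Fin (b + 1))} (h : IsGreedyPrefix β t (c :: w)) : (c : ℕ) = ⌊β * t⌋₊ := by
  obtain ⟨hle, u, hlt, hadm⟩ := h
  rw [value_cons_le_iff hβ] at hle
  rw [List.cons_append, ← not_le, value_cons_le_iff hβ, not_le] at hlt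
  have hw := value_nonneg hβ.le w
  have hwu : value β (w ++ u) ≤ 1 := hadm.value_le_one
  refine ((Nat.floor_eq_iff ?_).2 ⟨?_, ?_⟩).symm
  · linarith [(Nat.cast_nonneg c : (0 : ℝ) ≤ (c : ℕ))]
  · linarith
  · linarith

lemma IsGreedyPrefix.tail (hβ : 0 < β) {t : ℝ} {c : Fin (b + 1)} {w : List (Fin (b + 1))}
    (h : IsGreedyPrefix β t (c :: w)) : IsGreedyPrefix β (β * t - (c : ℕ)) w := by
  obtain ⟨hle, u, hlt, hadm⟩ := h
  rw [List.cons_append, ← not_le, value_cons_le_iff hβ, not_le] at hlt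
  exact ⟨(value_cons_le_iff hβ).1 hle, u, hlt, hadm.tail⟩

lemma IsGreedyPrefix.eq_of_length_eq (hβ : 0 < β) {t : ℝ} {w w' : List (Fin (b + 1))}
    (hw : IsGreedyPrefix β t w) (hw' : IsGreedyPrefix β t w') (hlen : w.length = w'.length) :
    w = w' := by
  induction w generalizing w' t with
  | nil => exact (List.length_eq_zero_iff.1 hlen.symm).symm
  | cons c w ih =>
    cases w' with
    | nil => exact absurd hlen (Nat.succ_ne_zero _)
    | cons d w' =>
      obtain rfl : c = d := Fin.ext ((hw.head_eq_floor hβ).trans (hw'.head_eq_floor hβ).symm)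
      rw [ih (hw.tail hβ) (hw'.tail hβ) (Nat.succ_injective hlen)]

lemma prepend_mem_fol [Zero A] {X : Set (ℤ → A)} {c : A} {w : List A} (hw : w ≠ [])
    {x : ℤ → A} (hx : prepend c x ∈ X) (hxw : factor x 0 w.length = w) {y : ℕ → A}
    (hy : ∀ k : ℕ, y k = x ((w.length : ℤ) - 1 + k)) : y ∈ fol X (c :: w) := by
  refine mem_fol_iff.2 ⟨prepend c x, hx, ?_, fun k => ?_⟩
  · rw [List.length_cons, factor_prepend_zero_succ, hxw]
  · have hlen := List.length_pos_iff.2 hw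
    have hpos : ((c :: w).length : ℤ) - 1 + k = (w.length - 1 + k : ℕ) + 1 := by
      rw [List.length_cons]
      omega
    rw [hy, hpos, prepend_add_one]
    congr 1
    omega

/-- If prepending `c` never pushed a value above one, then `c` could be put in front of every
sequence following `w`, and `c :: w` would constrain nothing. -/
lemma isGreedyPrefix_one_of_isLeftConstraint (hβ : 1 ≤ β) {c : Fin (b + 1)}
    {w : List (Fin (b + 1))} (hw : w ≠ []) (h : IsLeftConstraint (betaShift b β) (c :: w)) :
    IsGreedyPrefix β 1 (c :: w) := by
  obtain ⟨-, hne, hss⟩ := h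
  obtain ⟨z, hz⟩ := nonempty_iff_ne_empty.2 hne
  obtain ⟨x', hx', hcw, -⟩ := mem_fol_iff.1 hz
  obtain ⟨y, hy, hycw⟩ := exists_of_ssubset hss
  obtain ⟨x, hx, hxw, hyx⟩ := mem_fol_iff.1 hy
  rw [List.tail_cons] at hxw hyx
  obtain ⟨n, hn⟩ : ∃ n, 1 < value β (c :: factor x 0 n) := by
    by_contra! hle
    exact hycw (prepend_mem_fol hw (prepend_mem_betaShift hβ hx hle) hxw hyx)
  have happend : w ++ factor x w.length n = factor x 0 (w.length + n) := by
    rw [factor_add, hxw, zero_add]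
  refine ⟨hcw ▸ hx' 0 _, factor x w.length n, ?_, ?_⟩
  · rw [List.cons_append, happend, add_comm w.length n, factor_add]
    exact hn.trans_le (value_le_value_append (zero_le_one.trans hβ) (c :: factor x 0 n) _)
  · rw [List.cons_append, List.tail_cons, happend]
    exact admissible_factor hx 0 _

lemma subsingleton_LC_betaShift (hβ : 1 ≤ β) {n : ℕ} (hn : 2 ≤ n) :
    (LC (betaShift b β) n).Subsingleton := by
  have hgreedy : ∀ w ∈ LC (betaShift b β) n, IsGreedyPrefix β 1 w := by
    rintro (_ | ⟨c, w⟩) ⟨hlen, hw⟩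
    · exact absurd rfl hw.1
    · refine isGreedyPrefix_one_of_isLeftConstraint hβ ?_ hw
      rintro rfl
      exact absurd (hn.trans_eq hlen.symm : 2 ≤ 1) (by decide)
  exact fun w hw w' hw' => (hgreedy w hw).eq_of_length_eq (zero_lt_one.trans_le hβ)
    (hgreedy w' hw') (hw.1.trans hw'.1.symm)

theorem hC_betaShift (hβ : 1 ≤ β) : hC (betaShift b β) = 0 :=
  hC_eq_zero_of_eventually_subsingleton <| (eventually_ge_atTop 2).mono fun _ =>
    subsingleton_LC_betaShift hβ

theorem isQFT_betaShift (hβ : 1 < β) (hb : β < b + 1) : IsQFT (betaShift b β) := by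
  refine ⟨isSubshift_betaShift b β, (min_le_left _ _).trans_lt ?_⟩
  rw [hC_betaShift hβ.le, hTop_betaShift hβ hb]
  exact Real.log_pos hβ

end BetaShift

/-- For every `h ∈ (0,∞)` there is a subshift of quasi-finite
type with topological entropy `h`; consequently there is an uncountable
(ℝ-indexed) family of pairwise non-conjugate subshifts of quasi-finite type. -/
theorem qft_entropy_arbitrary :
    (∀ h : ℝ, 0 < h →
      ∃ (A : Type) (_ : Fintype A) (tA : TopologicalSpace A)
        (_ : @DiscreteTopology A tA) (X : Set (ℤ → A)),
          @IsQFT A tA X ∧ hTop X = h) ∧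
    (∃ (Alph : ℝ → Type) (_ : ∀ h, Fintype (Alph h))
        (tA : ∀ h, TopologicalSpace (Alph h))
        (_ : ∀ h, @DiscreteTopology (Alph h) (tA h))
        (S : ∀ h, Set (ℤ → Alph h)),
          (∀ h : ℝ, 0 < h → @IsQFT (Alph h) (tA h) (S h)) ∧
          (∀ h h' : ℝ, 0 < h → 0 < h' → h ≠ h' →
            ¬ @Conjugate (Alph h) (Alph h') (tA h) (tA h') (S h) (S h'))) := by
  have hβ (h : ℝ) (hh : 0 < h) : 1 < Real.exp h := Real.one_lt_exp_iff.2 hh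
  have hb (h : ℝ) : Real.exp h < (⌊Real.exp h⌋₊ : ℝ) + 1 := Nat.lt_floor_add_one _
  have hqft (h : ℝ) (hh : 0 < h) : IsQFT (betaShift ⌊Real.exp h⌋₊ (Real.exp h)) :=
    isQFT_betaShift (hβ h hh) (hb h)
  have hentropy (h : ℝ) (hh : 0 < h) : hTop (betaShift ⌊Real.exp h⌋₊ (Real.exp h)) = h := by
    rw [hTop_betaShift (hβ h hh) (hb h), Real.log_exp]
  refine ⟨fun h hh => ⟨_, inferInstance, inferInstance, inferInstance, _, hqft h hh,
    hentropy h hh⟩, fun h => Fin (⌊Real.exp h⌋₊ + 1), inferInstance, inferInstance,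
    inferInstance, fun h => betaShift ⌊Real.exp h⌋₊ (Real.exp h), hqft, ?_⟩
  intro h h' hh hh' hne hconj
  apply hne
  rw [← hentropy h hh, ← hentropy h' hh']
  exact hconj.hTop_eq (hqft h hh).1 (hqft h' hh').1

end QFTPaper
end

section
/- There exists a weak-QFT subshift with infinitely many (countably many) maximum measures. -/
open Filter Set MeasureTheory

namespace QFTPaper

variable {A : Type*} {B : Type*}

/-!
The subshift consists of sequences of pairs: a row of free letters from a finite alphabet `α`,
and a row of markers in which the markers after any given one are equally spaced. Two markers in
a past determine the rest of the marker row, and a past without markers beyond some point can be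
extended without markers; so each infinite past carries only finitely many left constraints, and
the extendable left constraint entropy vanishes. There are only polynomially many marker words of
length `n`, so the topological entropy is `log (card α)`.

By Poincaré recurrence an invariant measure gives no mass to the marker rows with a first marker.
All other marker rows are periodic, so an ergodic measure lives over the orbit of one of them.
Over an orbit of period `p`, i.i.d. uniform letters give an ergodic measure of entropy
`log (card α)` that charges every word occurring over that orbit by at least
`p⁻¹ * (card α) ^ (-n)`. By this Gibbs bound every invariant measure of maximal entropy over the
same orbit is absolutely continuous with respect to it, hence equal to it.
-/

/-- The translation by `c`, that is, the power `c` of the shift; `shift` is `translate 1`. -/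
def translate (c : ℤ) (x : ℤ → A) : ℤ → A := fun n => x (n + c)

@[simp] lemma translate_apply (c : ℤ) (x : ℤ → A) (n : ℤ) : translate c x n = x (n + c) := rfl

lemma translate_zero (x : ℤ → A) : translate 0 x = x := by
  funext n
  simp

lemma translate_translate (c d : ℤ) (x : ℤ → A) :
    translate c (translate d x) = translate (c + d) x := by
  funext n
  simp [add_assoc]

lemma shift_iterate (k : ℕ) : shift^[k] = translate (A := A) k := by
  induction k with
  | zero => funext x; simp [translate_zero]
  | succ k ih =>
    rw [Function.iterate_succ', ih]
    funext x
    exact (translate_translate 1 k x).trans (by rw [add_comm, Nat.cast_succ])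

lemma isSubshift_of_mapsTo_translate [TopologicalSpace A] {X : Set (ℤ → A)} (hc : IsClosed X)
    (hX : ∀ c, MapsTo (translate c) X X) : IsSubshift X := by
  refine ⟨hc, (hX 1).image_subset.antisymm fun x hx => ⟨translate (-1) x, hX (-1) hx, ?_⟩⟩
  exact (translate_translate 1 (-1) x).trans (translate_zero x)

/-- The word of length `n` read off from `x` at the positions `0, …, n - 1`. -/
def window (n : ℕ) (x : ℤ → A) : Fin n → A := fun i => x i

@[simp] lemma window_apply (n : ℕ) (x : ℤ → A) (i : Fin n) : window n x i = x i := rfl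

lemma preimage_window_singleton (n : ℕ) (w : Fin n → A) : window n ⁻¹' {w} = cylSet n w := by
  ext x
  simp [cylSet, funext_iff]

/-! ### Languages and topological entropy -/

lemma lang_eq_image_window (X : Set (ℤ → A)) (n : ℕ) :
    Lang X n = List.ofFn '' (window n '' X) := by
  ext w
  rw [image_image]
  simp only [Lang, OccursAt, zero_add, mem_ofPred_eq, mem_image]
  constructor
  · rintro ⟨rfl, x, hx, h⟩
    exact ⟨x, hx, (congrArg List.ofFn (funext h)).trans (List.ofFn_get w)⟩
  · rintro ⟨x, hx, rfl⟩
    exact ⟨List.length_ofFn, x, hx, fun i => by simp⟩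

lemma card_lang (X : Set (ℤ → A)) (n : ℕ) : Nat.card (Lang X n) = (window n '' X).ncard := by
  rw [lang_eq_image_window, Nat.card_coe_set_eq, ncard_image_of_injective _ List.ofFn_injective]

lemma tendsto_log_succ_div_atTop :
    Tendsto (fun n : ℕ => Real.log (n + 1) / n) atTop (nhds 0) := by
  have h := (Real.tendsto_pow_log_div_mul_add_atTop 1 (-1) 1 one_ne_zero).comp
    (tendsto_natCast_atTop_atTop.comp (tendsto_add_atTop_nat 1))
  refine h.congr fun n => ?_
  simp

lemma hTop_eq_log {X : Set (ℤ → A)} {c k : ℕ} (hc : 0 < c)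
    (hle : ∀ n, c ^ n ≤ (window n '' X).ncard)
    (hge : ∀ n, (window n '' X).ncard ≤ c ^ n * (n + 1) ^ k) : hTop X = Real.log c := by
  have hc' : (0 : ℝ) < c := by exact_mod_cast hc
  refine Tendsto.limsup_eq ?_
  have hupper : Tendsto (fun n : ℕ => Real.log c + k * (Real.log (n + 1) / n)) atTop
      (nhds (Real.log c)) := by
    simpa using (tendsto_log_succ_div_atTop.const_mul (k : ℝ)).const_add (Real.log c)
  refine tendsto_of_tendsto_of_tendsto_of_le_of_le' tendsto_const_nhds hupper ?_ ?_ <;>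
    filter_upwards [eventually_gt_atTop 0] with n hn <;>
    rw [card_lang]
  · have hn' : (0 : ℝ) < n := by exact_mod_cast hn
    rw [le_div_iff₀ hn', mul_comm, ← Real.log_pow]
    exact Real.log_le_log (pow_pos hc' n) (by exact_mod_cast hle n)
  · have hn' : (0 : ℝ) < n := by exact_mod_cast hn
    have hpos : 0 < (window n '' X).ncard := (pow_pos hc n).trans_le (hle n)
    rw [div_le_iff₀ hn']
    calc Real.log (window n '' X).ncard
        ≤ Real.log ((c : ℝ) ^ n * (n + 1) ^ k) :=
          Real.log_le_log (by exact_mod_cast hpos) (by exact_mod_cast hge n)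
      _ = n * Real.log c + k * Real.log (n + 1) := by
          rw [Real.log_mul (by positivity) (by positivity), Real.log_pow, Real.log_pow]
      _ = (Real.log c + k * (Real.log (n + 1) / n)) * n := by
          field_simp

/-! ### Left constraints along a past -/

/-- The past `…x₋₁x₀` of `x` agrees with `…b₁b₀` on its last `m + 1` letters. -/
def HasPast (b : ℕ → A) (m : ℕ) (x : ℤ → A) : Prop := ∀ j ≤ m, x (-j) = b j

@[simp] lemma length_wordOf (b : ℕ → A) (m : ℕ) : (wordOf b m).length = m + 1 := by
  simp [wordOf]

lemma get_wordOf (b : ℕ → A) (m : ℕ) (i : Fin (wordOf b m).length) :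
    (wordOf b m).get i = b (m - i) := by
  rw [List.get_eq_getElem]
  simp [wordOf]

lemma tail_wordOf_succ (b : ℕ → A) (m : ℕ) : (wordOf b (m + 1)).tail = wordOf b m :=
  List.ext_get (by simp [wordOf]) fun n _ _ => by simp [wordOf]

lemma mem_fol_wordOf_iff {X : Set (ℤ → A)} (hX : ∀ c, MapsTo (translate c) X X)
    {b : ℕ → A} {m : ℕ} {y : ℕ → A} :
    y ∈ fol X (wordOf b m) ↔ ∃ x ∈ X, HasPast b m x ∧ ∀ k : ℕ, y k = x k := by
  simp only [fol, mem_ofPred_eq, get_wordOf]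
  constructor
  · rintro ⟨x, hx, hw, hy⟩
    refine ⟨translate m x, hX m hx, fun j hj => ?_, fun k => ?_⟩
    · have hj' := hw ⟨m - j, by rw [length_wordOf]; omega⟩
      rw [Nat.sub_sub_self hj] at hj'
      rw [← hj', translate_apply]
      congr 1
      push_cast [hj]
      ring
    · rw [hy, translate_apply, length_wordOf]
      congr 1
      push_cast
      ring
  · rintro ⟨x, hx, hb, hy⟩
    refine ⟨translate (-m) x, hX _ hx, fun i => ?_, fun k => ?_⟩
    · have hi : (i : ℕ) ≤ m := Nat.lt_succ_iff.1 (i.2.trans_eq (length_wordOf b m))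
      rw [← hb _ (Nat.sub_le m i), translate_apply]
      congr 1
      push_cast [hi]
      ring
    · rw [hy, translate_apply, length_wordOf]
      congr 1
      push_cast
      ring

lemma not_isLeftConstraint_wordOf_succ {X : Set (ℤ → A)} (hX : ∀ c, MapsTo (translate c) X X)
    {b : ℕ → A} {m : ℕ}
    (h : ∀ x₀ ∈ X, HasPast b (m + 1) x₀ → ∀ x ∈ X, HasPast b m x →
      ∃ z : ℤ → A, z (-(m + 1)) = b (m + 1) ∧ (Iio (-(m : ℤ))).piecewise z x ∈ X) :
    ¬ IsLeftConstraint X (wordOf b (m + 1)) := by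
  rintro ⟨-, hne, -, hss⟩
  obtain ⟨y₀, hy₀⟩ := nonempty_iff_ne_empty.2 hne
  obtain ⟨x₀, hx₀, hb₀, -⟩ := (mem_fol_wordOf_iff hX).1 hy₀
  refine hss fun y hy => ?_
  rw [tail_wordOf_succ, mem_fol_wordOf_iff hX] at hy
  obtain ⟨x, hx, hb, hy⟩ := hy
  obtain ⟨z, hz, hzx⟩ := h x₀ hx₀ hb₀ x hx hb
  refine (mem_fol_wordOf_iff hX).2 ⟨_, hzx, fun j hj => ?_, fun k => ?_⟩
  · rcases hj.lt_or_eq with hj | rfl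
    · rw [piecewise_eq_of_notMem _ _ _ (by rw [mem_Iio]; omega), hb j (Nat.lt_succ_iff.1 hj)]
    · rw [piecewise_eq_of_mem _ _ _ (by rw [mem_Iio]; omega), Nat.cast_succ, hz]
  · rw [piecewise_eq_of_notMem _ _ _ (by rw [mem_Iio]; omega), hy]

lemma hCstar_eq_zero {X : Set (ℤ → A)}
    (h : ∀ b : ℕ → A, ∀ᶠ m in atTop, ¬ IsLeftConstraint X (wordOf b m)) : hCstar X = 0 := by
  have hELC (n : ℕ) : ELC X n = ∅ := by
    refine eq_empty_of_forall_notMem ?_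
    rintro w ⟨-, -, b, -, hb⟩
    obtain ⟨N, hN⟩ := eventually_atTop.1 (h b)
    obtain ⟨m, hm, hconstraint⟩ := hb N
    exact hN m hm hconstraint
  simp [hCstar, hELC]

/-! ### Marker sequences -/

/-- The admissible marker rows: as soon as there are two markers, say at distance `a`, the row has
period `a` from the first one on. -/
def IsMarking (s : ℤ → Bool) : Prop :=
  ∀ (i : ℤ) (a : ℕ), s i = true → s (i + a) = true → Function.Periodic (fun k : ℕ => s (i + k)) a

namespace IsMarking

variable {s t : ℤ → Bool}

lemma const_false : IsMarking fun _ => false := fun _ _ h => by simp at h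

protected lemma translate (hs : IsMarking s) (c : ℤ) : IsMarking (translate c s) := by
  intro i a hi ha
  rw [translate_apply, add_right_comm] at ha
  simpa only [translate_apply, add_right_comm i _ c] using hs (i + c) a hi ha

lemma truncate (hs : IsMarking s) (K : ℤ) :
    IsMarking ((Iio K).piecewise (fun _ => false) s) := by
  intro i a hi ha
  have hK : K ≤ i := not_lt.1 fun hlt => by simp [hlt] at hi
  have hk (k : ℕ) : i + k ∉ Iio K := notMem_Iio.2 (by omega)
  rw [piecewise_eq_of_notMem _ _ _ (notMem_Iio.2 hK)] at hi
  rw [piecewise_eq_of_notMem _ _ _ (hk a)] at ha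
  simpa only [piecewise_eq_of_notMem _ _ _ (hk _)] using hs i a hi ha

lemma eq_add_of_eq_of_le (hs : IsMarking s) (ht : IsMarking t) {i : ℤ} {a : ℕ} (ha : 0 < a)
    (hi : s i = true) (hia : s (i + a) = true)
    (hst : ∀ e : ℕ, e ≤ a → s (i + e) = t (i + e)) (k : ℕ) : s (i + k) = t (i + k) := by
  have hti : t i = true := by simpa [hi] using (hst 0 a.zero_le).symm
  have htia : t (i + a) = true := (hst a le_rfl).symm.trans hia
  calc s (i + k) = s (i + (k % a : ℕ)) := ((hs i a hi hia).map_mod_nat k).symm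
    _ = t (i + (k % a : ℕ)) := hst _ (Nat.mod_lt k ha).le
    _ = t (i + k) := (ht i a hti htia).map_mod_nat k

lemma exists_dvd_iff (hs : IsMarking s) {i : ℤ} (hi : s i = true) :
    ∃ d : ℕ, ∀ k : ℕ, s (i + k) = true ↔ d ∣ k := by
  by_cases hex : ∃ d : ℕ, 0 < d ∧ s (i + d) = true
  · classical
    obtain ⟨hpos, hd⟩ := Nat.find_spec hex
    have hmin := fun e => Nat.find_min (m := e) hex
    generalize Nat.find hex = d at hpos hd hmin
    refine ⟨d, fun k => ?_⟩
    have hmod : s (i + (k % d : ℕ)) = s (i + k) := (hs i d hi hd).map_mod_nat k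
    rw [← hmod, Nat.dvd_iff_mod_eq_zero]
    refine ⟨fun h => ?_, fun h => by simpa [h] using hi⟩
    by_contra hne
    exact hmin _ (Nat.mod_lt k hpos) ⟨Nat.pos_of_ne_zero hne, h⟩
  · refine ⟨0, fun k => ?_⟩
    rw [zero_dvd_iff]
    refine ⟨fun h => ?_, fun h => by simpa [h] using hi⟩
    by_contra hne
    exact hex ⟨k, Nat.pos_of_ne_zero hne, h⟩

lemma exists_window_eq (hs : IsMarking s) (n : ℕ) :
    ∃ a ≤ n, ∃ d ≤ n, ∀ t < n, s (t : ℕ) = decide (a ≤ t ∧ d ∣ t - a) := by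
  classical
  by_cases hex : ∃ a : ℕ, s a = true ∧ a < n
  · obtain ⟨ha, han⟩ := Nat.find_spec hex
    have hmin := fun m => Nat.find_min (m := m) hex
    generalize Nat.find hex = a at ha han hmin
    obtain ⟨d, hd⟩ := hs.exists_dvd_iff ha
    refine ⟨a, han.le, min d n, min_le_right _ _, fun t ht => ?_⟩
    rw [Bool.eq_iff_iff, decide_eq_true_iff]
    rcases lt_or_ge t a with hta | hat
    · have := hmin t hta
      grind
    · have hk := hd (t - a)
      rw [Nat.cast_sub hat, add_sub_cancel] at hk
      rw [hk, and_iff_right hat]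
      rcases le_total d n with hdn | hnd
      · rw [min_eq_left hdn]
      -- Both divisors exceed `t - a`, so that either divides it only if it is zero.
      · rw [min_eq_right hnd]
        have hlt : t - a < n := (Nat.sub_le t a).trans_lt ht
        rw [Nat.dvd_iff_mod_eq_zero, Nat.dvd_iff_mod_eq_zero, Nat.mod_eq_of_lt hlt,
          Nat.mod_eq_of_lt (hlt.trans_le hnd)]
  · refine ⟨n, le_rfl, 0, n.zero_le, fun t ht => ?_⟩
    have hst : s t = false := by
      by_contra h
      exact hex ⟨t, by simpa using h, ht⟩
    simp [hst, ht]

end IsMarking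

lemma isClosed_setOf_isMarking : IsClosed {s : ℤ → Bool | IsMarking s} := by
  have hev (i : ℤ) : IsClopen {s : ℤ → Bool | s i = true} :=
    (isClopen_discrete {true}).preimage (continuous_apply i)
  simp only [IsMarking, Function.Periodic, ofPred_forall]
  refine isClosed_iInter fun i => isClosed_iInter fun a => ?_
  refine isClosed_imp (hev i).isOpen (isClosed_imp (hev _).isOpen ?_)
  rw [ofPred_forall]
  exact isClosed_iInter fun k => isClosed_eq (f := fun s : ℤ → Bool => s (i + (k + a : ℕ)))
    (continuous_apply _) (continuous_apply _)

/-! ### The marker subshift -/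

/-- The marker subshift: an arbitrary row over `α` above an admissible marker row. -/
def markerShift (α : Type*) : Set (ℤ → α × Bool) := {x | IsMarking (Prod.snd ∘ x)}

section MarkerShift

variable {α : Type*}

lemma mapsTo_translate_markerShift (c : ℤ) :
    MapsTo (translate c) (markerShift α) (markerShift α) := fun _ hx => IsMarking.translate hx c

variable (α) in
lemma isSubshift_markerShift [TopologicalSpace α] : IsSubshift (markerShift α) := by
  refine isSubshift_of_mapsTo_translate ?_ mapsTo_translate_markerShift
  have hcont : Continuous fun x : ℤ → α × Bool => Prod.snd ∘ x :=
    continuous_pi fun n => continuous_snd.comp (continuous_apply n)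
  exact isClosed_setOf_isMarking.preimage hcont

lemma le_ncard_window_markerShift [Fintype α] [Nonempty α] (n : ℕ) :
    Fintype.card α ^ n ≤ (window n '' markerShift α).ncard := by
  have hsurj : (univ : Set (Fin n → α)) ⊆ (Prod.fst ∘ ·) '' (window n '' markerShift α) := by
    rintro u -
    obtain ⟨a⟩ := ‹Nonempty α›
    let x : ℤ → α × Bool := fun k => (if h : k.toNat < n then u ⟨k.toNat, h⟩ else a, false)
    refine ⟨_, ⟨x, IsMarking.const_false, rfl⟩, ?_⟩
    funext i
    simp [x]
  calc Fintype.card α ^ n = (univ : Set (Fin n → α)).ncard := by simp [ncard_univ]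
    _ ≤ ((Prod.fst ∘ ·) '' (window n '' markerShift α)).ncard := ncard_le_ncard hsurj
    _ ≤ (window n '' markerShift α).ncard := ncard_image_le

lemma ncard_window_markerShift_le [Fintype α] (n : ℕ) :
    (window n '' markerShift α).ncard ≤ Fintype.card α ^ n * (n + 1) ^ 2 := by
  let code : (Fin n → α) × Fin (n + 1) × Fin (n + 1) → Fin n → α × Bool := fun q t =>
    (q.1 t, decide ((q.2.1 : ℕ) ≤ t ∧ (q.2.2 : ℕ) ∣ t - q.2.1))
  have hcode : window n '' markerShift α ⊆ range code := by
    rintro _ ⟨x, hx, rfl⟩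
    obtain ⟨a, ha, d, hd, hwin⟩ := IsMarking.exists_window_eq hx n
    refine ⟨(fun t => (x t).1, ⟨a, Nat.lt_succ_of_le ha⟩, ⟨d, Nat.lt_succ_of_le hd⟩), ?_⟩
    funext t
    exact Prod.ext rfl (hwin t t.2).symm
  calc (window n '' markerShift α).ncard ≤ (range code).ncard := ncard_le_ncard hcode
    _ ≤ Nat.card ((Fin n → α) × Fin (n + 1) × Fin (n + 1)) := Finite.card_range_le code
    _ = Fintype.card α ^ n * (n + 1) ^ 2 := by simp [Nat.card_eq_fintype_card, sq]

lemma hTop_markerShift [Fintype α] [Nonempty α] :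
    hTop (markerShift α) = Real.log (Fintype.card α) :=
  hTop_eq_log Fintype.card_pos le_ncard_window_markerShift ncard_window_markerShift_le

lemma snd_eq_of_hasPast {b : ℕ → α × Bool} {m j₁ j₂ : ℕ} (hj : j₁ < j₂) (hjm : j₂ ≤ m)
    (hj₁ : (b j₁).2 = true) (hj₂ : (b j₂).2 = true) {x y : ℤ → α × Bool}
    (hx : x ∈ markerShift α) (hxb : HasPast b m x) (hy : y ∈ markerShift α) (hyb : HasPast b m y)
    {n : ℤ} (hn : -m ≤ n) : (x n).2 = (y n).2 := by
  have hpast {l : ℤ} (hl : -m ≤ l) (hl0 : l ≤ 0) : x l = y l := by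
    obtain ⟨j, rfl⟩ : ∃ j : ℕ, l = -j := ⟨(-l).toNat, by omega⟩
    rw [hxb j (by omega), hyb j (by omega)]
  rcases le_total n 0 with hn0 | hn0
  · rw [hpast hn hn0]
  · have hx₂ : (x (-j₂)).2 = true := by rwa [hxb j₂ hjm]
    have hx₁ : (x (-j₂ + (j₂ - j₁ : ℕ))).2 = true := by
      rwa [show (-j₂ + (j₂ - j₁ : ℕ) : ℤ) = -j₁ by omega, hxb j₁ (by omega)]
    have hagree := IsMarking.eq_add_of_eq_of_le hx hy (Nat.sub_pos_of_lt hj) hx₂ hx₁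
      (fun e _ => congrArg Prod.snd (hpast (by omega) (by omega))) (n + j₂).toNat
    rwa [show (-j₂ + (n + j₂).toNat : ℤ) = n by omega] at hagree

lemma not_isLeftConstraint_markerShift_of_unmarked {b : ℕ → α × Bool} {m : ℕ}
    (hb : (b (m + 1)).2 = false) :
    ¬ IsLeftConstraint (markerShift α) (wordOf b (m + 1)) := by
  refine not_isLeftConstraint_wordOf_succ mapsTo_translate_markerShift fun _ _ _ x hx _ => ?_
  refine ⟨fun _ => b (m + 1), rfl, ?_⟩
  suffices hrow : Prod.snd ∘ (Iio (-(m : ℤ))).piecewise (fun _ => b (m + 1)) x =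
      (Iio (-(m : ℤ))).piecewise (fun _ => false) (Prod.snd ∘ x) by
    rw [markerShift, mem_ofPred_eq, hrow]
    exact IsMarking.truncate hx (-m)
  rw [← hb]
  exact funext fun n => apply_piecewise _ _ _ fun _ => Prod.snd

lemma not_isLeftConstraint_markerShift_of_markers {b : ℕ → α × Bool} {m j₁ j₂ : ℕ}
    (hj : j₁ < j₂) (hjm : j₂ ≤ m) (hj₁ : (b j₁).2 = true) (hj₂ : (b j₂).2 = true) :
    ¬ IsLeftConstraint (markerShift α) (wordOf b (m + 1)) := by
  refine not_isLeftConstraint_wordOf_succ mapsTo_translate_markerShift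
    fun x₀ hx₀ hb₀ x hx hxb => ⟨x₀, hb₀ _ le_rfl, ?_⟩
  have hb₀m : HasPast b m x₀ := fun j hjm => hb₀ j (hjm.trans m.le_succ)
  suffices hrow : Prod.snd ∘ (Iio (-(m : ℤ))).piecewise x₀ x = Prod.snd ∘ x₀ by
    rwa [markerShift, mem_ofPred_eq, hrow]
  funext n
  by_cases hn : n ∈ Iio (-(m : ℤ))
  · rw [Function.comp_apply, piecewise_eq_of_mem _ _ _ hn, Function.comp_apply]
  · rw [Function.comp_apply, piecewise_eq_of_notMem _ _ _ hn, Function.comp_apply]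
    exact snd_eq_of_hasPast hj hjm hj₁ hj₂ hx hxb hx₀ hb₀m (notMem_Iio.1 hn)

lemma eventually_not_isLeftConstraint_markerShift (b : ℕ → α × Bool) :
    ∀ᶠ m in atTop, ¬ IsLeftConstraint (markerShift α) (wordOf b m) := by
  by_cases hb : ∃ N, ∀ j, N ≤ j → (b j).2 = false
  · obtain ⟨N, hN⟩ := hb
    filter_upwards [eventually_gt_atTop N] with m hm
    obtain ⟨m, rfl⟩ := Nat.exists_eq_add_of_le' (Nat.one_le_of_lt hm)
    exact not_isLeftConstraint_markerShift_of_unmarked (hN (m + 1) hm.le)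
  · push Not at hb
    obtain ⟨j₁, -, hj₁⟩ := hb 0
    obtain ⟨j₂, hj, hj₂⟩ := hb (j₁ + 1)
    rw [ne_eq, Bool.not_eq_false] at hj₁ hj₂
    filter_upwards [eventually_gt_atTop j₂] with m hm
    obtain ⟨m, rfl⟩ := Nat.exists_eq_add_of_le' (Nat.one_le_of_lt hm)
    exact not_isLeftConstraint_markerShift_of_markers hj (Nat.lt_succ_iff.1 hm) hj₁ hj₂

end MarkerShift

lemma isWeakQFT_markerShift (α : Type*) [TopologicalSpace α] [Finite α] [Nontrivial α] :
    IsWeakQFT (markerShift α) := by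
  have := Fintype.ofFinite α
  refine ⟨isSubshift_markerShift α, (min_le_left _ _).trans_lt ?_⟩
  rw [hCstar_eq_zero eventually_not_isLeftConstraint_markerShift, hTop_markerShift]
  exact Real.log_pos (by exact_mod_cast Fintype.one_lt_card)

/-! ### Periodic marker rows -/

/-- The marker row with a marker at each multiple of `p`, and without markers if `p = 0`. -/
def periodicMarking (p : ℕ) : ℤ → Bool := fun n => decide (p ≠ 0 ∧ (p : ℤ) ∣ n)

lemma periodicMarking_eq_true_iff {p : ℕ} {n : ℤ} :
    periodicMarking p n = true ↔ p ≠ 0 ∧ (p : ℤ) ∣ n := decide_eq_true_iff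

lemma isMarking_periodicMarking (p : ℕ) : IsMarking (periodicMarking p) := by
  intro i a hi ha k
  rw [periodicMarking_eq_true_iff] at hi ha
  have hpa : (p : ℤ) ∣ a := (dvd_add_right hi.2).1 ha.2
  rw [Bool.eq_iff_iff, periodicMarking_eq_true_iff, periodicMarking_eq_true_iff, Nat.cast_add,
    ← add_assoc, dvd_add_left hpa]

lemma periodic_periodicMarking (p : ℕ) :
    Function.Periodic (periodicMarking p) ((max p 1 : ℕ) : ℤ) := by
  intro n
  rw [Bool.eq_iff_iff, periodicMarking_eq_true_iff, periodicMarking_eq_true_iff]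
  refine and_congr_right fun hp => ?_
  rw [max_eq_left (Nat.one_le_iff_ne_zero.2 hp), dvd_add_self_right]

lemma eq_of_translate_periodicMarking_eq {p q : ℕ} {c d : ℤ}
    (h : translate c (periodicMarking p) = translate d (periodicMarking q)) : p = q := by
  have hiff (n : ℤ) : (p ≠ 0 ∧ (p : ℤ) ∣ n + c) ↔ (q ≠ 0 ∧ (q : ℤ) ∣ n + d) := by
    rw [← periodicMarking_eq_true_iff, ← periodicMarking_eq_true_iff]
    exact Bool.eq_iff_iff.1 (congrFun h n)
  have hzero : p = 0 ↔ q = 0 := by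
    constructor <;> rintro rfl <;> by_contra hne
    · exact ((hiff (-d)).2 ⟨hne, by simp⟩).1 rfl
    · exact ((hiff (-c)).1 ⟨hne, by simp⟩).1 rfl
  by_cases hp : p = 0
  · rw [hp, hzero.1 hp]
  · have hq : q ≠ 0 := mt hzero.2 hp
    have hqc : (q : ℤ) ∣ d - c := by
      simpa [sub_eq_neg_add] using ((hiff (-c)).1 ⟨hp, by simp⟩).2
    have hdvd (n : ℤ) : (p : ℤ) ∣ n ↔ (q : ℤ) ∣ n := by
      have hn := hiff (n - c)
      rwa [and_iff_right hp, and_iff_right hq, sub_add_cancel, sub_add_eq_add_sub, add_sub_assoc,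
        dvd_add_left hqc] at hn
    exact Nat.dvd_antisymm (Int.natCast_dvd_natCast.1 ((hdvd q).2 dvd_rfl))
      (Int.natCast_dvd_natCast.1 ((hdvd p).1 dvd_rfl))

/-- The marker at `k` is the leftmost marker of `s`. -/
def IsFirstMarker (s : ℤ → Bool) (k : ℤ) : Prop := s k = true ∧ ∀ n < k, s n = false

lemma IsMarking.exists_int_dvd_iff {s : ℤ → Bool} (hs : IsMarking s)
    (hunb : ∀ k, ∃ i ≤ k, s i = true) :
    ∃ (i₀ : ℤ) (p : ℕ), p ≠ 0 ∧ ∀ n, s n = true ↔ (p : ℤ) ∣ n - i₀ := by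
  have hdvd : ∀ i, s i = true → ∃ d : ℕ, ∀ n, i ≤ n → (s n = true ↔ (d : ℤ) ∣ n - i) := by
    intro i hi
    obtain ⟨d, hd⟩ := hs.exists_dvd_iff hi
    refine ⟨d, fun n hn => ?_⟩
    obtain ⟨k, rfl⟩ := Int.le.dest hn
    rw [hd, add_sub_cancel_left, Int.natCast_dvd_natCast]
  obtain ⟨i₀, -, hi₀⟩ := hunb 0
  obtain ⟨p, hp⟩ := hdvd i₀ hi₀
  have hleft : ∀ i ≤ i₀, s i = true → (p : ℤ) ∣ i₀ - i ∧
      ∀ n, i ≤ n → (s n = true ↔ (p : ℤ) ∣ n - i) := by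
    intro i hii₀ hi
    obtain ⟨d, hd⟩ := hdvd i hi
    have hdi : (d : ℤ) ∣ i₀ - i := (hd i₀ hii₀).1 hi₀
    have hpd : p = d := by
      refine Nat.dvd_right_iff_eq.1 fun k => ?_
      have hpk := hp (i₀ + k) (by omega)
      have hdk := hd (i₀ + k) (by omega)
      rw [add_sub_cancel_left] at hpk
      rw [hpk, add_sub_right_comm, dvd_add_right hdi] at hdk
      exact_mod_cast hdk
    exact hpd ▸ ⟨hdi, hd⟩
  refine ⟨i₀, p, ?_, fun n => ?_⟩
  · obtain ⟨i, hlt, hi⟩ := hunb (i₀ - 1)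
    have hpi := (hleft i (by omega) hi).1
    rintro rfl
    rw [Nat.cast_zero, zero_dvd_iff] at hpi
    omega
  · obtain ⟨i, hle, hi⟩ := hunb (min n i₀)
    obtain ⟨hpi, hiff⟩ := hleft i (hle.trans (min_le_right _ _)) hi
    rw [hiff n (hle.trans (min_le_left _ _)), ← sub_add_sub_cancel n i₀ i, dvd_add_left hpi]

lemma IsMarking.exists_isFirstMarker_or_eq_translate {s : ℤ → Bool} (hs : IsMarking s) :
    (∃ k, IsFirstMarker s k) ∨ ∃ p c, s = translate c (periodicMarking p) := by
  by_cases hempty : ∀ n, s n = false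
  · exact Or.inr ⟨0, 0, funext fun n => by simp [hempty, periodicMarking]⟩
  by_cases hbdd : ∃ b, ∀ n, s n = true → b ≤ n
  · push Not at hempty
    obtain ⟨k, hk, hmin⟩ := Int.exists_least_of_bdd hbdd (hempty.imp fun n hn => by simpa using hn)
    exact Or.inl ⟨k, hk, fun n hn => by simpa using mt (hmin n) hn.not_ge⟩
  · push Not at hbdd
    obtain ⟨i₀, p, hp, hiff⟩ :=
      hs.exists_int_dvd_iff fun k => (hbdd k).imp fun i hi => ⟨hi.2.le, hi.1⟩
    refine Or.inr ⟨p, -i₀, funext fun n => ?_⟩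
    rw [Bool.eq_iff_iff, hiff, translate_apply, periodicMarking_eq_true_iff, and_iff_right hp,
      sub_eq_add_neg]

/-! ### Translation-invariant measures -/

section InvariantMeasure

variable [MeasurableSpace A] {μ : Measure (ℤ → A)}

lemma measurable_translate (c : ℤ) : Measurable (translate (A := A) c) :=
  measurable_pi_lambda _ fun _ => measurable_pi_apply _

lemma measurable_window (n : ℕ) : Measurable (window (A := A) n) :=
  measurable_pi_lambda _ fun _ => measurable_pi_apply _

lemma measurePreserving_translate (hμ : MeasurePreserving shift μ μ) (c : ℤ) :
    MeasurePreserving (translate c) μ μ := by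
  obtain ⟨k, rfl | rfl⟩ := c.eq_nat_or_neg
  · exact shift_iterate (A := A) k ▸ hμ.iterate k
  · refine ⟨measurable_translate _, ?_⟩
    have hk : μ.map (translate k) = μ := (shift_iterate (A := A) k ▸ hμ.iterate k).map_eq
    have hinv : translate (-k : ℤ) ∘ translate k = (id : (ℤ → A) → ℤ → A) := by
      funext x
      simp [translate_translate, translate_zero]
    nth_rw 1 [← hk]
    rw [Measure.map_map (measurable_translate _) (measurable_translate _), hinv, Measure.map_id]

lemma exists_window_approx [IsFiniteMeasure μ] {E : Set (ℤ → A)} (hE : MeasurableSet E) {ε : ℝ}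
    (hε : 0 < ε) :
    ∃ (c : ℤ) (n : ℕ) (D : Set (Fin n → A)), MeasurableSet D ∧
      μ.real (symmDiff E (translate c ⁻¹' (window n ⁻¹' D))) < ε := by
  have hdense := Measure.MeasureDense.of_generateFrom_isSetAlgebra_finite μ
    (isSetAlgebra_measurableCylinders (α := fun _ : ℤ => A)) generateFrom_measurableCylinders.symm
  obtain ⟨t, ht, hμt⟩ := hdense.approx E hE (measure_ne_top _ _) ε hε
  obtain ⟨s, S, hS, rfl⟩ := (mem_measurableCylinders t).1 ht
  obtain ⟨c, hc⟩ := s.bddBelow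
  obtain ⟨d, hd⟩ := s.bddAbove
  have hmem (i : s) : ((i : ℤ) - c).toNat < (d - c + 1).toNat := by
    have := hc i.2
    have := hd i.2
    omega
  let g : (Fin (d - c + 1).toNat → A) → s → A := fun w i => w ⟨_, hmem i⟩
  have hg : g ∘ window _ ∘ translate c = s.restrict := by
    funext x i
    have := hc i.2
    simp only [g, Function.comp_apply, window_apply, translate_apply, Finset.restrict]
    congr 1
    omega
  refine ⟨c, _, g ⁻¹' S, ?_, ?_⟩
  · exact measurable_pi_lambda _ (fun _ => measurable_pi_apply _) hS
  · rw [← preimage_comp, ← preimage_comp, hg]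
    exact (ENNReal.lt_ofReal_iff_toReal_lt (measure_ne_top _ _)).1 hμt

end InvariantMeasure

/-! ### Entropy -/

lemma sum_negMulLog_le_neg_sum_mul_log {ι : Type*} {s : Finset ι} {q r : ι → ℝ}
    (hq : ∀ i ∈ s, 0 ≤ q i) (hr : ∀ i ∈ s, 0 ≤ r i) (hqr : ∀ i ∈ s, 0 < q i → 0 < r i)
    (hsum : ∑ i ∈ s, r i ≤ ∑ i ∈ s, q i) :
    ∑ i ∈ s, Real.negMulLog (q i) ≤ -∑ i ∈ s, q i * Real.log (r i) := by
  have hterm : ∀ i ∈ s, Real.negMulLog (q i) ≤ -(q i * Real.log (r i)) + (r i - q i) := by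
    intro i hi
    rcases (hq i hi).eq_or_lt with h0 | hpos
    · simpa [← h0] using hr i hi
    · have hri := hqr i hi hpos
      have h := mul_le_mul_of_nonneg_left
        (Real.negMulLog_le_one_sub_self (div_pos hpos hri).le) hri.le
      rw [Real.negMulLog, Real.log_div hpos.ne' hri.ne'] at h
      rw [Real.negMulLog]
      field_simp at h
      linarith
  calc ∑ i ∈ s, Real.negMulLog (q i)
      ≤ ∑ i ∈ s, (-(q i * Real.log (r i)) + (r i - q i)) := Finset.sum_le_sum hterm
    _ = -∑ i ∈ s, q i * Real.log (r i) + (∑ i ∈ s, r i - ∑ i ∈ s, q i) := by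
      rw [Finset.sum_add_distrib, Finset.sum_neg_distrib, Finset.sum_sub_distrib]
    _ ≤ -∑ i ∈ s, q i * Real.log (r i) := by linarith

section Entropy

variable [MeasurableSpace A]

lemma measurableSet_cylSet [MeasurableSingletonClass A] (n : ℕ) (w : Fin n → A) :
    MeasurableSet (cylSet n w) := by
  rw [← preimage_window_singleton]
  exact measurable_window n (measurableSet_singleton w)

lemma sum_measureReal_cylSet [MeasurableSingletonClass A] (μ : Measure (ℤ → A))
    [IsFiniteMeasure μ] {n : ℕ} (D : Finset (Fin n → A)) :
    ∑ w ∈ D, μ.real (cylSet n w) = μ.real (window n ⁻¹' D) := by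
  simp_rw [← preimage_window_singleton]
  exact sum_measureReal_preimage_singleton D fun w _ => by
    rw [preimage_window_singleton]
    exact measurableSet_cylSet n w

variable [Fintype A]

lemma blockEntropy_nonneg (μ : Measure (ℤ → A)) [IsProbabilityMeasure μ] (n : ℕ) :
    0 ≤ blockEntropy μ n :=
  Finset.sum_nonneg fun _ _ => Real.negMulLog_nonneg measureReal_nonneg measureReal_le_one

lemma mul_KSEntropy_le_blockEntropy (μ : Measure (ℤ → A)) [IsProbabilityMeasure μ] (n : ℕ) :
    n * KSEntropy μ ≤ blockEntropy μ n := by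
  rcases n with _ | n
  · simpa using blockEntropy_nonneg μ 0
  · rw [mul_comm, ← le_div_iff₀ (by positivity), Nat.cast_succ]
    refine ciInf_le (f := fun n : ℕ => blockEntropy μ (n + 1) / (n + 1)) ⟨0, ?_⟩ n
    rintro _ ⟨k, rfl⟩
    exact div_nonneg (blockEntropy_nonneg μ _) (by positivity)

variable [MeasurableSingletonClass A]

lemma sum_univ_measureReal_cylSet (μ : Measure (ℤ → A)) [IsProbabilityMeasure μ] (n : ℕ) :
    ∑ w : Fin n → A, μ.real (cylSet n w) = 1 := by
  rw [sum_measureReal_cylSet, Finset.coe_univ, preimage_univ, probReal_univ]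

/-- The lower half of the Gibbs property of `ν` at entropy `h`, required only of the words charged
by `μ`: these words have `ν`-probability at least `c * exp (-(n * h))`. -/
def GibbsLowerBound (μ ν : Measure (ℤ → A)) (c h : ℝ) : Prop :=
  ∀ (n : ℕ) (w : Fin n → A), 0 < μ.real (cylSet n w) →
    c * Real.exp (-(n * h)) ≤ ν.real (cylSet n w)

variable {μ ν : Measure (ℤ → A)} [IsProbabilityMeasure μ] [IsProbabilityMeasure ν] {n : ℕ} {c h : ℝ}

lemma sum_weight_mul_measureReal_cylSet_le [DecidableEq A] (D : Finset (Fin n → A)) {δ : ℝ}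
    (hδ : 0 < δ) (hD : ν.real (window n ⁻¹' D) ≤ δ) :
    ∑ w, (if w ∈ D then (2 * δ)⁻¹ else 2⁻¹) * ν.real (cylSet n w) ≤ 1 := by
  calc ∑ w, (if w ∈ D then (2 * δ)⁻¹ else 2⁻¹) * ν.real (cylSet n w)
      ≤ ∑ w, ((if w ∈ D then (2 * δ)⁻¹ * ν.real (cylSet n w) else 0) +
          2⁻¹ * ν.real (cylSet n w)) := by
        refine Finset.sum_le_sum fun w _ => ?_
        split_ifs
        · exact le_add_of_nonneg_right (by positivity)
        · rw [zero_add]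
    _ = (2 * δ)⁻¹ * ν.real (window n ⁻¹' D) + 2⁻¹ * 1 := by
        rw [Finset.sum_add_distrib, Finset.sum_ite_mem, Finset.univ_inter, ← Finset.mul_sum,
          ← Finset.mul_sum, sum_measureReal_cylSet, sum_univ_measureReal_cylSet]
    _ ≤ (2 * δ)⁻¹ * δ + 2⁻¹ * 1 := by gcongr
    _ = 1 := by
        field_simp
        norm_num

-- Gibbs' inequality against the distribution `ν`, reweighted so that half of the mass lies on `D`.
lemma GibbsLowerBound.blockEntropy_le (hμν : GibbsLowerBound μ ν c h) (hc : 0 < c)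
    (D : Finset (Fin n → A)) {δ : ℝ} (hδ : 0 < δ) (hD : ν.real (window n ⁻¹' D) ≤ δ) :
    blockEntropy μ n ≤ n * h + Real.log (2 / c) + μ.real (window n ⁻¹' D) * Real.log δ := by
  classical
  let q : (Fin n → A) → ℝ := fun w => μ.real (cylSet n w)
  let r : (Fin n → A) → ℝ := fun w =>
    (if w ∈ D then (2 * δ)⁻¹ else 2⁻¹) * ν.real (cylSet n w)
  have hweight (w : Fin n → A) : 0 < if w ∈ D then (2 * δ)⁻¹ else 2⁻¹ := by
    split_ifs <;> positivity
  have hν (w : Fin n → A) (hw : 0 < q w) : 0 < ν.real (cylSet n w) :=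
    (by positivity : (0 : ℝ) < c * Real.exp (-(n * h))).trans_le (hμν n w hw)
  have hlog (w : Fin n → A) : q w * (-(n * h + Real.log (2 / c))) -
      (if w ∈ D then q w * Real.log δ else 0) ≤ q w * Real.log (r w) := by
    rcases (measureReal_nonneg (μ := μ) (s := cylSet n w)).eq_or_lt with h0 | hpos
    · simp [q, ← h0]
    have hlogν : Real.log c - n * h ≤ Real.log (ν.real (cylSet n w)) := by
      have hle := Real.log_le_log (by positivity) (hμν n w hpos)
      rwa [Real.log_mul hc.ne' (Real.exp_pos _).ne', Real.log_exp] at hle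
    rw [Real.log_mul (hweight w).ne' (hν w hpos).ne', Real.log_div two_ne_zero hc.ne']
    have hqν := mul_le_mul_of_nonneg_left hlogν hpos.le
    split_ifs
    · rw [Real.log_inv, Real.log_mul two_ne_zero hδ.ne']
      linarith
    · rw [Real.log_inv]
      linarith
  have hgibbs : blockEntropy μ n ≤ -∑ w, q w * Real.log (r w) := by
    refine sum_negMulLog_le_neg_sum_mul_log (fun w _ => measureReal_nonneg)
      (fun w _ => mul_nonneg (hweight w).le measureReal_nonneg)
      (fun w _ hw => mul_pos (hweight w) (hν w hw)) ?_
    exact (sum_weight_mul_measureReal_cylSet_le D hδ hD).trans_eq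
      (sum_univ_measureReal_cylSet μ n).symm
  refine (hgibbs.trans (neg_le_neg (Finset.sum_le_sum fun w _ => hlog w))).trans_eq ?_
  rw [Finset.sum_sub_distrib, ← Finset.sum_mul, sum_univ_measureReal_cylSet, Finset.sum_ite_mem,
    Finset.univ_inter, ← Finset.sum_mul, sum_measureReal_cylSet]
  ring

lemma GibbsLowerBound.KSEntropy_le (hμ : GibbsLowerBound μ μ c h) (hc : 0 < c) :
    KSEntropy μ ≤ h := by
  have hbound (n : ℕ) : KSEntropy μ ≤ h + Real.log (2 / c) * (1 / ((n : ℝ) + 1)) := by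
    have hblock := (mul_KSEntropy_le_blockEntropy μ (n + 1)).trans
      (hμ.blockEntropy_le hc ∅ one_pos (by simp))
    refine le_of_mul_le_mul_left (hblock.trans_eq ?_) (by positivity)
    push_cast
    rw [Real.log_one]
    field_simp
    ring
  refine ge_of_tendsto' (?_ : Tendsto _ atTop (nhds h)) hbound
  simpa using (tendsto_one_div_add_atTop_nhds_zero_nat.const_mul (Real.log (2 / c))).const_add h

lemma le_KSEntropy (hμ : ∀ (n : ℕ) (w : Fin n → A), μ.real (cylSet n w) ≤ Real.exp (-(n * h))) :
    h ≤ KSEntropy μ := by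
  refine le_ciInf fun n => ?_
  rw [le_div_iff₀ (by positivity), mul_comm, ← Nat.cast_succ]
  calc ((n + 1 : ℕ) : ℝ) * h
      = ∑ w : Fin (n + 1) → A, μ.real (cylSet (n + 1) w) * ((n + 1 : ℕ) * h) := by
        rw [← Finset.sum_mul, sum_univ_measureReal_cylSet, one_mul]
    _ ≤ blockEntropy μ (n + 1) := Finset.sum_le_sum fun w _ => ?_
  rcases (measureReal_nonneg (μ := μ) (s := cylSet (n + 1) w)).eq_or_lt with h0 | hpos
  · simp [← h0, ← measureReal_def]
  · have hlog := Real.log_le_log hpos (hμ (n + 1) w)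
    rw [Real.log_exp] at hlog
    rw [← measureReal_def, Real.negMulLog, neg_mul, ← mul_neg]
    exact mul_le_mul_of_nonneg_left (le_neg_of_le_neg hlog) hpos.le

lemma GibbsLowerBound.measureReal_mul_neg_log_le (hμν : GibbsLowerBound μ ν c h) (hc : 0 < c)
    (hh : h ≤ KSEntropy μ) (D : Set (Fin n → A)) {δ : ℝ} (hδ : 0 < δ)
    (hD : ν.real (window n ⁻¹' D) ≤ δ) :
    μ.real (window n ⁻¹' D) * -Real.log δ ≤ Real.log (2 / c) := by
  have hD' : ((toFinite D).toFinset : Set (Fin n → A)) = D := (toFinite D).coe_toFinset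
  have hlower : n * h ≤ blockEntropy μ n :=
    (mul_le_mul_of_nonneg_left hh n.cast_nonneg).trans (mul_KSEntropy_le_blockEntropy μ n)
  have hupper := hμν.blockEntropy_le hc (toFinite D).toFinset hδ (by rwa [hD'])
  rw [hD'] at hupper
  linarith

lemma GibbsLowerBound.absolutelyContinuous (hμν : GibbsLowerBound μ ν c h) (hc : 0 < c)
    (hμ : MeasurePreserving shift μ μ) (hν : MeasurePreserving shift ν ν) (hh : h ≤ KSEntropy μ) :
    μ ≪ ν := by
  refine Measure.AbsolutelyContinuous.mk fun E hE hνE => ?_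
  rw [← measureReal_eq_zero_iff]
  by_contra hne
  set m := μ.real E
  have hmpos : 0 < m := measureReal_nonneg.lt_of_ne' hne
  set K := 2 / m * (|Real.log (2 / c)| + 1) with hK
  have hε : 0 < min (Real.exp (-K)) (m / 2) := lt_min (Real.exp_pos _) (half_pos hmpos)
  obtain ⟨a, n, D, hDm, hD⟩ := exists_window_approx (μ := μ + ν) hE hε
  set W : Set (ℤ → A) := window n ⁻¹' D
  have hWm : MeasurableSet W := measurable_window n hDm
  rw [measureReal_add_apply, lt_min_iff] at hD
  have hdiff (ρ : Measure (ℤ → A)) [IsProbabilityMeasure ρ] (hρ : MeasurePreserving shift ρ ρ) :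
      |ρ.real E - ρ.real W| ≤ ρ.real (symmDiff E (translate a ⁻¹' W)) := by
    rw [← (measurePreserving_translate hρ a).measureReal_preimage hWm.nullMeasurableSet]
    exact abs_measureReal_sub_le_measureReal_symmDiff hE.nullMeasurableSet
      (measurable_translate a hWm).nullMeasurableSet
  have hμW := (abs_le.1 (hdiff μ hμ)).2
  have hνW := (abs_le.1 (hdiff ν hν)).1
  rw [show ν.real E = 0 by rw [measureReal_def, hνE, ENNReal.toReal_zero]] at hνW
  have hμ0 : 0 ≤ μ.real (symmDiff E (translate a ⁻¹' W)) := measureReal_nonneg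
  have hν0 : 0 ≤ ν.real (symmDiff E (translate a ⁻¹' W)) := measureReal_nonneg
  have hlog := hμν.measureReal_mul_neg_log_le hc hh D (Real.exp_pos (-K)) (by linarith)
  rw [Real.log_exp, neg_neg] at hlog
  have hKpos : 0 ≤ K := by positivity
  have hlt : |Real.log (2 / c)| + 1 ≤ Real.log (2 / c) :=
    calc |Real.log (2 / c)| + 1 = m / 2 * K := by rw [hK]; field_simp
      _ ≤ μ.real W * K := mul_le_mul_of_nonneg_right (by linarith) hKpos
      _ ≤ Real.log (2 / c) := hlog
  linarith [le_abs_self (Real.log (2 / c))]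

lemma GibbsLowerBound.eq (hμν : GibbsLowerBound μ ν c h) (hc : 0 < c)
    (hμ : MeasurePreserving shift μ μ) (hν : Ergodic shift ν) (hh : h ≤ KSEntropy μ) : μ = ν :=
  hν.eq_of_absolutelyContinuous hμ
    (hμν.absolutelyContinuous hc hμ hν.toMeasurePreserving hh)

end Entropy

/-! ### Independent identically distributed letters -/

lemma abs_measureReal_sub_sq_le {Ω : Type*} [MeasurableSpace Ω] {μ : Measure Ω}
    [IsProbabilityMeasure μ] {T : Ω → Ω} (hT : MeasurePreserving T μ μ) {E C : Set Ω}
    (hE : MeasurableSet E) (hC : MeasurableSet C) (hinv : T ⁻¹' E = E)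
    (hind : μ.real (C ∩ T ⁻¹' C) = μ.real C ^ 2) :
    |μ.real E - μ.real E ^ 2| ≤ 4 * μ.real (symmDiff E C) := by
  have hEC := abs_measureReal_sub_le_measureReal_symmDiff (μ := μ) hE.nullMeasurableSet
    hC.nullMeasurableSet
  have hsub : symmDiff E (C ∩ T ⁻¹' C) ⊆ symmDiff E C ∪ T ⁻¹' symmDiff E C := by
    intro x hx
    have hxE : T x ∈ E ↔ x ∈ E := Set.ext_iff.1 hinv x
    simp only [mem_symmDiff, mem_inter_iff, mem_preimage, mem_union] at hx ⊢
    tauto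
  have hECC : |μ.real E - μ.real C ^ 2| ≤ 2 * μ.real (symmDiff E C) :=
    calc |μ.real E - μ.real C ^ 2| ≤ μ.real (symmDiff E (C ∩ T ⁻¹' C)) :=
          hind ▸ abs_measureReal_sub_le_measureReal_symmDiff hE.nullMeasurableSet
            (hC.inter (hT.measurable hC)).nullMeasurableSet
      _ ≤ μ.real (symmDiff E C) + μ.real (T ⁻¹' symmDiff E C) :=
          (measureReal_mono hsub).trans (measureReal_union_le _ _)
      _ = 2 * μ.real (symmDiff E C) := by
          rw [hT.measureReal_preimage (hE.symmDiff hC).nullMeasurableSet, two_mul]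
  have hsq : |μ.real C ^ 2 - μ.real E ^ 2| ≤ 2 * μ.real (symmDiff E C) := by
    rw [sq_sub_sq, abs_mul, abs_sub_comm (μ.real C)]
    refine mul_le_mul ?_ hEC (abs_nonneg _) zero_le_two
    rw [abs_of_nonneg (add_nonneg measureReal_nonneg measureReal_nonneg)]
    linarith [measureReal_le_one (μ := μ) (s := C), measureReal_le_one (μ := μ) (s := E)]
  linarith [abs_sub_le (μ.real E) (μ.real C ^ 2) (μ.real E ^ 2)]

section Independent

variable [MeasurableSpace A] {P : Measure A} [IsProbabilityMeasure P]

lemma measurePreserving_translate_infinitePi (c : ℤ) :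
    MeasurePreserving (translate c) (Measure.infinitePi fun _ : ℤ => P)
      (Measure.infinitePi fun _ => P) := by
  refine ⟨measurable_translate c, Measure.eq_infinitePi _ fun s t ht => ?_⟩
  have hpre : translate c ⁻¹' (s : Set ℤ).pi t =
      (s.map (Equiv.addRight c).toEmbedding : Set ℤ).pi fun i => t (i - c) := by
    ext x
    simp only [mem_preimage, Set.mem_pi, Finset.coe_map, forall_mem_image]
    simp
  rw [Measure.map_apply (measurable_translate c) (.pi s.countable_toSet fun i _ => ht i), hpre,
    Measure.infinitePi_pi _ fun i _ => ht _, Finset.prod_map]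
  simp

lemma infinitePi_cylSet [MeasurableSingletonClass A] {n : ℕ} (w : Fin n → A) :
    (Measure.infinitePi fun _ : ℤ => P) (cylSet n w) = ∏ i, P {w i} := by
  let s : Finset ℤ := (Finset.univ : Finset (Fin n)).map (Fin.valEmbedding.trans Nat.castEmbedding)
  let t : ℤ → Set A := fun i => {a | ∀ h : i.toNat < n, a = w ⟨i.toNat, h⟩}
  have hcyl : cylSet n w = (s : Set ℤ).pi t := by
    ext x
    simp [cylSet, Set.mem_pi, s, t]
  have ht (i : ℤ) : MeasurableSet (t i) := by
    by_cases h : i.toNat < n <;> simp [t, h]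
  rw [hcyl, Measure.infinitePi_pi _ fun i _ => ht i, Finset.prod_map]
  simp [t]

lemma measureReal_window_inter_preimage_translate {n : ℕ} {D : Set (Fin n → A)}
    (hD : MeasurableSet D) {d : ℕ} (hd : n ≤ d) :
    (Measure.infinitePi fun _ : ℤ => P).real
        (window n ⁻¹' D ∩ translate d ⁻¹' (window n ⁻¹' D)) =
      (Measure.infinitePi fun _ : ℤ => P).real (window n ⁻¹' D) ^ 2 := by
  set μ := Measure.infinitePi fun _ : ℤ => P
  have hindep : ProbabilityTheory.iIndepFun (fun (i : ℤ) (x : ℤ → A) => x i) μ :=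
    ProbabilityTheory.iIndepFun_infinitePi (P := fun _ : ℤ => P) (X := fun _ a => a)
      fun _ => measurable_id
  have hdisj : Disjoint (Finset.Ico 0 (n : ℤ)) (Finset.Ico (d : ℤ) (d + n)) :=
    Finset.disjoint_left.2 fun i hi hi' => by
      rw [Finset.mem_Ico] at hi hi'
      omega
  have hwindows : ProbabilityTheory.IndepFun (window n) (window n ∘ translate d) μ := by
    refine (hindep.indepFun_finset _ _ hdisj fun i => measurable_pi_apply i).comp
      (φ := fun z (i : Fin n) => z ⟨i, by simp⟩)
      (ψ := fun z (i : Fin n) => z ⟨i + d, by rw [Finset.mem_Ico]; omega⟩) ?_ ?_ <;>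
    exact measurable_pi_lambda _ fun _ => measurable_pi_apply _
  have hmul := hwindows.measure_inter_preimage_eq_mul D D hD hD
  rw [preimage_comp, (measurePreserving_translate_infinitePi (P := P) d).measure_preimage
    (measurable_window n hD).nullMeasurableSet] at hmul
  rw [measureReal_def, hmul, ENNReal.toReal_mul, sq, measureReal_def]

lemma ergodic_shift_iterate_infinitePi {p : ℕ} (hp : p ≠ 0) :
    Ergodic shift^[p] (Measure.infinitePi fun _ : ℤ => P) := by
  set μ := Measure.infinitePi fun _ : ℤ => P
  have hμ (c : ℤ) : MeasurePreserving (translate c) μ μ := measurePreserving_translate_infinitePi c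
  refine ⟨shift_iterate (A := A) p ▸ hμ p, ⟨fun E hE hinv => ?_⟩⟩
  have hzero : |μ.real E - μ.real E ^ 2| ≤ 0 := by
    refine le_of_forall_pos_le_add fun ε hε => ?_
    obtain ⟨c, n, D, hD, hED⟩ := exists_window_approx (μ := μ) hE (ε := ε / 4) (by positivity)
    set W : Set (ℤ → A) := window n ⁻¹' D with hW
    have hWm : MeasurableSet W := measurable_window n hD
    have hinv' : translate (p * n : ℕ) ⁻¹' E = E := by
      rw [← shift_iterate, Function.iterate_mul]
      exact Function.IsFixedPt.preimage_iterate hinv n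
    have hcomm : translate c ⁻¹' W ∩ translate (p * n : ℕ) ⁻¹' (translate c ⁻¹' W) =
        translate c ⁻¹' (W ∩ translate (p * n : ℕ) ⁻¹' W) := by
      ext x
      simp only [mem_inter_iff, mem_preimage, translate_translate, add_comm]
    have hind : μ.real (translate c ⁻¹' W ∩ translate (p * n : ℕ) ⁻¹' (translate c ⁻¹' W)) =
        μ.real (translate c ⁻¹' W) ^ 2 := by
      rw [hcomm, (hμ c).measureReal_preimage
        (hWm.inter (measurable_translate _ hWm)).nullMeasurableSet,
        (hμ c).measureReal_preimage hWm.nullMeasurableSet, hW]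
      exact measureReal_window_inter_preimage_translate hD
        (Nat.le_mul_of_pos_left n (Nat.pos_of_ne_zero hp))
    linarith [abs_measureReal_sub_sq_le (hμ (p * n : ℕ)) hE (measurable_translate c hWm) hinv' hind]
  have hfactor : μ.real E * (1 - μ.real E) = 0 := by
    linarith [abs_nonpos_iff.1 hzero]
  rw [eventuallyConst_set', ae_eq_empty, ae_eq_univ, ← measureReal_eq_zero_iff,
    ← measureReal_eq_zero_iff, probReal_compl_eq_one_sub hE]
  exact mul_eq_zero.1 hfactor

end Independent

/-! ### Averages over a cycle -/

section CyclicAverage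

variable {Ω : Type*} [MeasurableSpace Ω] {T : Ω → Ω} {p : ℕ} {ρ : Measure Ω}

/-- The average of the first `p` images of `ρ` under `T`, which turns a `T^[p]`-invariant measure
into a `T`-invariant one. -/
noncomputable def cyclicAverage (T : Ω → Ω) (p : ℕ) (ρ : Measure Ω) : Measure Ω :=
  (p : ENNReal)⁻¹ • ∑ j ∈ Finset.range p, ρ.map T^[j]

lemma cyclicAverage_apply (hT : Measurable T) {E : Set Ω} (hE : MeasurableSet E) :
    cyclicAverage T p ρ E = (p : ENNReal)⁻¹ * ∑ j ∈ Finset.range p, ρ (T^[j] ⁻¹' E) := by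
  rw [cyclicAverage, Measure.smul_apply, Measure.finsetSum_apply, smul_eq_mul]
  simp_rw [Measure.map_apply (hT.iterate _) hE]

lemma cyclicAverage_of_preimage_eq (hT : Measurable T) (hp : p ≠ 0) {E : Set Ω}
    (hE : MeasurableSet E) (hinv : T ⁻¹' E = E) : cyclicAverage T p ρ E = ρ E := by
  have hiter (j : ℕ) : T^[j] ⁻¹' E = E := Function.IsFixedPt.preimage_iterate hinv j
  rw [cyclicAverage_apply hT hE]
  simp_rw [hiter]
  rw [Finset.sum_const, Finset.card_range, nsmul_eq_mul, ← mul_assoc,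
    ENNReal.inv_mul_cancel (by exact_mod_cast hp) (ENNReal.natCast_ne_top p), one_mul]

lemma isProbabilityMeasure_cyclicAverage [IsProbabilityMeasure ρ] (hT : Measurable T)
    (hp : p ≠ 0) : IsProbabilityMeasure (cyclicAverage T p ρ) :=
  ⟨by rw [cyclicAverage_of_preimage_eq hT hp .univ preimage_univ, measure_univ]⟩

lemma ergodic_cyclicAverage [IsFiniteMeasure ρ] (hT : Measurable T) (hp : p ≠ 0)
    (hρ : Ergodic T^[p] ρ) : Ergodic T (cyclicAverage T p ρ) := by
  refine ⟨⟨hT, Measure.ext fun E hE => ?_⟩, ⟨fun E hE hinv => ?_⟩⟩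
  · rw [Measure.map_apply hT hE, cyclicAverage_apply hT (hT hE), cyclicAverage_apply hT hE]
    congr 1
    have hcycle := (Finset.sum_range_succ' (fun j => ρ (T^[j] ⁻¹' E)) p).symm.trans
      (Finset.sum_range_succ _ p)
    rw [hρ.toMeasurePreserving.measure_preimage hE.nullMeasurableSet] at hcycle
    simp_rw [← preimage_comp, ← Function.iterate_succ']
    exact (ENNReal.add_left_inj (measure_ne_top ρ E)).1 hcycle
  · rw [eventuallyConst_set', ae_eq_empty, ae_eq_univ, cyclicAverage_of_preimage_eq hT hp hE hinv,
      cyclicAverage_of_preimage_eq hT hp hE.compl (by rw [preimage_compl, hinv])]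
    exact hρ.measure_self_or_compl_eq_zero hE (Function.IsFixedPt.preimage_iterate hinv p)

end CyclicAverage

/-! ### Random letters over a periodic orbit -/

section OrbitProduct

open ProbabilityTheory

/-- The sequences over `A × B` whose second coordinate lies in the orbit of `y`. -/
def overOrbit (y : ℤ → B) : Set (ℤ → A × B) :=
  {x | ∃ c, Prod.snd ∘ x = translate c y}

/-- The sequence of pairs with first coordinate `x` and second coordinate `y`. -/
def pairWith (y : ℤ → B) (x : ℤ → A) : ℤ → A × B := fun n => (x n, y n)

lemma preimage_shift_overOrbit (y : ℤ → B) :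
    shift ⁻¹' overOrbit (A := A) y = overOrbit y := by
  ext x
  constructor
  · rintro ⟨c, hc⟩
    refine ⟨-1 + c, ?_⟩
    rw [← translate_translate, ← hc]
    funext n
    simp [shift]
  · rintro ⟨c, hc⟩
    refine ⟨1 + c, ?_⟩
    rw [← translate_translate, ← hc]
    rfl

lemma preimage_pairWith_overOrbit (y : ℤ → B) : pairWith (A := A) y ⁻¹' overOrbit y = univ :=
  eq_univ_of_forall fun _ => ⟨0, (translate_zero y).symm⟩

lemma shift_iterate_pairWith (y : ℤ → B) (j : ℕ) (x : ℤ → A) :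
    shift^[j] (pairWith y x) = pairWith (translate j y) (translate j x) := by
  rw [shift_iterate]
  rfl

variable [MeasurableSpace A] [MeasurableSpace B]

lemma measurable_shift : Measurable (shift (A := A)) := measurable_translate 1

lemma measurable_pairWith (y : ℤ → B) : Measurable (pairWith (A := A) y) :=
  measurable_pi_lambda _ fun n => (measurable_pi_apply n).prodMk measurable_const

lemma measurableSet_overOrbit [MeasurableSingletonClass B] (y : ℤ → B) :
    MeasurableSet (overOrbit (A := A) y) := by
  have hunion : overOrbit (A := A) y = ⋃ c, (fun x => Prod.snd ∘ x) ⁻¹' {translate c y} := by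
    ext x
    simp [overOrbit]
  rw [hunion]
  refine .iUnion fun c => measurableSet_preimage ?_ (measurableSet_singleton _)
  exact measurable_pi_lambda _ fun n => measurable_snd.comp (measurable_pi_apply n)

/-- The product of the i.i.d. measure with marginal `P` and the invariant measure on the orbit
of `y`, where `p` is a period of `y`. -/
noncomputable def orbitProduct (P : Measure A) [IsProbabilityMeasure P] (p : ℕ) (y : ℤ → B) :
    Measure (ℤ → A × B) :=
  cyclicAverage shift p ((Measure.infinitePi fun _ : ℤ => P).map (pairWith y))

variable {P : Measure A} [IsProbabilityMeasure P] {p : ℕ} {y : ℤ → B}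

lemma isProbabilityMeasure_map_pairWith :
    IsProbabilityMeasure ((Measure.infinitePi fun _ : ℤ => P).map (pairWith y)) :=
  Measure.isProbabilityMeasure_map (measurable_pairWith y).aemeasurable

lemma isProbabilityMeasure_orbitProduct (hp : p ≠ 0) :
    IsProbabilityMeasure (orbitProduct P p y) :=
  have := isProbabilityMeasure_map_pairWith (P := P) (y := y)
  isProbabilityMeasure_cyclicAverage measurable_shift hp

lemma ergodic_orbitProduct (hp : p ≠ 0) (hy : Function.Periodic y p) :
    Ergodic shift (orbitProduct P p y) := by
  have := isProbabilityMeasure_map_pairWith (P := P) (y := y)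
  refine ergodic_cyclicAverage measurable_shift hp ?_
  refine ((measurable_pairWith y).measurePreserving _).ergodic_of_ergodic_semiconj
    (ergodic_shift_iterate_infinitePi hp) (measurable_shift.iterate p) fun x => ?_
  rw [shift_iterate_pairWith, show translate p y = y from funext hy, shift_iterate]

lemma orbitProduct_compl_overOrbit [MeasurableSingletonClass B] (hp : p ≠ 0) :
    orbitProduct P p y (overOrbit y)ᶜ = 0 := by
  have hm := (measurableSet_overOrbit (A := A) y).compl
  rw [orbitProduct, cyclicAverage_of_preimage_eq measurable_shift hp hm
    (by rw [preimage_compl, preimage_shift_overOrbit]), Measure.map_apply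
    (measurable_pairWith y) hm, preimage_compl, preimage_pairWith_overOrbit, compl_univ,
    measure_empty]

variable [MeasurableSingletonClass A] [MeasurableSingletonClass B] {n : ℕ}

lemma measureReal_orbitProduct_cylSet [DecidableEq B] (w : Fin n → A × B) :
    (orbitProduct P p y).real (cylSet n w) =
      (p : ℝ)⁻¹ * ∑ j ∈ Finset.range p,
        if window n (translate j y) = Prod.snd ∘ w then ∏ i, P.real {(w i).1} else 0 := by
  have hm := measurableSet_cylSet n w
  rw [measureReal_def, orbitProduct, cyclicAverage_apply measurable_shift hm, ENNReal.toReal_mul,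
    ENNReal.toReal_inv, ENNReal.toReal_natCast, ENNReal.toReal_sum fun j _ => ?_]
  · congr 1
    refine Finset.sum_congr rfl fun j _ => ?_
    have hpre : pairWith y ⁻¹' (shift^[j] ⁻¹' cylSet n w) =
        if window n (translate j y) = Prod.snd ∘ w then
          translate j ⁻¹' cylSet n (Prod.fst ∘ w) else ∅ := by
      ext x
      rw [mem_preimage, mem_preimage, shift_iterate_pairWith]
      split_ifs with h <;>
        simp_all [cylSet, pairWith, Prod.ext_iff, funext_iff, forall_and]
    rw [Measure.map_apply (measurable_pairWith y) (measurable_shift.iterate j hm), hpre]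
    split_ifs
    · rw [(measurePreserving_translate_infinitePi _).measure_preimage
        (measurableSet_cylSet _ _).nullMeasurableSet, infinitePi_cylSet, ENNReal.toReal_prod]
      rfl
    · simp
  · have := isProbabilityMeasure_map_pairWith (P := P) (y := y)
    exact measure_ne_top _ _

variable [Fintype A] [Nonempty A]

lemma prod_measureReal_uniformOn_univ (v : Fin n → A) :
    ∏ i, (uniformOn univ).real {v i} =
      Real.exp (-(n * Real.log (Fintype.card A))) := by
  have hcard : (0 : ℝ) < Fintype.card A := by exact_mod_cast Fintype.card_pos
  have hletter (a : A) : (uniformOn univ).real {a} = (Fintype.card A : ℝ)⁻¹ := by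
    rw [measureReal_def, uniformOn_univ, Measure.count_singleton]
    simp
  simp_rw [hletter]
  rw [Finset.prod_const, Finset.card_univ, Fintype.card_fin, ← mul_neg, ← Real.log_inv,
    Real.exp_nat_mul, Real.exp_log (inv_pos.2 hcard)]

lemma measureReal_orbitProduct_cylSet_le (hp : p ≠ 0) (w : Fin n → A × B) :
    (orbitProduct (uniformOn (univ : Set A)) p y).real (cylSet n w) ≤
      Real.exp (-(n * Real.log (Fintype.card A))) := by
  classical
  have hp' : (0 : ℝ) < p := by exact_mod_cast Nat.pos_of_ne_zero hp
  rw [measureReal_orbitProduct_cylSet, inv_mul_le_iff₀ hp', prod_measureReal_uniformOn_univ]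
  refine (Finset.sum_le_card_nsmul _ _ _ fun j _ => ?_).trans_eq
    (by rw [Finset.card_range, nsmul_eq_mul])
  split_ifs
  exacts [le_rfl, (Real.exp_pos _).le]

lemma gibbsLowerBound_orbitProduct (hp : p ≠ 0) (hy : Function.Periodic y p)
    {μ : Measure (ℤ → A × B)} (hμ : μ (overOrbit y)ᶜ = 0) :
    GibbsLowerBound μ (orbitProduct (uniformOn (univ : Set A)) p y) (p : ℝ)⁻¹
      (Real.log (Fintype.card A)) := by
  classical
  intro n w hw
  have hmeet : (cylSet n w ∩ overOrbit y).Nonempty := by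
    by_contra hempty
    have hsub : cylSet n w ⊆ (overOrbit y)ᶜ := fun x hx hxy => hempty ⟨x, hx, hxy⟩
    rw [measureReal_def, measure_mono_null hsub hμ, ENNReal.toReal_zero] at hw
    exact hw.false
  obtain ⟨x, hxw, c, hc⟩ := hmeet
  have hp' : (0 : ℤ) < p := by exact_mod_cast Nat.pos_of_ne_zero hp
  have hword : window n (translate (c % p).toNat y) = Prod.snd ∘ w := by
    funext i
    rw [window_apply, translate_apply, Int.toNat_of_nonneg (Int.emod_nonneg c hp'.ne'),
      ← hy.int_mul (c / p), add_assoc, Int.cast_id, mul_comm (c / p), Int.emod_add_mul_ediv,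
      Function.comp_apply, ← hxw i]
    exact (congrFun hc i).symm
  rw [measureReal_orbitProduct_cylSet, prod_measureReal_uniformOn_univ]
  refine mul_le_mul_of_nonneg_left ?_ (by positivity)
  refine (if_pos hword).ge.trans (Finset.single_le_sum
    (f := fun j : ℕ => if window n (translate j y) = Prod.snd ∘ w then _ else (0 : ℝ))
    (fun j _ => ?_) (Finset.mem_range.2 ?_))
  · split_ifs
    exacts [(Real.exp_pos _).le, le_rfl]
  · have := Int.emod_lt_of_pos c hp'
    omega

lemma KSEntropy_orbitProduct [Fintype B] (hp : p ≠ 0) (hy : Function.Periodic y p) :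
    KSEntropy (orbitProduct (uniformOn (univ : Set A)) p y) =
      Real.log (Fintype.card A) := by
  have := isProbabilityMeasure_orbitProduct (P := uniformOn (univ : Set A)) (y := y) hp
  refine le_antisymm ?_ (le_KSEntropy fun n w => measureReal_orbitProduct_cylSet_le hp w)
  refine (gibbsLowerBound_orbitProduct hp hy (orbitProduct_compl_overOrbit hp)).KSEntropy_le ?_
  exact inv_pos.2 (by exact_mod_cast Nat.pos_of_ne_zero hp)

end OrbitProduct

/-! ### Maximum measures of the marker subshift -/

section MaximumMeasures

open ProbabilityTheory

variable {α : Type*}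

lemma overOrbit_periodicMarking_subset_markerShift (p : ℕ) :
    overOrbit (periodicMarking p) ⊆ markerShift α := by
  rintro x ⟨c, hc⟩
  rw [markerShift, mem_ofPred_eq, hc]
  exact (isMarking_periodicMarking p).translate c

lemma markerShift_subset_iUnion_union_iUnion :
    markerShift α ⊆ (⋃ k, {x | IsFirstMarker (Prod.snd ∘ x) k}) ∪
      ⋃ p, overOrbit (periodicMarking p) := fun _ hx =>
  hx.exists_isFirstMarker_or_eq_translate.imp mem_iUnion.2 mem_iUnion.2

variable [MeasurableSpace α]

lemma measurableSet_setOf_isFirstMarker (k : ℤ) :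
    MeasurableSet {x : ℤ → α × Bool | IsFirstMarker (Prod.snd ∘ x) k} := by
  have hletter (n : ℤ) (b : Bool) : MeasurableSet {x : ℤ → α × Bool | (x n).2 = b} :=
    measurable_snd.comp (measurable_pi_apply n) (measurableSet_singleton b)
  have hinter : {x : ℤ → α × Bool | IsFirstMarker (Prod.snd ∘ x) k} =
      {x | (x k).2 = true} ∩ ⋂ n : Iio k, {x | (x n).2 = false} := by
    ext x
    simp [IsFirstMarker]
  rw [hinter]
  exact (hletter k true).inter (.iInter fun n => hletter n false)

lemma measure_setOf_isFirstMarker {μ : Measure (ℤ → α × Bool)} [IsFiniteMeasure μ]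
    (hμ : MeasurePreserving shift μ μ) (k : ℤ) :
    μ {x | IsFirstMarker (Prod.snd ∘ x) k} = 0 := by
  by_contra hpos
  obtain ⟨x, hx, m, hm, hxm⟩ := hμ.exists_mem_iterate_mem
    (measurableSet_setOf_isFirstMarker k).nullMeasurableSet hpos
  rw [shift_iterate] at hxm
  have hunmarked := hxm.2 (k - m) (by omega)
  rw [Function.comp_apply, translate_apply, sub_add_cancel] at hunmarked
  exact absurd (hx.1.symm.trans hunmarked) (by decide)

lemma exists_measure_compl_overOrbit_eq_zero {μ : Measure (ℤ → α × Bool)}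
    [IsProbabilityMeasure μ] (hμ : Ergodic shift μ) (hsupp : μ (markerShift α)ᶜ = 0) :
    ∃ p, μ (overOrbit (periodicMarking p))ᶜ = 0 := by
  by_contra! hcompl
  have hnull (p : ℕ) : μ (overOrbit (periodicMarking p)) = 0 :=
    (hμ.measure_self_or_compl_eq_zero (measurableSet_overOrbit _)
      (preimage_shift_overOrbit _)).resolve_right (hcompl p)
  have hshift : μ (markerShift α) = 0 :=
    measure_mono_null markerShift_subset_iUnion_union_iUnion <| measure_union_null
      (measure_iUnion_null (measure_setOf_isFirstMarker hμ.toMeasurePreserving))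
      (measure_iUnion_null hnull)
  refine IsProbabilityMeasure.ne_zero μ (Measure.measure_univ_eq_zero.1 ?_)
  rw [← union_compl_self (markerShift α)]
  exact measure_union_null hshift hsupp

variable [Fintype α] [Nonempty α]

variable (α) in
/-- The measure on the marker subshift with i.i.d. uniform letters in the `α`-row and with
marker row on the orbit of `periodicMarking p`. The period `max p 1` covers `p = 0`, where
that orbit is the fixed point without markers. -/
noncomputable def markerMeasure (p : ℕ) : Measure (ℤ → α × Bool) :=
  orbitProduct (uniformOn univ) (max p 1) (periodicMarking p)

lemma max_one_ne_zero (p : ℕ) : max p 1 ≠ 0 := by omega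

instance isProbabilityMeasure_markerMeasure (p : ℕ) : IsProbabilityMeasure (markerMeasure α p) :=
  isProbabilityMeasure_orbitProduct (max_one_ne_zero p)

lemma ergodic_markerMeasure (p : ℕ) : Ergodic shift (markerMeasure α p) :=
  ergodic_orbitProduct (max_one_ne_zero p) (periodic_periodicMarking p)

lemma markerMeasure_compl_overOrbit (p : ℕ) :
    markerMeasure α p (overOrbit (periodicMarking p))ᶜ = 0 :=
  orbitProduct_compl_overOrbit (max_one_ne_zero p)

lemma injective_markerMeasure : Function.Injective (markerMeasure α) := by
  intro p q hpq
  have hmeet :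
      (overOrbit (A := α) (periodicMarking p) ∩ overOrbit (periodicMarking q)).Nonempty := by
    by_contra hempty
    refine IsProbabilityMeasure.ne_zero (markerMeasure α p) (Measure.measure_univ_eq_zero.1 ?_)
    rw [← compl_empty, ← not_nonempty_iff_eq_empty.1 hempty, compl_inter]
    exact measure_union_null (markerMeasure_compl_overOrbit p)
      (hpq ▸ markerMeasure_compl_overOrbit q)
  obtain ⟨x, ⟨c, hc⟩, d, hd⟩ := hmeet
  exact eq_of_translate_periodicMarking_eq (hc.symm.trans hd)

variable [MeasurableSingletonClass α]

lemma isMaxMeasure_markerMeasure (p : ℕ) : IsMaxMeasure (markerShift α) (markerMeasure α p) := by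
  refine ⟨inferInstance, ?_, ergodic_markerMeasure p, ?_⟩
  · exact measure_mono_null (compl_subset_compl.2 (overOrbit_periodicMarking_subset_markerShift p))
      (markerMeasure_compl_overOrbit p)
  · rw [hTop_markerShift]
    exact KSEntropy_orbitProduct (max_one_ne_zero p) (periodic_periodicMarking p)

lemma eq_markerMeasure {μ : Measure (ℤ → α × Bool)} [IsProbabilityMeasure μ] {p : ℕ}
    (hμ : MeasurePreserving shift μ μ) (hsupp : μ (overOrbit (periodicMarking p))ᶜ = 0)
    (hent : Real.log (Fintype.card α) ≤ KSEntropy μ) : μ = markerMeasure α p := by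
  have hgibbs : GibbsLowerBound μ (markerMeasure α p) _ _ :=
    gibbsLowerBound_orbitProduct (max_one_ne_zero p) (periodic_periodicMarking p) hsupp
  refine hgibbs.eq (inv_pos.2 ?_) hμ (ergodic_markerMeasure p) hent
  exact_mod_cast Nat.pos_of_ne_zero (max_one_ne_zero p)

variable (α) in
lemma setOf_isMaxMeasure_markerShift :
    {μ | IsMaxMeasure (markerShift α) μ} = range (markerMeasure α) := by
  refine Subset.antisymm ?_ (range_subset_iff.2 isMaxMeasure_markerMeasure)
  rintro μ ⟨hprob, hsupp, herg, hent⟩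
  obtain ⟨p, hp⟩ := exists_measure_compl_overOrbit_eq_zero herg hsupp
  rw [hTop_markerShift] at hent
  exact ⟨p, (eq_markerMeasure herg.toMeasurePreserving hp hent.ge).symm⟩

end MaximumMeasures

/-- There exists a weak-QFT subshift with countably
infinitely many maximum measures. -/
theorem weakQFT_with_infinitely_many_max_measures :
    ∃ (A : Type) (fA : Fintype A) (X : Set (ℤ → A)),
      (letI : TopologicalSpace A := ⊥
       IsWeakQFT X) ∧
      (letI : Fintype A := fA
       letI : MeasurableSpace A := ⊤
       {μ : Measure (ℤ → A) | IsMaxMeasure X μ}.Countable ∧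
       {μ : Measure (ℤ → A) | IsMaxMeasure X μ}.Infinite) := by
  refine ⟨Bool × Bool, inferInstance, markerShift Bool, ?_, ?_⟩
  · rw [← DiscreteTopology.eq_bot]
    exact isWeakQFT_markerShift Bool
  · have htop : (⊤ : MeasurableSpace (Bool × Bool)) = Prod.instMeasurableSpace :=
      (eq_top_iff.2 fun _ _ => .of_discrete).symm
    rw [htop, setOf_isMaxMeasure_markerShift]
    exact ⟨countable_range _, infinite_range_of_injective injective_markerMeasure⟩

end QFTPaper
end
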